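/- arXiv:1908.08491 — 2 statements merged into one kernel-verified Lean document; each statement's English description precedes it below -/
import Mathlib

section
/- For every l ≥ 1, the polynomial P_l(u,v) ∈ ℂ[u,v] defined by det(H_l + λ·Id) = P_l(λ, μ²), where H_l is the l×l tridiagonal matrix with diagonal entries (1-j)(l-j+1), superdiagonal entries μj, subdiagonal entries μ(l-j+1), is irreducible in ℂ[u,v]. -/
open MvPolynomial Matrix

namespace HeunIrr

/-- residue lemma -/
theorem residue (R0 R1 : Polynomial ℂ) (ε : ℂ → ℂ) (h0 : R0 ≠ 0)
    (hdeg : R1.natDegree + 1 < R0.natDegree ∨ R1 = 0)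
    (hloc : ∀ c, R0.eval c = 0 →
      (R0.derivative.eval c ≠ 0 ∧ R1.eval c = - ε c * R0.derivative.eval c) ∨
      (R0.derivative.eval c = 0 ∧ R0.derivative.derivative.eval c ≠ 0 ∧ R1.eval c = 0 ∧
        R1.derivative.eval c = - ε c * R0.derivative.derivative.eval c)) :
    ∑ c ∈ R0.roots.toFinset, (R0.rootMultiplicity c : ℂ) * ε c = 0 := by
  classical
  by_cases hdeg0 : R0.natDegree = 0
  · have : R0.roots = 0 := by
      apply Multiset.card_eq_zero.1
      have := R0.card_roots'
      omega
    simp [this]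
  set K : ℂ → Polynomial ℂ := fun c => R0 /ₘ (Polynomial.X - Polynomial.C c) with hK
  have hKmul : ∀ c, R0.eval c = 0 → (Polynomial.X - Polynomial.C c) * K c = R0 := fun c hc =>
    Polynomial.mul_divByMonic_eq_iff_isRoot.2 hc
  set F : Polynomial ℂ := R1 + ∑ c ∈ R0.roots.toFinset,
    Polynomial.C ((R0.rootMultiplicity c : ℂ) * ε c) * K c with hF
  have hKdeg : ∀ c, R0.eval c = 0 → (K c).natDegree + 1 = R0.natDegree := by
    intro c hc
    have hk : K c ≠ 0 := by
      intro h; apply h0; rw [← hKmul c hc, h, mul_zero]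
    have := congrArg Polynomial.natDegree (hKmul c hc)
    rw [Polynomial.natDegree_mul (Polynomial.X_sub_C_ne_zero c) hk, Polynomial.natDegree_X_sub_C] at this
    omega
  have hKc : ∀ c, R0.eval c = 0 → (K c).coeff (R0.natDegree - 1) = R0.leadingCoeff := by
    intro c hc
    have h1 := congrArg Polynomial.leadingCoeff (hKmul c hc)
    rw [Polynomial.leadingCoeff_mul, Polynomial.leadingCoeff_X_sub_C, one_mul] at h1
    rw [← h1, Polynomial.leadingCoeff]
    have := hKdeg c hc
    congr 1; omega
  have hmem : ∀ c, c ∈ R0.roots.toFinset ↔ R0.eval c = 0 := by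
    intro c; simp [h0]
  have hD1 : ∀ c, R0.eval c = 0 → ∀ d, R0.derivative.eval d = (K c).eval d + (d - c) * (K c).derivative.eval d := by
    intro c hc d
    conv_lhs => rw [← hKmul c hc]
    simp [Polynomial.derivative_mul]
  have hD2 : ∀ c, R0.eval c = 0 → ∀ d, R0.derivative.derivative.eval d
      = 2 * (K c).derivative.eval d + (d - c) * (K c).derivative.derivative.eval d := by
    intro c hc d
    conv_lhs => rw [← hKmul c hc]
    simp [Polynomial.derivative_mul]
    ring
  have hD0 : ∀ c, R0.eval c = 0 → ∀ d, R0.eval d = (d - c) * (K c).eval d := by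
    intro c hc d
    conv_lhs => rw [← hKmul c hc]
    simp
  have hFe : ∀ d, R0.eval d = 0 → F.eval d = R1.eval d + (R0.rootMultiplicity d : ℂ) * ε d * R0.derivative.eval d := by
    intro d hd
    rw [hF, Polynomial.eval_add, Polynomial.eval_finsetSum]
    rw [Finset.sum_eq_single_of_mem d ((hmem d).2 hd)]
    · rw [hD1 d hd d]; simp
    · intro c hc hcd
      have hc' := (hmem c).1 hc
      have := hD0 c hc' d
      rw [hd] at this
      have h2 : (K c).eval d = 0 := by
        rcases mul_eq_zero.1 this.symm with h | h
        · exact absurd (sub_eq_zero.1 h).symm hcd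
        · exact h
      simp [h2]
  have hFd : ∀ d, R0.eval d = 0 → R0.derivative.eval d = 0 → F.derivative.eval d =
      R1.derivative.eval d + (R0.rootMultiplicity d : ℂ) * ε d * (R0.derivative.derivative.eval d / 2) := by
    intro d hd hd'
    rw [hF, Polynomial.derivative_add, Polynomial.derivative_sum, Polynomial.eval_add, Polynomial.eval_finsetSum]
    rw [Finset.sum_eq_single_of_mem d ((hmem d).2 hd)]
    · rw [hD2 d hd d]; simp
    · intro c hc hcd
      have hc' := (hmem c).1 hc
      have h3 := hD0 c hc' d
      rw [hd] at h3
      have hne : d - c ≠ 0 := fun h => hcd (sub_eq_zero.1 h).symm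
      have h2 : (K c).eval d = 0 := by
        rcases mul_eq_zero.1 h3.symm with h | h
        · exact absurd h hne
        · exact h
      have h4 := hD1 c hc' d
      rw [hd', h2, zero_add] at h4
      have h5 : (K c).derivative.eval d = 0 := by
        rcases mul_eq_zero.1 h4.symm with h | h
        · exact absurd h hne
        · exact h
      simp [h5]
  have hFcoeff : F.coeff (R0.natDegree - 1) = R0.leadingCoeff * ∑ c ∈ R0.roots.toFinset, (R0.rootMultiplicity c : ℂ) * ε c := by
    have hR1 : R1.coeff (R0.natDegree - 1) = 0 := by
      rcases hdeg with h | h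
      · exact Polynomial.coeff_eq_zero_of_natDegree_lt (by omega)
      · simp [h]
    rw [hF, Polynomial.coeff_add, Polynomial.finsetSum_coeff, hR1, zero_add, Finset.mul_sum]
    apply Finset.sum_congr rfl
    intro c hc
    rw [Polynomial.coeff_C_mul, hKc c ((hmem c).1 hc)]; ring
  have hF0 : F = 0 := by
    by_contra hne
    have hle : R0.roots ≤ F.roots := by
      rw [Multiset.le_iff_count]
      intro c
      rw [Polynomial.count_roots, Polynomial.count_roots]
      by_cases hc : R0.eval c = 0
      · rcases hloc c hc with ⟨h1, h2⟩ | ⟨h1, h2, h3, h4⟩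
        · have hm1 : ¬ (1 < R0.rootMultiplicity c) := by
            rw [Polynomial.one_lt_rootMultiplicity_iff_isRoot h0]
            exact fun h => h1 h.2
          have hm2 : 0 < R0.rootMultiplicity c := (Polynomial.rootMultiplicity_pos h0).2 hc
          have hm : R0.rootMultiplicity c = 1 := by omega
          have : F.eval c = 0 := by rw [hFe c hc, hm, h2]; push_cast; ring
          rw [hm]
          exact (Polynomial.rootMultiplicity_pos hne).2 this
        · have hm1 : 1 < R0.rootMultiplicity c := by
            rw [Polynomial.one_lt_rootMultiplicity_iff_isRoot h0]
            exact ⟨hc, h1⟩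
          have hm2 : ¬ 2 < R0.rootMultiplicity c := by
            intro hlt
            rw [Polynomial.lt_rootMultiplicity_iff_isRoot_iterate_derivative h0] at hlt
            exact h2 (hlt 2 le_rfl)
          have hm : R0.rootMultiplicity c = 2 := by omega
          have e1 : F.eval c = 0 := by rw [hFe c hc, h1, h3]; ring
          have e2 : F.derivative.eval c = 0 := by rw [hFd c hc h1, hm, h4]; push_cast; ring
          rw [hm]
          exact (Polynomial.one_lt_rootMultiplicity_iff_isRoot hne).2 ⟨e1, e2⟩
      · have : R0.rootMultiplicity c = 0 := Polynomial.rootMultiplicity_eq_zero hc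
        omega
    have hcard := Multiset.card_le_card hle
    have h1 : R0.roots.card = R0.natDegree := (IsAlgClosed.splits R0).natDegree_eq_card_roots.symm
    have h2 := F.card_roots'
    have h3 : F.natDegree ≤ R0.natDegree - 1 := by
      rw [hF]
      apply Polynomial.natDegree_add_le_of_degree_le
      · rcases hdeg with h | h
        · omega
        · simp [h]
      · apply Polynomial.natDegree_sum_le_of_forall_le
        intro c hc
        have := hKdeg c ((hmem c).1 hc)
        exact (Polynomial.natDegree_C_mul_le _ _).trans (by omega)
    omega
  rw [hF0, Polynomial.coeff_zero] at hFcoeff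
  rcases mul_eq_zero.1 hFcoeff.symm with h | h
  · exact absurd (Polynomial.leadingCoeff_eq_zero.1 h) h0
  · exact h

/-- weighted degree hom -/
noncomputable def wt : Polynomial (Polynomial ℂ) →+* Polynomial (Polynomial ℂ) :=
  Polynomial.eval₂RingHom (Polynomial.mapRingHom Polynomial.C)
    (Polynomial.C Polynomial.X * Polynomial.X ^ 2)

theorem wt_coeff (F : Polynomial (Polynomial ℂ)) (m j : ℕ) :
    ((wt F).coeff m).coeff j = if 2 * j ≤ m then (F.coeff j).coeff (m - 2 * j) else 0 := by
  induction F using Polynomial.induction_on' with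
  | add p q hp hq =>
    rw [map_add, Polynomial.coeff_add, Polynomial.coeff_add, hp, hq]
    split_ifs <;> simp
  | monomial n f =>
    have : wt (Polynomial.monomial n f)
        = Polynomial.C (Polynomial.X ^ n) * (f.map Polynomial.C * Polynomial.X ^ (2 * n)) := by
      simp only [wt, Polynomial.coe_eval₂RingHom, Polynomial.eval₂_monomial, Polynomial.coe_mapRingHom]
      rw [mul_pow, ← pow_mul, ← Polynomial.C_pow]; ring
    rw [this, Polynomial.coeff_C_mul, Polynomial.coeff_mul_X_pow', Polynomial.coeff_monomial]
    by_cases hj : n = j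
    · subst hj
      rw [if_pos rfl]
      split_ifs with h
      · rw [Polynomial.coeff_map, mul_comm, Polynomial.coeff_C_mul]
        simp [Polynomial.coeff_X_pow]
      · simp
    · rw [if_neg hj]
      split_ifs with h h' h'
      · rw [Polynomial.coeff_map, mul_comm, Polynomial.coeff_C_mul]
        simp [Polynomial.coeff_X_pow, Ne.symm hj]
      · rw [Polynomial.coeff_map, mul_comm, Polynomial.coeff_C_mul]
        simp [Polynomial.coeff_X_pow, Ne.symm hj]
      · simp
      · simp

theorem wt_le {F : Polynomial (Polynomial ℂ)} {l : ℕ}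
    (h : ∀ j m, l < m + 2 * j → (F.coeff j).coeff m = 0) : (wt F).natDegree ≤ l := by
  rw [Polynomial.natDegree_le_iff_coeff_eq_zero]
  intro m hm
  ext j
  rw [wt_coeff]
  split_ifs with h1
  · simpa using h j (m - 2 * j) (by omega)
  · simp

theorem le_wt {F : Polynomial (Polynomial ℂ)} {j m : ℕ} (h : (F.coeff j).coeff m ≠ 0) :
    m + 2 * j ≤ (wt F).natDegree := by
  apply Polynomial.le_natDegree_of_ne_zero
  intro h0
  have := wt_coeff F (m + 2 * j) j
  rw [h0, if_pos (by omega)] at this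
  simp at this
  exact h this.symm

theorem factor_deg {Q R P : Polynomial (Polynomial ℂ)} {l : ℕ} (hP : P = Q * R)
    (hl : (P.coeff 0).natDegree = l) (hP0 : P.coeff 0 ≠ 0)
    (h : ∀ j m, l < m + 2 * j → (P.coeff j).coeff m = 0) :
    ∀ j m, (R.coeff 0).natDegree < m + 2 * j → (R.coeff j).coeff m = 0 := by
  have h00 : P.coeff 0 = Q.coeff 0 * R.coeff 0 := by rw [hP, Polynomial.mul_coeff_zero]
  have hQ0 : Q.coeff 0 ≠ 0 := fun h => hP0 (by rw [h00, h, zero_mul])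
  have hR0 : R.coeff 0 ≠ 0 := fun h => hP0 (by rw [h00, h, mul_zero])
  have hw := wt_le h
  have hq : (Q.coeff 0).natDegree ≤ (wt Q).natDegree :=
    le_wt (j := 0) (Polynomial.leadingCoeff_ne_zero.2 hQ0)
  have hr : (R.coeff 0).natDegree ≤ (wt R).natDegree :=
    le_wt (j := 0) (Polynomial.leadingCoeff_ne_zero.2 hR0)
  have hwq : wt Q ≠ 0 := by
    intro h0
    have := wt_coeff Q (Q.coeff 0).natDegree 0
    rw [h0] at this
    simp at this
    exact hQ0 (Polynomial.leadingCoeff_eq_zero.1 this.symm)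
  have hwr : wt R ≠ 0 := by
    intro h0
    have := wt_coeff R (R.coeff 0).natDegree 0
    rw [h0] at this
    simp at this
    exact hR0 (Polynomial.leadingCoeff_eq_zero.1 this.symm)
  rw [hP, map_mul, Polynomial.natDegree_mul hwq hwr] at hw
  rw [h00, Polynomial.natDegree_mul hQ0 hR0] at hl
  intro j m hlt
  by_contra hne
  have := le_wt hne
  omega

/-- tridiagonal determinant -/
theorem tri_det {S : Type*} [CommRing S] (a b c : ℕ → S) (n : ℕ) :
    (Matrix.of fun i j : Fin (n+2) => (if (i : ℕ) = (j : ℕ) then a i else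
      if (i : ℕ) + 1 = (j : ℕ) then b i else if (j : ℕ) + 1 = (i : ℕ) then c i else 0)).det
    = a (n+1) * (Matrix.of fun i j : Fin (n+1) => (if (i : ℕ) = (j : ℕ) then a i else
      if (i : ℕ) + 1 = (j : ℕ) then b i else if (j : ℕ) + 1 = (i : ℕ) then c i else 0)).det
    - b n * c (n+1) * (Matrix.of fun i j : Fin n => (if (i : ℕ) = (j : ℕ) then a i else
      if (i : ℕ) + 1 = (j : ℕ) then b i else if (j : ℕ) + 1 = (i : ℕ) then c i else 0)).det := by
  rw [Matrix.det_succ_row _ (Fin.last (n+1)), Fin.sum_univ_castSucc, Fin.sum_univ_castSucc]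
  rw [Finset.sum_eq_zero]
  · have e1 : ((Matrix.of fun i j : Fin (n+2) => (if (i : ℕ) = (j : ℕ) then a i else
      if (i : ℕ) + 1 = (j : ℕ) then b i else if (j : ℕ) + 1 = (i : ℕ) then c i else 0)).submatrix
        (Fin.last (n+1)).succAbove (Fin.last (n+1)).succAbove) = (Matrix.of fun i j : Fin (n+1) => (if (i : ℕ) = (j : ℕ) then a i else
      if (i : ℕ) + 1 = (j : ℕ) then b i else if (j : ℕ) + 1 = (i : ℕ) then c i else 0)) := by
      ext i j; simp
    have e2 : ((Matrix.of fun i j : Fin (n+2) => (if (i : ℕ) = (j : ℕ) then a i else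
      if (i : ℕ) + 1 = (j : ℕ) then b i else if (j : ℕ) + 1 = (i : ℕ) then c i else 0)).submatrix
        (Fin.last (n+1)).succAbove (Fin.castSucc (Fin.last n)).succAbove).det = b n * (Matrix.of fun i j : Fin n => (if (i : ℕ) = (j : ℕ) then a i else
      if (i : ℕ) + 1 = (j : ℕ) then b i else if (j : ℕ) + 1 = (i : ℕ) then c i else 0)).det := by
      rw [Matrix.det_succ_column _ (Fin.last n), Fin.sum_univ_castSucc, Finset.sum_eq_zero]
      · have e3 : ((Matrix.of fun i j : Fin (n+2) => (if (i : ℕ) = (j : ℕ) then a i else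
      if (i : ℕ) + 1 = (j : ℕ) then b i else if (j : ℕ) + 1 = (i : ℕ) then c i else 0)).submatrix
        (Fin.last (n+1)).succAbove (Fin.castSucc (Fin.last n)).succAbove).submatrix (Fin.last n).succAbove (Fin.last n).succAbove = (Matrix.of fun i j : Fin n => (if (i : ℕ) = (j : ℕ) then a i else
      if (i : ℕ) + 1 = (j : ℕ) then b i else if (j : ℕ) + 1 = (i : ℕ) then c i else 0)) := by
          ext i j
          have : (Fin.castSucc (Fin.last n)).succAbove (Fin.castSucc j) = j.castSucc.castSucc := by
            apply Fin.succAbove_of_castSucc_lt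
            simp [Fin.lt_def]
          simp [this]
        rw [e3]
        have : (Fin.castSucc (Fin.last n)).succAbove (Fin.last n) = Fin.last (n+1) := by
          simp
        simp [← two_mul]
      · intro i _
        have h1 : (i : ℕ) ≠ n + 1 := by omega
        have h2 : (i : ℕ) ≠ n := by omega
        have h3 : n + 1 + 1 ≠ (i : ℕ) := by omega
        simp [h1, h2, h3]
    rw [e1, e2]
    have : (-1 : S) ^ (n + 1 + n) = -1 := by
      rw [show n + 1 + n = 2 * n + 1 by ring, pow_succ, pow_mul]; simp
    have h2 : n + 1 + 1 ≠ n := by omega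
    simp [this, ← two_mul, h2]
    ring
  · intro i _
    have h1 : n + 1 ≠ (i : ℕ) := by omega
    have h2 : n + 1 + 1 ≠ (i : ℕ) := by omega
    have h3 : (i : ℕ) ≠ n := by omega
    simp [h1, h2, h3]

theorem jet_double (i x : ℕ) (hi : 1 ≤ i) (hx : 2 ≤ x) (α c A A' H B B' E : ℕ → ℂ)
    (hα : ∀ m : ℕ, α m = ((m : ℂ) - i) * ((m : ℂ) - (i + x)))
    (hc : ∀ m : ℕ, c m = (m : ℂ) * (2 * i + x - m))
    (h0 : A 0 = 1)
    (hA : ∀ n, A (n+1) = α n * A n)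
    (hA' : ∀ n, A' (n+1) = α n * A' n + A n)
    (hH : ∀ n, H (n+1) = α n * H n + 2 * A' n)
    (hB : ∀ n, B (n+2) = α (n+1) * B (n+1) - c (n+1) * A n)
    (hB' : ∀ n, B' (n+2) = α (n+1) * B' (n+1) + B (n+1) - c (n+1) * A' n)
    (hE : ∀ n, E (n+2) = α (n+1) * E (n+1) - c (n+1) * B n)
    (e κ : ℂ) (he : e = - ((2 * i + x : ℂ) ^ 2 + x ^ 2 - 2) / (2 * ((x : ℂ) ^ 2 - 1)))
    (hκ : κ = if x = 2 then ((i : ℂ) + 1) ^ 2 * (((i : ℂ) + 1) ^ 2 - 1) else 0)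
    (l : ℕ) (hl : l = 2 * i + x) :
    A l = 0 ∧ A' l = 0 ∧ H l ≠ 0 ∧ B l = 0 ∧ B' l = - e * H l ∧ 2 * E l = (e ^ 2 - κ) * H l := by
  obtain ⟨j, rfl⟩ : ∃ j, i = j + 1 := ⟨i - 1, by omega⟩
  obtain ⟨y, rfl⟩ : ∃ y, x = y + 2 := ⟨x - 2, by omega⟩
  have hαne : ∀ m, m ≠ j + 1 → m ≠ j + y + 3 → α m ≠ 0 := by
    intro m h1 h2
    rw [hα]
    apply mul_ne_zero
    · rw [sub_ne_zero]; exact_mod_cast h1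
    · rw [sub_ne_zero]; norm_cast; omega
  have hα1 : α (j+1) = 0 := by rw [hα]; push_cast; ring
  have hα2 : α (j+y+3) = 0 := by rw [hα]; push_cast; ring
  -- phase 1
  have p1 : ∀ n, n ≤ j + 1 → A n ≠ 0 := by
    intro n
    induction n with
    | zero => intro _; rw [h0]; exact one_ne_zero
    | succ n ih =>
      intro h; rw [hA]
      exact mul_ne_zero (hαne n (by omega) (by omega)) (ih (by omega))
  set a := A j with ha
  have ha0 : a ≠ 0 := p1 j (by omega)
  have hAi : A (j+1) = α j * a := hA j
  have hA1 : A (j+2) = 0 := by rw [hA, hα1, zero_mul]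
  have hA'1 : A' (j+2) = α j * a := by rw [hA', hα1, hAi]; ring
  have hB1 : B (j+2) = - c (j+1) * a := by rw [hB, hα1]; ring
  have hAz : ∀ n, A (j+2+n) = 0 := by
    intro n
    induction n with
    | zero => exact hA1
    | succ n ih => rw [← add_assoc, hA, ih, mul_zero]
  have αj : α j = (y : ℂ) + 3 := by rw [hα]; push_cast; ring
  have αj2 : α (j+2) = -((y : ℂ) + 1) := by rw [hα]; push_cast; ring
  have αk1 : α (j+y+2) = -((y : ℂ) + 1) := by rw [hα]; push_cast; ring
  have αk3 : α (j+y+4) = (y : ℂ) + 3 := by rw [hα]; push_cast; ring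
  have hy1 : (y : ℂ) + 1 ≠ 0 := by exact_mod_cast Nat.succ_ne_zero y
  have hy3 : (y : ℂ) + 3 ≠ 0 := by exact_mod_cast Nat.succ_ne_zero (y+2)
  set e1 : ℂ := c (j+1) / (y + 3) - c (j+2) / (y+1) with he1
  set e2 : ℂ := - c (j+1) / (y + 1) + c j / (y+3) with he2
  -- phase 2
  have p2 : ∀ n, n ≤ y → A' (j+3+n) ≠ 0 ∧ B (j+3+n) = - e1 * A' (j+3+n) := by
    intro n
    induction n with
    | zero =>
      intro _
      have h1 : A' (j+3+0) = α (j+2) * (α j * a) := by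
        show A' (j+2+1) = _
        rw [hA', hA'1, hA1]; ring
      have h2 : B (j+3+0) = α (j+2) * (- c (j+1) * a) - c (j+2) * (α j * a) := by
        show B (j+1+2) = _
        rw [hB, hAi]; show α (j+2) * B (j+2) - _ = _
        rw [hB1]
      refine ⟨?_, ?_⟩
      · rw [h1]
        exact mul_ne_zero (hαne _ (by omega) (by omega)) (mul_ne_zero (hαne _ (by omega) (by omega)) ha0)
      · rw [h1, h2, αj, αj2, he1]; field_simp
    | succ n ih =>
      intro h
      obtain ⟨i1, i2⟩ := ih (by omega)
      have h1 : A' (j+3+(n+1)) = α (j+3+n) * A' (j+3+n) := by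
        show A' (j+3+n+1) = _
        rw [hA', show j+3+n = j+2+(n+1) by ring, hAz]; ring
      have h2 : B (j+3+(n+1)) = α (j+3+n) * B (j+3+n) := by
        rw [show j+3+(n+1) = (j+2+n)+2 by ring, hB, hAz, show j+2+n+1=j+3+n by ring]; ring
      refine ⟨?_, ?_⟩
      · rw [h1]; exact mul_ne_zero (hαne _ (by omega) (by omega)) i1
      · rw [h1, h2, i2]; ring
  obtain ⟨q1, q2⟩ := p2 y le_rfl
  set g := A' (j+3+y) with hg
  have hk : j + y + 3 = j + 3 + y := by ring
  rw [hk] at hα2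
  -- index k + 1 = j+y+4
  have A'k : A' (j+4+y) = 0 := by
    rw [show j+4+y = j+3+y+1 by ring, hA', hα2, show j+3+y = j+2+(y+1) by ring, hAz]; ring
  have Hk : H (j+4+y) = 2 * g := by
    rw [show j+4+y = j+3+y+1 by ring, hH, hα2]; ring
  have Bk : B (j+4+y) = 0 := by
    rw [show j+4+y = (j+2+y)+2 by ring, hB, hAz, show j+2+y+1 = j+3+y by ring, hα2]; ring
  have B'k : B' (j+4+y) = - e1 * g - c (j+3+y) * A' (j+2+y) := by
    rw [show j+4+y = (j+2+y)+2 by ring, hB', show j+2+y+1 = j+3+y by ring, hα2, q2]; ring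
  have Ek : E (j+4+y) = - c (j+3+y) * B (j+2+y) := by
    rw [show j+4+y = (j+2+y)+2 by ring, hE, show j+2+y+1 = j+3+y by ring, hα2]; ring
  have A'z : ∀ n, A' (j+4+y+n) = 0 := by
    intro n
    induction n with
    | zero => exact A'k
    | succ n ih => rw [← add_assoc, hA', ih, show j+4+y+n = j+2+(y+n+2) by ring, hAz]; ring
  have Bz : ∀ n, B (j+4+y+n) = 0 := by
    intro n
    induction n with
    | zero => exact Bk
    | succ n ih =>
      rw [show j+4+y+(n+1) = j+3+y+n+2 by ring, hB, show j+3+y+n = j+2+(y+n+1) by ring, hAz,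
        show j+2+(y+n+1)+1 = j+4+y+n by ring, ih]; ring
  have hcj : ∀ m : ℕ, c m = (m : ℂ) * (2 * j + y + 4 - m) := by
    intro m; rw [hc]; push_cast; ring
  have hek : e = -((2 * j + y + 4 : ℂ) ^ 2 + (y+2) ^ 2 - 2) / (2 * ((y+1) * (y+3))) := by
    rw [he]; push_cast; congr 1 <;> ring
  have αk2 : α (j+4+y) = (y : ℂ) + 3 := by rw [← αk3]; congr 1; ring
  -- index k+2
  have Hk2 : H (j+5+y) = (y + 3) * (2 * g) := by
    rw [show j+5+y = j+4+y+1 by ring, hH, A'k, Hk, αk2]; ring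
  have B'k2 : B' (j+5+y) = (y+3) * B' (j+4+y) - c (j+4+y) * g := by
    rw [show j+5+y = j+3+y+2 by ring, hB', show j+3+y+1 = j+4+y by ring, Bk, αk2]; ring
  have Ek2 : E (j+5+y) = (y+3) * E (j+4+y) + c (j+4+y) * e1 * g := by
    rw [show j+5+y = j+3+y+2 by ring, hE, show j+3+y+1 = j+4+y by ring, q2, αk2]; ring
  have main2 : B' (j+5+y) = - e * H (j+5+y) ∧ 2 * E (j+5+y) = (e ^ 2 - κ) * H (j+5+y) := by
    rcases Nat.eq_zero_or_pos y with hy | hy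
    · subst hy
      rw [if_pos (by norm_num)] at hκ
      have g1 : g = -(3 * a) := by
        rw [hg]
        show A' (j+2+1) = _
        rw [hA', hA'1, hA1, αj2, αj]; push_cast; ring
      rw [B'k2, Ek2, B'k, Ek, Hk2]
      simp only [add_zero] at *
      rw [hA'1, hB1, g1, αj, he1, hκ, hek]
      simp only [hcj]
      push_cast
      constructor
      · field_simp; ring
      · field_simp; ring
    · obtain ⟨z, rfl⟩ : ∃ z, y = z + 1 := ⟨y - 1, by omega⟩
      rw [if_neg (by omega)] at hκ
      obtain ⟨r1, r2⟩ := p2 z (by omega)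
      have r3 : j + 2 + (z+1) = j + 3 + z := by ring
      have gk : g = -((z + 1 : ℕ) + 1) * A' (j+3+z) := by
        rw [hg, show j+3+(z+1) = j+3+z+1 by ring, hA', show j+3+z = j+2+(z+1) by ring, hAz, ← αk1]
        rw [show j+2+(z+1) = j+(z+1)+2 by ring]; ring
      rw [B'k2, Ek2, B'k, Ek, Hk2, r3, r2, gk, he1, hκ, hek]
      simp only [hcj]
      push_cast at hy1 hy3 ⊢
      constructor
      · field_simp; ring
      · field_simp; ring
  have gne : g ≠ 0 := q1
  -- phase 3
  have p3 : ∀ n, n ≤ j + 1 → H (j+4+y+n) ≠ 0 := by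
    intro n
    induction n with
    | zero => intro _; rw [add_zero, Hk]; exact mul_ne_zero two_ne_zero gne
    | succ n ih =>
      intro h
      rw [← add_assoc, hH, A'z, mul_zero, add_zero]
      exact mul_ne_zero (hαne _ (by omega) (by omega)) (ih (by omega))
  have p4 : ∀ n, B' (j+5+y+n) = - e * H (j+5+y+n) ∧ 2 * E (j+5+y+n) = (e ^ 2 - κ) * H (j+5+y+n) := by
    intro n
    induction n with
    | zero => exact main2
    | succ n ih =>
      have hH' : H (j+5+y+(n+1)) = α (j+5+y+n) * H (j+5+y+n) := by
        rw [← add_assoc, hH, show j+5+y+n = j+4+y+(n+1) by ring, A'z]; ring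
      have hB'' : B' (j+5+y+(n+1)) = α (j+5+y+n) * B' (j+5+y+n) := by
        rw [show j+5+y+(n+1) = j+4+y+n+2 by ring, hB', A'z, show j+4+y+n+1 = j+4+y+(n+1) by ring, Bz,
          show j+5+y+n = j+4+y+(n+1) by ring]; ring
      have hE' : E (j+5+y+(n+1)) = α (j+5+y+n) * E (j+5+y+n) := by
        rw [show j+5+y+(n+1) = j+4+y+n+2 by ring, hE, Bz,
          show j+5+y+n = j+4+y+n+1 by ring]; ring
      rw [hH', hB'', hE', ih.1]
      refine ⟨by ring, ?_⟩
      linear_combination α (j+5+y+n) * ih.2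
  have hl' : l = j + 4 + y + j := by omega
  have r : l + 1 = j+5+y+j := by omega
  have cl : c l = 0 := by rw [hcj, hl']; push_cast; ring
  have αl : α l ≠ 0 := hαne l (by omega) (by omega)
  have lA : A l = 0 := by rw [hl', show j+4+y+j = j+2+(y+j+2) by ring]; exact hAz _
  have lA' : A' l = 0 := by rw [hl']; exact A'z _
  have lB : B l = 0 := by rw [hl']; exact Bz _
  have lH : H l ≠ 0 := by rw [hl']; exact p3 _ (by omega)
  obtain ⟨m, hm⟩ : ∃ m, l = m + 1 := ⟨l - 1, by omega⟩
  obtain ⟨u1, u2⟩ := p4 j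
  rw [← r] at u1 u2
  have v1 : H (l+1) = α l * H l := by rw [hH, lA']; ring
  have v2 : B' (l+1) = α l * B' l := by
    have := hB' m
    rw [show m + 2 = l + 1 by omega, ← hm, lB, cl] at this
    rw [this]; ring
  have v3 : E (l+1) = α l * E l := by
    have := hE m
    rw [show m + 2 = l + 1 by omega, ← hm, cl] at this
    rw [this]; ring
  rw [v1, v2] at u1
  rw [v1, v3] at u2
  refine ⟨lA, lA', lH, lB, ?_, ?_⟩
  · apply mul_left_cancel₀ αl; rw [u1]; ring
  · apply mul_left_cancel₀ αl; linear_combination u2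


theorem local_double (Q0 Q1 Q2 R0 R1 R2 : Polynomial ℂ) (c e κ : ℂ)
    (hA' : (Q0 * R0).derivative.eval c = 0)
    (hH : (Q0 * R0).derivative.derivative.eval c ≠ 0)
    (hB : (Q0 * R1 + Q1 * R0).eval c = 0)
    (hB' : (Q0 * R1 + Q1 * R0).derivative.eval c = - e * (Q0 * R0).derivative.derivative.eval c)
    (hE : 2 * (Q0 * R2 + Q1 * R1 + Q2 * R0).eval c
      = (e ^ 2 - κ) * (Q0 * R0).derivative.derivative.eval c)
    (hR : R0.eval c = 0) :
    (R0.derivative.eval c ≠ 0 ∧ (- R1.eval c / R0.derivative.eval c - e) ^ 2 = κ) ∨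
      (R0.derivative.eval c = 0 ∧ R0.derivative.derivative.eval c ≠ 0 ∧ R1.eval c = 0 ∧
        R1.derivative.eval c = - e * R0.derivative.derivative.eval c) := by
  simp only [Polynomial.derivative_mul, Polynomial.derivative_add, Polynomial.eval_add,
    Polynomial.eval_mul, hR, mul_zero, zero_add, add_zero] at hA' hH hB hB' hE
  by_cases hr : R0.derivative.eval c = 0
  · right
    simp only [hr, mul_zero, zero_add, add_zero] at hH hB' hE
    have ha : Q0.eval c ≠ 0 := left_ne_zero_of_mul hH
    have hR1 : R1.eval c = 0 := by
      rcases mul_eq_zero.1 hB with h | h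
      · exact absurd h ha
      · exact h
    refine ⟨hr, right_ne_zero_of_mul hH, hR1, ?_⟩
    apply mul_left_cancel₀ ha
    rw [hR1] at hB'
    linear_combination hB'
  · left
    have ha : Q0.eval c = 0 := by
      rcases mul_eq_zero.1 hA' with h | h
      · exact h
      · exact absurd h hr
    simp only [ha, zero_mul, zero_add, add_zero] at hH hB' hE
    have ha1 : Q0.derivative.eval c ≠ 0 := by
      intro h; apply hH; rw [h]; ring
    refine ⟨hr, ?_⟩
    set ρ := R1.eval c / R0.derivative.eval c with hρ
    have h1 : R1.eval c = ρ * R0.derivative.eval c := by rw [hρ]; field_simp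
    have h2 : Q1.eval c = - Q0.derivative.eval c * (2 * e + ρ) := by
      apply mul_right_cancel₀ hr
      rw [h1] at hB'
      linear_combination hB'
    rw [neg_div, ← hρ]
    rw [h1, h2] at hE
    apply mul_left_cancel₀ (mul_ne_zero ha1 hr)
    linear_combination (-1/2) * hE

/-- diagonal constants -/
noncomputable def cst (l : ℕ) (m : ℕ) : ℂ := (m : ℂ) * ((l : ℂ) - m)

/-- continuants -/
noncomputable def D (l : ℕ) : ℕ → Polynomial (Polynomial ℂ)
  | 0 => 1
  | 1 => Polynomial.C (Polynomial.X - Polynomial.C (cst l 0))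
  | (n + 2) => Polynomial.C (Polynomial.X - Polynomial.C (cst l (n+1))) * D l (n+1)
      - Polynomial.C (Polynomial.C (cst l (n+1))) * Polynomial.X * D l n

theorem D_p (l n : ℕ) : (D l (n+1)).coeff 0
    = (Polynomial.X - Polynomial.C (cst l n)) * (D l n).coeff 0 := by
  cases n with
  | zero => simp [D]
  | succ n =>
    rw [D, Polynomial.coeff_sub, Polynomial.coeff_C_mul, mul_assoc, Polynomial.coeff_C_mul,
      Polynomial.coeff_X_mul_zero]; ring

theorem D_succ (l n j : ℕ) : (D l (n+2)).coeff (j+1)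
    = (Polynomial.X - Polynomial.C (cst l (n+1))) * (D l (n+1)).coeff (j+1)
      - Polynomial.C (cst l (n+1)) * (D l n).coeff j := by
  rw [D, Polynomial.coeff_sub, Polynomial.coeff_C_mul, mul_assoc, Polynomial.coeff_C_mul,
      Polynomial.coeff_X_mul]

theorem D_one (l j : ℕ) : (D l 1).coeff (j+1) = 0 := by
  simp [D, Polynomial.coeff_C]

theorem D_monic (l n : ℕ) : ((D l n).coeff 0).Monic ∧ ((D l n).coeff 0).natDegree = n := by
  induction n with
  | zero => simp [D]
  | succ n ih =>
    rw [D_p]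
    refine ⟨(Polynomial.monic_X_sub_C _).mul ih.1, ?_⟩
    rw [(Polynomial.monic_X_sub_C _).natDegree_mul ih.1, ih.2, Polynomial.natDegree_X_sub_C, add_comm]

theorem D_deg (l n : ℕ) : ∀ j m, n < m + 2 * j → ((D l n).coeff j).coeff m = 0 := by
  induction n using Nat.strong_induction_on with
  | _ n ih =>
    intro j m hlt
    cases j with
    | zero =>
      apply Polynomial.coeff_eq_zero_of_natDegree_lt
      rw [(D_monic l n).2]; omega
    | succ j =>
      match n, ih, hlt with
      | 0, _, _ => simp [D, Polynomial.coeff_one]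
      | 1, _, _ => rw [D_one]; simp
      | n + 2, ih, hlt =>
        rw [D_succ, Polynomial.coeff_sub, Polynomial.coeff_C_mul, ih n (by omega) j m (by omega),
          sub_mul, Polynomial.coeff_sub, Polynomial.coeff_C_mul,
          ih (n+1) (by omega) (j+1) m (by omega)]
        cases m with
        | zero => simp
        | succ m =>
          rw [Polynomial.coeff_X_mul, ih (n+1) (by omega) (j+1) m (by omega)]; simp

section jets
variable (l : ℕ) (c : ℂ)

theorem jA (n : ℕ) : ((D l (n+1)).coeff 0).eval c = (c - cst l n) * ((D l n).coeff 0).eval c := by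
  rw [D_p]; simp
theorem jA' (n : ℕ) : ((D l (n+1)).coeff 0).derivative.eval c
    = (c - cst l n) * ((D l n).coeff 0).derivative.eval c + ((D l n).coeff 0).eval c := by
  rw [D_p]; simp [Polynomial.derivative_mul]; ring
theorem jH (n : ℕ) : ((D l (n+1)).coeff 0).derivative.derivative.eval c
    = (c - cst l n) * ((D l n).coeff 0).derivative.derivative.eval c
      + 2 * ((D l n).coeff 0).derivative.eval c := by
  rw [D_p]; simp [Polynomial.derivative_mul]; ring
theorem jB (j n : ℕ) : ((D l (n+2)).coeff (j+1)).eval c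
    = (c - cst l (n+1)) * ((D l (n+1)).coeff (j+1)).eval c
      - cst l (n+1) * ((D l n).coeff j).eval c := by
  rw [D_succ]; simp
theorem jB' (n : ℕ) : ((D l (n+2)).coeff 1).derivative.eval c
    = (c - cst l (n+1)) * ((D l (n+1)).coeff 1).derivative.eval c + ((D l (n+1)).coeff 1).eval c
      - cst l (n+1) * ((D l n).coeff 0).derivative.eval c := by
  rw [D_succ]; simp [Polynomial.derivative_mul]; ring

theorem root_index (n : ℕ) (h : ((D l n).coeff 0).eval c = 0) : ∃ m < n, c = cst l m := by
  induction n with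
  | zero => simp [D] at h
  | succ n ih =>
    rw [jA] at h
    rcases mul_eq_zero.1 h with h | h
    · exact ⟨n, by omega, sub_eq_zero.1 h⟩
    · obtain ⟨m, hm, h⟩ := ih h
      exact ⟨m, by omega, h⟩

theorem A_ne (n : ℕ) (h : ∀ m < n, c ≠ cst l m) : ((D l n).coeff 0).eval c ≠ 0 := by
  intro h0
  obtain ⟨m, hm, hc⟩ := root_index l c n h0
  exact h m hm hc

theorem A_zero (i : ℕ) (h : c = cst l i) (n : ℕ) : ((D l (i+1+n)).coeff 0).eval c = 0 := by
  induction n with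
  | zero => rw [add_zero, jA, h]; simp
  | succ n ih => rw [← add_assoc, jA, ih, mul_zero]

theorem A'_ne (i : ℕ) (h : c = cst l i) (n : ℕ) (h' : ∀ m < i + 1 + n, m ≠ i → c ≠ cst l m) :
    ((D l (i+1+n)).coeff 0).derivative.eval c ≠ 0 := by
  induction n with
  | zero =>
    rw [add_zero, jA', ← h, sub_self, zero_mul, zero_add]
    exact A_ne l c i (fun m hm => h' m (by omega) (by omega))
  | succ n ih =>
    rw [← add_assoc, jA', A_zero l c i h, add_zero]
    exact mul_ne_zero (sub_ne_zero.2 (h' _ (by omega) (by omega))) (ih fun m hm => h' m (by omega))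

end jets

theorem cst_sub (l i m : ℕ) : cst l i - cst l m = ((m : ℂ) - i) * ((m : ℂ) - (l - i)) := by
  unfold cst; ring

theorem cst_eq {l i m : ℕ} (hi : i ≤ l) (h : cst l i = cst l m) : m = i ∨ m + i = l := by
  have := cst_sub l i m
  rw [h, sub_self] at this
  rcases mul_eq_zero.1 this.symm with h | h
  · left; exact_mod_cast sub_eq_zero.1 h
  · right
    have h2 : ((m + i : ℕ) : ℂ) = l := by push_cast; linear_combination h
    exact_mod_cast h2

/-- distinguished root -/
theorem dist (l : ℕ) (hl : 1 ≤ l) :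
    ((D l l).coeff 0).derivative.eval (cst l (l/2)) ≠ 0 ∨
    ((D l l).coeff 1).eval (cst l (l/2)) ≠ 0 := by
  rcases Nat.even_or_odd' l with ⟨n, h | h⟩
  · left
    have hd : l / 2 = n := by omega
    rw [hd]
    have := A'_ne l (cst l n) n rfl (n - 1) (by
      intro m hm hne heq
      rcases cst_eq (by omega) heq with h1 | h1 <;> omega)
    rwa [show n + 1 + (n - 1) = l by omega] at this
  · have hd : l / 2 = n := by omega
    rw [hd]
    rcases Nat.eq_zero_or_pos n with hn | hn
    · left
      subst hn
      have := A'_ne l (cst l 0) 0 rfl 0 (by intro m hm hne; omega)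
      rwa [show 0 + 1 + 0 = l by omega] at this
    · right
      have key : ∀ k, n + 2 + k ≤ l → ((D l (n+2+k)).coeff 1).eval (cst l n) ≠ 0 := by
        intro k
        induction k with
        | zero =>
          intro _
          rw [add_zero, jB]
          have : cst l n - cst l (n+1) = 0 := by
            rw [cst_sub, h]; push_cast; ring
          rw [this, zero_mul, zero_sub, neg_ne_zero]
          apply mul_ne_zero
          · unfold cst
            apply mul_ne_zero
            · exact_mod_cast Nat.succ_ne_zero n
            · rw [sub_ne_zero]; norm_cast; omega
          · apply A_ne
            intro m hm heq
            rcases cst_eq (by omega) heq with h1 | h1 <;> omega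
        | succ k ih =>
          intro hk
          rw [show n + 2 + (k+1) = n + 1 + k + 2 by ring, jB, A_zero l _ n rfl, mul_zero, sub_zero]
          apply mul_ne_zero
          · rw [sub_ne_zero]
            intro heq
            rcases cst_eq (by omega) heq with h1 | h1 <;> omega
          · have := ih (by omega)
            rwa [show n + 2 + k = n + 1 + k + 1 by ring] at this
      have := key (n - 1) (by omega)
      rwa [show n + 2 + (n-1) = l by omega] at this

theorem jet_zero (l : ℕ) (hl : 2 ≤ l) : ((D l l).coeff 0).derivative.eval 0 ≠ 0 ∧
    ((D l l).coeff 1).eval 0 = ((D l l).coeff 0).derivative.eval 0 := by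
  have hc0 : (0 : ℂ) = cst l 0 := by simp [cst]
  constructor
  · have := A'_ne l 0 0 hc0 (l-1) (by
      intro m hm hne heq
      rw [hc0] at heq
      rcases cst_eq (by omega) heq with h1 | h1 <;> omega)
    rwa [show 0 + 1 + (l-1) = l by omega] at this
  · have key : ∀ k, ((D l (k+2)).coeff 1).eval 0 = ((D l (k+2)).coeff 0).derivative.eval 0 := by
      intro k
      induction k with
      | zero =>
        rw [jB l 0 0, jA' l 0 1, D_one]
        have : ((D l 1).coeff 0).eval 0 = 0 := A_zero l 0 0 hc0 0
        rw [this]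
        simp [D]
      | succ k ih =>
        rw [show k + 1 + 2 = k+2+1 by ring, jA']
        rw [show k + 2 + 1 = (k+1)+2 by ring, jB]
        rw [show k + 1 + 1 = k + 2 by ring, ih]
        have h1 := A_zero l 0 0 hc0 k
        have h2 := A_zero l 0 0 hc0 (k+1)
        rw [show 0+1+k = k+1 by ring] at h1
        rw [show 0+1+(k+1) = k+2 by ring] at h2
        rw [h1, h2]; ring
    obtain ⟨k, rfl⟩ : ∃ k, l = k + 2 := ⟨l - 2, by omega⟩
    exact key k

theorem coeffs {S : Type*} [CommRing S] (Q R : Polynomial S) :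
    (Q * R).coeff 1 = Q.coeff 0 * R.coeff 1 + Q.coeff 1 * R.coeff 0 ∧
    (Q * R).coeff 2 = Q.coeff 0 * R.coeff 2 + Q.coeff 1 * R.coeff 1 + Q.coeff 2 * R.coeff 0 := by
  constructor <;> simp [Polynomial.coeff_mul, Finset.Nat.antidiagonal_succ] <;> ring

theorem not_sq (n : ℕ) (hn : 2 ≤ n) (ρ : ℚ) (h : (ρ : ℂ) ^ 2 = (n : ℂ) ^ 2 * ((n : ℂ) ^ 2 - 1)) :
    False := by
  have h1 : ρ ^ 2 = (n : ℚ) ^ 2 * ((n : ℚ) ^ 2 - 1) := by exact_mod_cast h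
  have h2 : IsSquare ((n ^ 2 - 1 : ℕ) : ℚ) := by
    refine ⟨ρ / n, ?_⟩
    have hn0 : (n : ℚ) ≠ 0 := by positivity
    rw [Nat.cast_sub (Nat.one_le_pow _ _ (by omega))]
    push_cast
    field_simp
    linear_combination -h1
  rw [Rat.isSquare_natCast_iff] at h2
  obtain ⟨m, hm⟩ := h2
  have h3 : n ^ 2 = m * m + 1 := by
    have := Nat.one_le_pow 2 n (by omega)
    omega
  have h4 : m < n := by nlinarith
  nlinarith

theorem main (l : ℕ) (hl : 1 ≤ l) (Q R : Polynomial (Polynomial ℂ)) (hP : D l l = Q * R)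
    (hd : (R.coeff 0).eval (cst l (l/2)) ≠ 0) : (R.coeff 0).natDegree = 0 := by
  classical
  have h00 : (D l l).coeff 0 = Q.coeff 0 * R.coeff 0 := by rw [hP, Polynomial.mul_coeff_zero]
  have h11 : (D l l).coeff 1 = Q.coeff 0 * R.coeff 1 + Q.coeff 1 * R.coeff 0 := by rw [hP, (coeffs Q R).1]
  have h22 : (D l l).coeff 2 = Q.coeff 0 * R.coeff 2 + Q.coeff 1 * R.coeff 1 + Q.coeff 2 * R.coeff 0 := by rw [hP, (coeffs Q R).2]
  have hP0 : (D l l).coeff 0 ≠ 0 := (D_monic l l).1.ne_zero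
  have hR0 : R.coeff 0 ≠ 0 := fun h => hP0 (by rw [h00, h, mul_zero])
  have hdeg := factor_deg hP (D_monic l l).2 hP0 (D_deg l l)
  set eR : ℂ → ℂ := fun c => - ((l : ℂ) ^ 2 - 2 * c - 1) / ((l : ℂ) ^ 2 - 4 * c - 1) with heR
  set ε : ℂ → ℂ := fun c => if (R.coeff 0).derivative.eval c = 0 then eR c else
    - (R.coeff 1).eval c / (R.coeff 0).derivative.eval c with hε
  -- index of roots
  have hidx : ∀ c, (R.coeff 0).eval c = 0 → ∃ i x : ℕ, 2 ≤ x ∧ l = 2 * i + x ∧ c = cst l i := by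
    intro c hc
    obtain ⟨m, hm, rfl⟩ := root_index l c l (by rw [h00]; simp [hc])
    have hne : cst l m ≠ cst l (l/2) := fun h => hd (h ▸ hc)
    rcases Nat.lt_or_ge (2 * m) l with h | h
    · refine ⟨m, l - 2 * m, ?_, by omega, rfl⟩
      by_contra hlt
      apply hne
      congr 1; omega
    · have hs : cst l m = cst l (l - m) := by
        unfold cst; rw [Nat.cast_sub (by omega)]; ring
      refine ⟨l - m, 2 * m - l, ?_, by omega, hs⟩
      by_contra hlt
      apply hne
      rcases Nat.lt_or_ge l (2 * m) with h' | h'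
      · rw [hs]; congr 1; omega
      · congr 1; omega
  have hx : ∀ i x : ℕ, l = 2 * i + x → eR (cst l i)
      = - ((2 * i + x : ℂ) ^ 2 + x ^ 2 - 2) / (2 * ((x : ℂ) ^ 2 - 1)) := by
    intro i x hlx
    have hlc : (l : ℂ) = 2 * i + x := by rw [hlx]; push_cast; ring
    simp only [heR, cst, hlc]
    rw [← mul_div_mul_left _ _ (two_ne_zero (α := ℂ))]
    congr 1 <;> ring
  have hrat : ∀ c, (R.coeff 0).eval c = 0 → ∃ r : ℚ, r < 0 ∧ eR c = r := by
    intro c hc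
    obtain ⟨i, x, hx2, hlx, rfl⟩ := hidx c hc
    refine ⟨- ((2 * i + x : ℚ) ^ 2 + x ^ 2 - 2) / (2 * ((x : ℚ) ^ 2 - 1)), ?_, ?_⟩
    · have : (2 : ℚ) ≤ x := by exact_mod_cast hx2
      apply div_neg_of_neg_of_pos
      · have : (0 : ℚ) ≤ (2 * i + x : ℚ) ^ 2 := by positivity
        nlinarith
      · nlinarith
    · rw [hx i x hlx]; push_cast; ring
  -- local data
  have hloc : ∀ c, (R.coeff 0).eval c = 0 →
      ((R.coeff 0).derivative.eval c ≠ 0 ∧ (ε c = eR c ∨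
        ∃ n : ℕ, 2 ≤ n ∧ l = 2 * n ∧ c = cst l (n-1) ∧
          (ε c - eR c) ^ 2 = (n : ℂ) ^ 2 * ((n : ℂ) ^ 2 - 1))) ∨
      ((R.coeff 0).derivative.eval c = 0 ∧ (R.coeff 0).derivative.derivative.eval c ≠ 0 ∧
        (R.coeff 1).eval c = 0 ∧
        (R.coeff 1).derivative.eval c = - eR c * (R.coeff 0).derivative.derivative.eval c) := by
    intro c hc
    obtain ⟨i, x, hx2, hlx, hci⟩ := hidx c hc
    rcases Nat.eq_zero_or_pos i with hi | hi
    · left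
      subst hi
      have hc0 : c = 0 := by rw [hci]; simp [cst]
      obtain ⟨z1, z2⟩ := jet_zero l (by omega)
      have hz : ∀ p : Polynomial ℂ, p.eval 0 = p.eval c := fun p => by rw [hc0]
      rw [h00, hz] at z1
      rw [h00, h11, hz, hz] at z2
      simp only [Polynomial.derivative_mul, Polynomial.eval_add, Polynomial.eval_mul, hc, mul_zero,
        zero_add, add_zero] at z1 z2
      have hr := right_ne_zero_of_mul z1
      refine ⟨hr, Or.inl ?_⟩
      have hq := mul_left_cancel₀ (left_ne_zero_of_mul z1) z2
      have : eR c = -1 := by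
        rw [hci, hx 0 x hlx]
        have hx3 : (x : ℂ) ^ 2 - 1 ≠ 0 := by
          have : x ^ 2 ≠ 1 := by nlinarith
          rw [sub_ne_zero]; exact_mod_cast this
        field_simp; push_cast; ring
      rw [this]
      simp only [hε, if_neg hr, hq]
      field_simp
    · have hlc : (l : ℂ) = 2 * i + x := by rw [hlx]; push_cast; ring
      obtain ⟨_, t2, t3, t4, t5, t6⟩ := jet_double i x hi hx2 (fun m => c - cst l m) (cst l)
        (fun n => ((D l n).coeff 0).eval c) (fun n => ((D l n).coeff 0).derivative.eval c)
        (fun n => ((D l n).coeff 0).derivative.derivative.eval c)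
        (fun n => ((D l n).coeff 1).eval c) (fun n => ((D l n).coeff 1).derivative.eval c)
        (fun n => ((D l n).coeff 2).eval c)
        (fun m => by rw [hci, cst_sub, hlc]; ring) (fun m => by rw [cst, hlc]) (by simp [D])
        (jA l c) (jA' l c) (jH l c) (jB l c 0) (jB' l c) (jB l c 1)
        (eR c) _ (by rw [hci, hx i x hlx]) rfl l hlx
      simp only [h00, h11, h22] at t2 t3 t4 t5 t6
      rcases local_double _ _ _ _ _ _ c _ _ t2 t3 t4 t5 t6 hc with ⟨u1, u2⟩ | u
      · left
        refine ⟨u1, ?_⟩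
        have hεc : ε c = - (R.coeff 1).eval c / (R.coeff 0).derivative.eval c := by
          simp only [hε, if_neg u1]
        rw [← hεc] at u2
        by_cases h2 : x = 2
        · right
          rw [if_pos h2] at u2
          refine ⟨i + 1, by omega, by omega, by simpa using hci, ?_⟩
          rw [u2]; push_cast; ring
        · left
          rw [if_neg h2] at u2
          exact sub_eq_zero.1 (pow_eq_zero_iff (two_ne_zero) |>.1 u2)
      · right; exact u
  have hsum := residue (R.coeff 0) (R.coeff 1) ε hR0 (by
      by_cases h : R.coeff 1 = 0
      · right; exact h
      · left
        by_contra hlt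
        exact (Polynomial.leadingCoeff_ne_zero.2 h) (hdeg 1 _ (by omega))) (by
      intro c hc
      rcases hloc c hc with ⟨u1, _⟩ | ⟨u1, u2, u3, u4⟩
      · left
        refine ⟨u1, ?_⟩
        simp only [hε, if_neg u1]
        field_simp
      · right
        refine ⟨u1, u2, u3, ?_⟩
        simp only [hε, if_pos u1]
        exact u4)
  have hmem : ∀ c, c ∈ (R.coeff 0).roots.toFinset ↔ (R.coeff 0).eval c = 0 := by
    intro c; simp [hR0]
  choose! r hr1 hr2 using hrat
  by_cases hex : ∃ c, (R.coeff 0).eval c = 0 ∧ ε c ≠ eR c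
  · exfalso
    obtain ⟨c, hc, hne⟩ := hex
    rcases hloc c hc with ⟨u1, u | ⟨n, hn, hln, hcn, hsq⟩⟩ | u
    · exact hne u
    · have hm1 : (R.coeff 0).rootMultiplicity c = 1 := by
        have h1 : ¬ (1 < (R.coeff 0).rootMultiplicity c) := by
          rw [Polynomial.one_lt_rootMultiplicity_iff_isRoot hR0]
          exact fun h => u1 h.2
        have h2 : 0 < (R.coeff 0).rootMultiplicity c := (Polynomial.rootMultiplicity_pos hR0).2 hc
        omega
      have hoth : ∀ c', (R.coeff 0).eval c' = 0 → c' ≠ c → ε c' = eR c' := by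
        intro c' hc' hne'
        rcases hloc c' hc' with ⟨v1, v | ⟨n', hn', hln', hcn', _⟩⟩ | v
        · exact v
        · exfalso; apply hne'
          rw [hcn, hcn']; congr 1; omega
        · simp only [hε, if_pos v.1]
      rw [← Finset.add_sum_erase _ _ ((hmem c).2 hc), hm1] at hsum
      have hs2 : ∑ c' ∈ (R.coeff 0).roots.toFinset.erase c,
          ((R.coeff 0).rootMultiplicity c' : ℂ) * ε c'
          = ((∑ c' ∈ (R.coeff 0).roots.toFinset.erase c,
          ((R.coeff 0).rootMultiplicity c' : ℚ) * r c' : ℚ) : ℂ) := by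
        push_cast
        apply Finset.sum_congr rfl
        intro c' hc'
        have h1 := (hmem c').1 (Finset.mem_of_mem_erase hc')
        rw [hoth c' h1 (Finset.ne_of_mem_erase hc'), hr2 c' h1]
      rw [hs2] at hsum
      set T := ∑ c' ∈ (R.coeff 0).roots.toFinset.erase c,
          ((R.coeff 0).rootMultiplicity c' : ℚ) * r c' with hT
      apply not_sq n hn (- T - r c)
      rw [← hsq, hr2 c hc]
      push_cast at hsum ⊢
      have : ε c = - (T : ℂ) := by linear_combination hsum
      rw [this]
    · apply hne; simp only [hε, if_pos u.1]
  · push Not at hex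
    have hs2 : ∑ c ∈ (R.coeff 0).roots.toFinset, ((R.coeff 0).rootMultiplicity c : ℂ) * ε c
        = ((∑ c ∈ (R.coeff 0).roots.toFinset, ((R.coeff 0).rootMultiplicity c : ℚ) * r c : ℚ) : ℂ) := by
      push_cast
      apply Finset.sum_congr rfl
      intro c hc
      have h1 := (hmem c).1 hc
      rw [hex c h1, hr2 c h1]
    rw [hs2] at hsum
    have hsumQ : ∑ c ∈ (R.coeff 0).roots.toFinset, ((R.coeff 0).rootMultiplicity c : ℚ) * r c = 0 := by
      exact_mod_cast hsum
    by_contra hdeg0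
    obtain ⟨c, hc⟩ := IsAlgClosed.exists_root (R.coeff 0) (by
      intro h
      exact hdeg0 (Polynomial.natDegree_eq_of_degree_eq_some h))
    have hlt : ∑ c ∈ (R.coeff 0).roots.toFinset, ((R.coeff 0).rootMultiplicity c : ℚ) * r c < 0 := by
      apply Finset.sum_neg
      · intro c hc
        have h1 := (hmem c).1 hc
        have h2 : 0 < (R.coeff 0).rootMultiplicity c := (Polynomial.rootMultiplicity_pos hR0).2 h1
        exact mul_neg_of_pos_of_neg (by exact_mod_cast h2) (hr1 c h1)
      · exact ⟨c, (hmem c).2 hc⟩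
    exact hlt.ne hsumQ

theorem main' (l : ℕ) (hl : 1 ≤ l) (Q R : Polynomial (Polynomial ℂ)) (hP : D l l = Q * R) :
    (∃ k : ℂ, k ≠ 0 ∧ Q = Polynomial.C (Polynomial.C k)) ∨
    (∃ k : ℂ, k ≠ 0 ∧ R = Polynomial.C (Polynomial.C k)) := by
  have fin : ∀ Q R : Polynomial (Polynomial ℂ), D l l = Q * R → (R.coeff 0).natDegree = 0 →
      ∃ k : ℂ, k ≠ 0 ∧ R = Polynomial.C (Polynomial.C k) := by
    intro Q R hP h0
    have hP0 : (D l l).coeff 0 ≠ 0 := (D_monic l l).1.ne_zero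
    have hdeg := factor_deg hP (D_monic l l).2 hP0 (D_deg l l)
    have h00 : (D l l).coeff 0 = Q.coeff 0 * R.coeff 0 := by rw [hP, Polynomial.mul_coeff_zero]
    obtain ⟨k, hk⟩ := Polynomial.natDegree_eq_zero.1 h0
    refine ⟨k, ?_, ?_⟩
    · rintro rfl
      apply hP0; rw [h00, ← hk]; simp
    · ext j m
      by_cases hj : m + 2 * j = 0
      · obtain ⟨rfl, rfl⟩ : m = 0 ∧ j = 0 := by omega
        rw [← hk]; simp
      · rw [hdeg j m (by omega)]
        rw [Polynomial.coeff_C]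
        split_ifs with h
        · rw [Polynomial.coeff_C, if_neg (by omega)]
        · simp
  by_cases hd : (R.coeff 0).eval (cst l (l/2)) = 0
  · left
    have hP' : D l l = R * Q := by rw [hP, mul_comm]
    apply fin R Q hP'
    apply main l hl R Q hP'
    intro hq
    rcases dist l hl with h | h
    · apply h; rw [hP, Polynomial.mul_coeff_zero]; simp [Polynomial.derivative_mul, hd, hq]
    · apply h; rw [hP, (coeffs Q R).1]; simp [hd, hq]
  · right
    exact fin Q R hP (main l hl Q R hP hd)

/-- transfer -/
noncomputable def toW : MvPolynomial (Fin 2) ℂ →ₐ[ℂ] Polynomial (Polynomial ℂ) :=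
  aeval ![Polynomial.C Polynomial.X, Polynomial.X]

noncomputable def fromW : Polynomial (Polynomial ℂ) →+* MvPolynomial (Fin 2) ℂ :=
  Polynomial.eval₂RingHom (Polynomial.eval₂RingHom MvPolynomial.C (X 0)) (X 1)

theorem toW_inj : Function.Injective toW := by
  have : fromW.comp toW.toRingHom = RingHom.id _ := by
    apply MvPolynomial.ringHom_ext
    · intro r
      simp [toW, fromW, Polynomial.algebraMap_apply]
    · intro i
      fin_cases i <;> simp [toW, fromW]
  intro a b h
  have h1 := RingHom.congr_fun this a
  have h2 := RingHom.congr_fun this b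
  simp at h1 h2
  rw [← h1, ← h2, h]

theorem toW_C (k : ℂ) : toW (C k) = Polynomial.C (Polynomial.C k) := by
  simp [toW, Polynomial.algebraMap_apply]

theorem det_D (l n : ℕ) (hn : n ≤ l) : toW ((Matrix.of fun i j : Fin n =>
        (if (i : ℕ) = (j : ℕ) then X 0 - C (((i : ℕ) * (l - (i : ℕ)) : ℕ) : ℂ)
        else if (i : ℕ) + 1 = (j : ℕ) then X 1 * C ((((i : ℕ) + 1 : ℕ)) : ℂ)
        else if (j : ℕ) + 1 = (i : ℕ) then X 1 * C (((l - (i : ℕ) : ℕ)) : ℂ)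
        else 0 : MvPolynomial (Fin 2) ℂ)).det) = Polynomial.expand _ 2 (D l n) := by
  induction n using Nat.strong_induction_on with
  | _ n ih =>
    match n, hn, ih with
    | 0, _, _ => simp [D]
    | 1, _, _ => simp [D, cst, toW]
    | n + 2, hn, ih =>
      have := tri_det (fun i => (X 0 - C (((i : ℕ) * (l - (i : ℕ)) : ℕ) : ℂ) : MvPolynomial (Fin 2) ℂ))
        (fun i => X 1 * C ((((i : ℕ) + 1 : ℕ)) : ℂ)) (fun i => X 1 * C (((l - (i : ℕ) : ℕ)) : ℂ)) n
      rw [this, map_sub, map_mul, map_mul, map_mul, ih (n+1) (by omega) (by omega), ih n (by omega) (by omega)]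
      have e0 : toW (X 0) = Polynomial.C Polynomial.X := by simp [toW]
      have e1 : toW (X 1) = Polynomial.X := by simp [toW]
      have hcast : ((l - (n+1) : ℕ) : ℂ) = (l : ℂ) - ((n + 1 : ℕ) : ℂ) := by
        rw [Nat.cast_sub (by omega)]
      rw [D]
      simp only [map_sub, map_mul, toW_C, e0, e1, Polynomial.expand_C, Polynomial.expand_X, cst,
        Nat.cast_mul, hcast]
      ring

theorem toW_X0 : toW (X 0) = Polynomial.C Polynomial.X := by simp [toW]

theorem toW_X1 : toW (X 1) = Polynomial.X := by simp [toW]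

theorem toW_sub (F : MvPolynomial (Fin 2) ℂ) : toW (aeval ![X 0, (X 1) ^ 2] F)
      = Polynomial.expand _ 2 (toW F) := by
  induction F using MvPolynomial.induction_on with
  | C a =>
    rw [toW_C, Polynomial.expand_C, MvPolynomial.aeval_C, MvPolynomial.algebraMap_eq, toW_C]
  | add p q hp hq => rw [map_add, map_add, map_add, map_add, hp, hq]
  | mul_X p i hp =>
    rw [map_mul, map_mul, map_mul, map_mul, hp, MvPolynomial.aeval_X]
    congr 1
    match i with
    | 0 =>
      rw [toW_X0, Polynomial.expand_C]; exact toW_X0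
    | 1 =>
      rw [toW_X1, Polynomial.expand_X, ← toW_X1, ← map_pow]; rfl

end HeunIrr

/-- the polynomial P_l(u,v) defined by det(H_l + λ·Id) = P_l(λ, μ²)
is irreducible in ℂ[u,v].  Variables of the determinant: X 0 = λ, X 1 = μ;
variables of P: X 0 = u, X 1 = v. -/
theorem stmt7 (l : ℕ) (hl : 1 ≤ l) (P : MvPolynomial (Fin 2) ℂ)
    (hP : (Matrix.of fun i j : Fin l =>
        (if (i : ℕ) = (j : ℕ) then X 0 - C (((i : ℕ) * (l - (i : ℕ)) : ℕ) : ℂ)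
        else if (i : ℕ) + 1 = (j : ℕ) then X 1 * C ((((i : ℕ) + 1 : ℕ)) : ℂ)
        else if (j : ℕ) + 1 = (i : ℕ) then X 1 * C (((l - (i : ℕ) : ℕ)) : ℂ)
        else 0 : MvPolynomial (Fin 2) ℂ)).det
      = aeval ![X 0, (X 1) ^ 2] P) :
    Irreducible P := by
  have h1 := HeunIrr.det_D l l le_rfl
  rw [hP] at h1
  rw [HeunIrr.toW_sub] at h1
  have h3 : HeunIrr.toW P = HeunIrr.D l l := Polynomial.expand_injective (by norm_num) h1
  have hu : ∀ (F : MvPolynomial (Fin 2) ℂ) (k : ℂ), k ≠ 0 →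
      HeunIrr.toW F = Polynomial.C (Polynomial.C k) → IsUnit F := by
    intro F k hk h
    rw [← HeunIrr.toW_C] at h
    rw [HeunIrr.toW_inj h]
    exact (isUnit_iff_ne_zero.2 hk).map C
  constructor
  · intro hunit
    have h4 : IsUnit (HeunIrr.D l l) := h3 ▸ hunit.map HeunIrr.toW
    have h5 : IsUnit ((HeunIrr.D l l).coeff 0) := by
      have := h4.map Polynomial.constantCoeff
      simpa using this
    have h6 := Polynomial.natDegree_eq_zero_of_isUnit h5
    rw [(HeunIrr.D_monic l l).2] at h6
    omega
  · intro a b hab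
    have h4 : HeunIrr.D l l = HeunIrr.toW a * HeunIrr.toW b := by rw [← h3, hab, map_mul]
    rcases HeunIrr.main' l hl _ _ h4 with ⟨k, hk, h⟩ | ⟨k, hk, h⟩
    · left; exact hu a k hk h
    · right; exact hu b k hk h
end

section
/- For every l ≥ 2, the affine plane curve Γ_l = {(λ,μ) ∈ ℂ² : P_l(λ,μ²) = 0} is irreducible, i.e., P_l(λ,μ²) is an irreducible polynomial in ℂ[λ,μ], where P_l is the degree-l polynomial with det(H_l + λ·Id) = P_l(λ,μ²). -/
open MvPolynomial Matrix

section
namespace G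

abbrev R := LaurentPolynomial ℂ

noncomputable def th : R →ₗ[ℂ] R where
  toFun f := .ofCoeff (Finsupp.onFinset f.coeff.support (fun n : ℤ => (n : ℂ) * f.coeff n)
    (by intro a h; simp only [Finsupp.mem_support_iff]; intro h'; simp [h'] at h))
  map_add' f g := by
    apply LaurentPolynomial.ext; intro a; simp [mul_add]
  map_smul' c f := by
    apply LaurentPolynomial.ext; intro a; simp; ring

lemma th_coeff (f : R) (n : ℤ) : (th f).coeff n = n * f.coeff n := rfl

lemma th_single (n : ℤ) (r : ℂ) : th (.single n r : R) = .single n (n * r) := by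
  apply LaurentPolynomial.ext; intro a
  rw [th_coeff]
  by_cases h : n = a
  · subst h; simp only [AddMonoidAlgebra.coeff_single, Finsupp.single_eq_same]
  · simp only [AddMonoidAlgebra.coeff_single, Finsupp.single_apply, h, if_false, mul_zero]

lemma th_mul (f g : R) : th (f * g) = f * th g + g * th f := by
  induction f using AddMonoidAlgebra.induction_linear with
  | zero => simp
  | add f₁ f₂ h1 h2 => rw [add_mul, map_add, h1, h2, map_add]; ring
  | single n r =>
    induction g using AddMonoidAlgebra.induction_linear with
    | zero => simp
    | add f₁ f₂ h1 h2 => rw [mul_add, map_add, h1, h2, map_add]; ring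
    | single k s =>
      simp only [AddMonoidAlgebra.single_mul_single, th_single]
      rw [add_comm k n, ← AddMonoidAlgebra.single_add]
      congr 1; push_cast; ring

noncomputable def CT : R →ₗ[ℂ] ℂ where
  toFun f := f.coeff 0
  map_add' f g := by simp
  map_smul' c f := by simp

lemma CT_th (f : R) : CT (th f) = 0 := by
  show (th f).coeff 0 = 0
  simp [th_coeff]

noncomputable abbrev cC : ℂ →+* R := LaurentPolynomial.C
noncomputable def w : R := LaurentPolynomial.T 1
noncomputable def w' : R := LaurentPolynomial.T (-1)
lemma ww : w * w' = 1 := by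
  rw [w, w', ← LaurentPolynomial.T_add]; simp
lemma th_w : th w = w := by
  rw [w, LaurentPolynomial.T, th_single]; simp
lemma th_w' : th w' = -w' := by
  rw [w', LaurentPolynomial.T, th_single, ← AddMonoidAlgebra.single_neg]; simp
lemma th_C (c : ℂ) : th (cC c) = 0 := by
  rw [← LaurentPolynomial.single_eq_C, th_single]; simp
lemma CT_C (c : ℂ) : CT (cC c) = c := by
  rw [← LaurentPolynomial.single_eq_C]
  show (AddMonoidAlgebra.single (0:ℤ) c).coeff 0 = c
  simp only [AddMonoidAlgebra.coeff_single, Finsupp.single_eq_same]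

noncomputable def q : R := cC (1/2) * (w' - w)
noncomputable def hh : R := 1 + cC (1/2) * (w' + w)

noncomputable def al (J : ℂ) (Y : ℕ → R) (n : ℕ) : R :=
  q * Y n + if n = 0 then cC J * hh else 0

structure Rec (J m : ℂ) (Y : ℕ → R) (a : ℕ → ℂ) : Prop where
  Y0 : Y 0 = cC m
  ct : ∀ n, CT (Y (n+1)) = 0
  eq : ∀ n, cC (a n) = 2 * Y (n+1) + cC (2*J+1) * al J Y n
    - (∑ p ∈ Finset.HasAntidiagonal.antidiagonal n, al J Y p.1 * al J Y p.2)
    - q * th (al J Y n)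

end G
end

section
namespace G
open scoped ComplexOrder

def N (s : ℂ) (f : R) : Prop := ∀ j : ℤ, 0 ≤ s * Complex.I ^ j * f.coeff j

lemma coeff_mul' (f g : R) (j : ℤ) : (f * g).coeff j =
    ∑ a ∈ f.coeff.support, f.coeff a * g.coeff (j - a) := by
  induction f using AddMonoidAlgebra.induction_linear with
  | zero => simp
  | add f₁ f₂ h1 h2 =>
    have key : ∀ f : R, ∀ S : Finset ℤ, f.coeff.support ⊆ S →
      ∑ a ∈ f.coeff.support, f.coeff a * g.coeff (j - a) =
      ∑ a ∈ S, f.coeff a * g.coeff (j - a) := by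
      intro f S hS
      apply Finset.sum_subset hS
      intro x _ hx
      simp only [Finsupp.mem_support_iff, not_not] at hx
      rw [hx, zero_mul]
    rw [add_mul, AddMonoidAlgebra.coeff_add, Finsupp.add_apply, h1, h2]
    rw [key f₁ (f₁.coeff.support ∪ f₂.coeff.support) Finset.subset_union_left,
      key f₂ (f₁.coeff.support ∪ f₂.coeff.support) Finset.subset_union_right,
      key (f₁ + f₂) (f₁.coeff.support ∪ f₂.coeff.support) Finsupp.support_add,
      ← Finset.sum_add_distrib]
    apply Finset.sum_congr rfl
    intro x _
    rw [AddMonoidAlgebra.coeff_add, Finsupp.add_apply]; ring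
  | single n r =>
    by_cases hr : r = 0
    · subst hr; rw [AddMonoidAlgebra.single_zero]; simp
    rw [AddMonoidAlgebra.coeff_single, Finsupp.support_single _ hr, Finset.sum_singleton,
      Finsupp.single_eq_same]
    apply AddMonoidAlgebra.coeff_single_mul_eq_mul_coeff
    intro a _; constructor <;> intro h <;> omega

lemma N.term {s t : ℂ} {f g : R} (hf : N s f) (hg : N t g) (j a : ℤ) :
    0 ≤ (s * t) * Complex.I ^ j * (f.coeff a * g.coeff (j - a)) := by
  have := mul_nonneg (hf a) (hg (j - a))
  have e : (Complex.I : ℂ) ^ j = Complex.I ^ a * Complex.I ^ (j - a) := by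
    rw [← zpow_add₀ Complex.I_ne_zero]; congr 1; ring
  rw [e]
  convert this using 1; ring

lemma N.mul {s t : ℂ} {f g : R} (hf : N s f) (hg : N t g) : N (s * t) (f * g) := by
  intro j
  rw [coeff_mul', Finset.mul_sum]
  exact Finset.sum_nonneg fun a _ => hf.term hg j a

lemma N.mul_ne {s t : ℂ} {f g : R} (hf : N s f) (hg : N t g) (hs : s ≠ 0) (ht : t ≠ 0)
    (j a : ℤ) (ha : f.coeff a ≠ 0) (hb : g.coeff (j - a) ≠ 0) : (f * g).coeff j ≠ 0 := by
  intro h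
  have h2 : ∑ a ∈ f.coeff.support, (s * t) * Complex.I ^ j * (f.coeff a * g.coeff (j - a)) = 0 := by
    rw [← Finset.mul_sum, ← coeff_mul', h, mul_zero]
  rw [Finset.sum_eq_zero_iff_of_nonneg (fun a _ => hf.term hg j a)] at h2
  have := h2 a (by simpa using ha)
  have hI : (Complex.I : ℂ) ^ j ≠ 0 := zpow_ne_zero _ Complex.I_ne_zero
  simp_all

lemma N.sum {ι : Type*} {s : ℂ} (S : Finset ι) {f : ι → R} (hf : ∀ i ∈ S, N s (f i)) :
    N s (∑ i ∈ S, f i) := by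
  intro j
  rw [AddMonoidAlgebra.coeff_sum, Finsupp.finsetSum_apply, Finset.mul_sum]
  exact Finset.sum_nonneg fun a ha => hf a ha j

lemma N.sum_ne {ι : Type*} {s : ℂ} (hs : s ≠ 0) (S : Finset ι) {f : ι → R}
    (hf : ∀ i ∈ S, N s (f i)) (j : ℤ)
    (i : ι) (hi : i ∈ S) (h : (f i).coeff j ≠ 0) : (∑ i ∈ S, f i).coeff j ≠ 0 := by
  intro h0
  have h2 : ∑ i ∈ S, s * Complex.I ^ j * (f i).coeff j = 0 := by
    rw [AddMonoidAlgebra.coeff_sum, Finsupp.finsetSum_apply] at h0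
    rw [← Finset.mul_sum, h0, mul_zero]
  rw [Finset.sum_eq_zero_iff_of_nonneg (fun a ha => hf a ha j)] at h2
  have := h2 i hi
  have hI : (Complex.I : ℂ) ^ j ≠ 0 := zpow_ne_zero _ Complex.I_ne_zero
  simp_all

lemma N.one : N 1 1 := by
  intro j
  by_cases h : j = 0
  · subst h; rw [AddMonoidAlgebra.one_def, AddMonoidAlgebra.coeff_single]; simp
  · rw [AddMonoidAlgebra.one_def, AddMonoidAlgebra.coeff_single]; simp [Ne.symm h]

lemma q_coeff (j : ℤ) : q.coeff j = if j = -1 then 1/2 else if j = 1 then -1/2 else 0 := by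
  have : q = .single (-1) (1/2) - .single 1 (1/2) := by
    rw [LaurentPolynomial.single_eq_C_mul_T, LaurentPolynomial.single_eq_C_mul_T, q, w, w', mul_sub]
  rw [this]
  rw [AddMonoidAlgebra.coeff_sub, Finsupp.sub_apply]
  simp only [AddMonoidAlgebra.coeff_single, Finsupp.single_apply]
  by_cases h1 : j = -1
  · subst h1; simp
  · by_cases h2 : j = 1
    · subst h2; simp; norm_num
    · simp [h1, h2, Ne.symm h1, Ne.symm h2]

lemma N_q : N Complex.I q := by
  intro j
  rw [q_coeff]
  by_cases h1 : j = -1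
  · subst h1; simp
  · by_cases h2 : j = 1
    · subst h2
      norm_num
      rw [show (1:ℂ)/2 = ((1/2 : ℝ) : ℂ) by norm_num]
      exact_mod_cast (by norm_num : (0:ℝ) ≤ 1/2)
    · simp [h1, h2]

lemma q2_coeff (j : ℤ) (h : j = 2 ∨ j = 0 ∨ j = -2) : (q * q).coeff j ≠ 0 := by
  rcases h with rfl | rfl | rfl
  · apply N_q.mul_ne N_q Complex.I_ne_zero Complex.I_ne_zero 2 1 <;> rw [q_coeff] <;> norm_num
  · apply N_q.mul_ne N_q Complex.I_ne_zero Complex.I_ne_zero 0 1 <;> rw [q_coeff] <;> norm_num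
  · apply N_q.mul_ne N_q Complex.I_ne_zero Complex.I_ne_zero (-2) (-1) <;> rw [q_coeff] <;> norm_num

lemma N_q2 : N (-1) (q * q) := by
  have := N_q.mul N_q
  rwa [Complex.I_mul_I] at this

open Polynomial in
lemma maplin {S : Type*} [CommRing S] [Algebra ℂ S] (L : R →ₗ[ℂ] S) (p : R[X]) :
    ∃ p' : S[X], (∀ i, p'.coeff i = L (p.coeff i)) ∧
      ∀ m : ℂ, p'.eval (algebraMap ℂ S m) = L (p.eval (cC m)) := by
  induction p using Polynomial.induction_on' with
  | add p q hp hq =>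
    obtain ⟨p', h1, h2⟩ := hp
    obtain ⟨q', h3, h4⟩ := hq
    exact ⟨p' + q', fun i => by simp [h1, h3], fun m => by simp [h2, h4]⟩
  | monomial n a =>
    refine ⟨monomial n (L a), fun i => ?_, fun m => ?_⟩
    · simp only [Polynomial.coeff_monomial]; split_ifs <;> simp
    · simp only [Polynomial.eval_monomial, ← map_pow]
      rw [mul_comm, ← Algebra.smul_def, mul_comm, ← LaurentPolynomial.smul_eq_C_mul, map_smul]

lemma natDegree_maplin {S : Type*} [CommRing S] [Algebra ℂ S] (L : R →ₗ[ℂ] S) {p : Polynomial R}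
    {p' : Polynomial S} (h : ∀ i, p'.coeff i = L (p.coeff i)) {d : ℕ} (hd : p.natDegree ≤ d) :
    p'.natDegree ≤ d := by
  rw [Polynomial.natDegree_le_iff_coeff_eq_zero] at *
  intro i hi; rw [h, hd i hi, map_zero]

end G
end

section
namespace G
open scoped ComplexOrder

def Good {ι : Type*} (m : ι → ℂ) (Y : ι → ℕ → R) (n : ℕ) (p : Polynomial R) : Prop :=
  p.natDegree ≤ n + 1 ∧ (∀ k, Y k n = p.eval (cC (m k))) ∧ N ((-1) ^ n) (p.coeff (n+1)) ∧
  (n = 0 → p.coeff (n+1) = 1) ∧ (n ≠ 0 → (p.coeff (n+1)).coeff 2 ≠ 0)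

lemma psi {ι : Type*} (J : ℂ) (m : ι → ℂ) (Y : ι → ℕ → R) (n : ℕ)
    (H : ∀ i ≤ n, ∃ p, Good m Y i p) : ∃ P : Polynomial R, P.natDegree ≤ n + 2 ∧
    (∀ k, cC (2*J+1) * al J (Y k) n
    - (∑ p ∈ Finset.HasAntidiagonal.antidiagonal n, al J (Y k) p.1 * al J (Y k) p.2)
    - q * th (al J (Y k) n) = P.eval (cC (m k))) ∧
    N ((-1)^n) (P.coeff (n+2)) ∧ (P.coeff (n+2)).coeff 2 ≠ 0 ∧
      (n ≠ 0 → (P.coeff (n+2)).coeff 0 ≠ 0) := by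
  have H' : ∀ i, ∃ p, i ≤ n → Good m Y i p := by
    intro i
    by_cases h : i ≤ n
    · obtain ⟨p, hp⟩ := H i h; exact ⟨p, fun _ => hp⟩
    · exact ⟨0, fun h' => absurd h' h⟩
  choose p hp using H'
  let A : ℕ → Polynomial R := fun i =>
    Polynomial.C q * p i + Polynomial.C (if i = 0 then cC J * hh else 0)
  have Aev : ∀ i ≤ n, ∀ k, (A i).eval (cC (m k)) = al J (Y k) i := by
    intro i hi k
    simp only [A, al, Polynomial.eval_add, Polynomial.eval_mul, Polynomial.eval_C]
    rw [(hp i hi).2.1 k]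
  have Adeg : ∀ i ≤ n, (A i).natDegree ≤ i + 1 := by
    intro i hi
    refine (Polynomial.natDegree_add_le _ _).trans (max_le ?_ ?_)
    · exact (Polynomial.natDegree_C_mul_le _ _).trans (hp i hi).1
    · simp
  have Atop : ∀ i, (A i).coeff (i+1) = q * (p i).coeff (i+1) := by
    intro i
    simp only [A, Polynomial.coeff_add, Polynomial.coeff_C_mul]
    rw [Polynomial.coeff_C_of_ne_zero (by omega), add_zero]
  obtain ⟨B, hB1, hB2⟩ := maplin th (A n)
  have Bdeg := natDegree_maplin th hB1 (Adeg n le_rfl)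
  let S : Polynomial R := ∑ x ∈ Finset.HasAntidiagonal.antidiagonal n, A x.1 * A x.2
  have Sdeg : S.natDegree ≤ n + 2 := by
    apply Polynomial.natDegree_sum_le_of_forall_le
    intro x hx
    have hx' := Finset.HasAntidiagonal.mem_antidiagonal.1 hx
    have h1 := Adeg x.1 (by omega)
    have h2 := Adeg x.2 (by omega)
    exact Polynomial.natDegree_mul_le.trans (by omega)
  have Stop : S.coeff (n+2) = (q * q) * ∑ x ∈ Finset.HasAntidiagonal.antidiagonal n,
      (p x.1).coeff (x.1 + 1) * (p x.2).coeff (x.2 + 1) := by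
    simp only [S, Polynomial.finsetSum_coeff, Finset.mul_sum]
    apply Finset.sum_congr rfl
    intro x hx
    have hx' := Finset.HasAntidiagonal.mem_antidiagonal.1 hx
    have h1 := Adeg x.1 (by omega)
    have h2 := Adeg x.2 (by omega)
    rw [show n + 2 = (x.1 + 1) + (x.2 + 1) by omega,
      Polynomial.coeff_mul_add_eq_of_natDegree_le h1 h2, Atop, Atop]
    ring
  have Nsum : N ((-1)^n) (∑ x ∈ Finset.HasAntidiagonal.antidiagonal n,
      (p x.1).coeff (x.1 + 1) * (p x.2).coeff (x.2 + 1)) := by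
    apply N.sum
    intro x hx
    have hx' := Finset.HasAntidiagonal.mem_antidiagonal.1 hx
    have := (hp x.1 (by omega)).2.2.1.mul (hp x.2 (by omega)).2.2.1
    rwa [← pow_add, hx'] at this
  have Nsum2 : n ≠ 0 → (∑ x ∈ Finset.HasAntidiagonal.antidiagonal n,
      (p x.1).coeff (x.1 + 1) * (p x.2).coeff (x.2 + 1)).coeff 2 ≠ 0 := by
    intro hn
    apply N.sum_ne (s := (-1)^n) (by simp) _ _ 2 (0, n) (by simp)
    · simp only
      rw [(hp 0 (by omega)).2.2.2.1 rfl, one_mul]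
      exact (hp n le_rfl).2.2.2.2 hn
    · intro x hx
      have hx' := Finset.HasAntidiagonal.mem_antidiagonal.1 hx
      have := (hp x.1 (by omega)).2.2.1.mul (hp x.2 (by omega)).2.2.1
      rwa [← pow_add, hx'] at this
  have Nsum0 : n = 0 → (∑ x ∈ Finset.HasAntidiagonal.antidiagonal n,
      (p x.1).coeff (x.1 + 1) * (p x.2).coeff (x.2 + 1)) = 1 := by
    rintro rfl
    have := (hp 0 le_rfl).2.2.2.1 rfl
    simp only [Finset.Nat.antidiagonal_zero, Finset.sum_singleton]
    rw [this, one_mul]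
  generalize (∑ x ∈ Finset.HasAntidiagonal.antidiagonal n,
      (p x.1).coeff (x.1 + 1) * (p x.2).coeff (x.2 + 1)) = s at *
  let P : Polynomial R := Polynomial.C (cC (2*J+1)) * A n - S - Polynomial.C q * B
  have Ptop : P.coeff (n+2) = - ((q * q) * s) := by
    simp only [P, Polynomial.coeff_sub, Polynomial.coeff_C_mul, Stop]
    rw [Polynomial.coeff_eq_zero_of_natDegree_lt (p := A n), 
      Polynomial.coeff_eq_zero_of_natDegree_lt (p := B)]
    · ring
    · omega
    · have := Adeg n le_rfl; omega
  have hneg : ∀ (f : R) (j : ℤ), (-f).coeff j = - f.coeff j := by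
    intro f j; rw [AddMonoidAlgebra.coeff_neg, Finsupp.neg_apply]
  have hpn : ((-1:ℂ)^n) ≠ 0 := by simp
  refine ⟨P, ?_, ?_, ?_, ?_, ?_⟩
  · have h1 : (Polynomial.C (cC (2*J+1)) * A n).natDegree ≤ n + 2 :=
      (Polynomial.natDegree_C_mul_le _ _).trans ((Adeg n le_rfl).trans (by omega))
    have h2 : (Polynomial.C q * B).natDegree ≤ n + 2 :=
      (Polynomial.natDegree_C_mul_le _ _).trans (Bdeg.trans (by omega))
    exact (Polynomial.natDegree_sub_le_of_le (Polynomial.natDegree_sub_le_of_le h1 Sdeg) h2).trans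
      (by simp)
  · intro k
    simp only [P, S, Polynomial.eval_sub, Polynomial.eval_mul, Polynomial.eval_C,
      Polynomial.eval_finsetSum]
    have hB := hB2 (m k)
    rw [← LaurentPolynomial.C_eq_algebraMap] at hB
    rw [hB, Aev n le_rfl k]
    congr 2
    apply Finset.sum_congr rfl
    intro x hx
    have hx' := Finset.HasAntidiagonal.mem_antidiagonal.1 hx
    rw [Aev x.1 (by omega), Aev x.2 (by omega)]
  · rw [Ptop]
    intro j
    have := (N_q2.mul Nsum) j
    rw [hneg]
    convert this using 1; ring
  · rw [Ptop, hneg, neg_ne_zero]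
    by_cases hn : n = 0
    · rw [Nsum0 hn, mul_one]; exact q2_coeff 2 (by simp)
    · exact N_q2.mul_ne Nsum (by simp) hpn 2 0 (q2_coeff 0 (by simp)) (Nsum2 hn)
  · intro hn
    rw [Ptop, hneg, neg_ne_zero]
    exact N_q2.mul_ne Nsum (by simp) hpn 0 (-2) (q2_coeff (-2) (by simp)) (Nsum2 hn)

lemma rec_a {J m : ℂ} {Y : ℕ → R} {a : ℕ → ℂ} (h : Rec J m Y a) (n : ℕ) :
    a n = CT (cC (2*J+1) * al J Y n
    - (∑ p ∈ Finset.HasAntidiagonal.antidiagonal n, al J Y p.1 * al J Y p.2)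
    - q * th (al J Y n)) := by
  have h1 := congrArg CT (h.eq n)
  rw [CT_C] at h1
  rw [h1]
  have : (2 : R) * Y (n+1) = (2:ℂ) • Y (n+1) := by
    rw [LaurentPolynomial.smul_eq_C_mul, map_ofNat]
  rw [this, add_sub_assoc, add_sub_assoc, map_add, map_smul, h.ct, smul_zero, zero_add]

lemma rec_Y {J m : ℂ} {Y : ℕ → R} {a : ℕ → ℂ} (h : Rec J m Y a) (n : ℕ) :
    Y (n+1) = cC (1/2) * (cC (a n) - (cC (2*J+1) * al J Y n
    - (∑ p ∈ Finset.HasAntidiagonal.antidiagonal n, al J Y p.1 * al J Y p.2)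
    - q * th (al J Y n))) := by
  rw [h.eq n]
  have : cC (1/2) * 2 = 1 := by
    rw [← map_ofNat cC 2, ← map_mul]; norm_num
  linear_combination (- Y (n+1)) * this

lemma good {ι : Type*} (J : ℂ) (m : ι → ℂ) (Y : ι → ℕ → R) (a : ι → ℕ → ℂ)
    (h : ∀ k, Rec J (m k) (Y k) (a k)) (n : ℕ) : ∃ p, Good m Y n p := by
  induction n using Nat.strong_induction_on with
  | _ n ih =>
  rcases n with _ | n
  · refine ⟨Polynomial.X, ?_, ?_, ?_, ?_, ?_⟩
    · simp
    · intro k; rw [(h k).Y0]; simp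
    · simpa using N.one
    · simp
    · simp
  · obtain ⟨P, h1, h2, h3, h4, h5⟩ := psi J m Y n (fun i hi => ih i (by omega))
    obtain ⟨Q, hQ1, hQ2⟩ := maplin ((Algebra.linearMap ℂ R).comp CT) P
    have Qdeg := natDegree_maplin _ hQ1 h1
    have hcoef : ∀ (c : ℂ) (f : R) (j : ℤ), (cC c * f).coeff j = c * f.coeff j := by
      intro c f j
      rw [← LaurentPolynomial.smul_eq_C_mul, AddMonoidAlgebra.coeff_smul]; simp
    have hco : ∀ j : ℤ, j ≠ 0 → ((Polynomial.C (cC (1/2)) * (Q - P)).coeff (n+1+1)).coeff j =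
        -(1/2) * (P.coeff (n+2)).coeff j := by
      intro j hj
      rw [Polynomial.coeff_C_mul, hcoef, Polynomial.coeff_sub, hQ1]
      rw [AddMonoidAlgebra.coeff_sub, Finsupp.sub_apply, LinearMap.comp_apply,
        Algebra.linearMap_apply, ← LaurentPolynomial.C_eq_algebraMap,
        ← LaurentPolynomial.single_eq_C, AddMonoidAlgebra.coeff_single,
        Finsupp.single_eq_of_ne hj]
      ring
    refine ⟨Polynomial.C (cC (1/2)) * (Q - P), ?_, ?_, ?_, ?_, ?_⟩
    · exact (Polynomial.natDegree_C_mul_le _ _).trans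
        ((Polynomial.natDegree_sub_le_of_le Qdeg h1).trans (by simp))
    · intro k
      rw [rec_Y (h k) n, rec_a (h k) n, h2 k]
      have := hQ2 (m k)
      rw [← LaurentPolynomial.C_eq_algebraMap] at this
      simp only [Polynomial.eval_mul, Polynomial.eval_C, Polynomial.eval_sub, this]
      rw [LinearMap.comp_apply, Algebra.linearMap_apply, ← LaurentPolynomial.C_eq_algebraMap]
    · intro j
      by_cases hj : j = 0
      · subst hj
        rw [Polynomial.coeff_C_mul, hcoef, Polynomial.coeff_sub, hQ1]
        rw [AddMonoidAlgebra.coeff_sub, Finsupp.sub_apply, LinearMap.comp_apply,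
          Algebra.linearMap_apply, ← LaurentPolynomial.C_eq_algebraMap,
          ← LaurentPolynomial.single_eq_C, AddMonoidAlgebra.coeff_single,
          Finsupp.single_eq_same]
        have : CT (P.coeff (n+2)) = (P.coeff (n+2)).coeff 0 := rfl
        rw [this]; simp
      · rw [hco j hj]
        have := h3 j
        have h12 : (0:ℂ) ≤ 1/2 := by
          rw [show (1:ℂ)/2 = ((1/2 : ℝ) : ℂ) by norm_num]
          exact_mod_cast (by norm_num : (0:ℝ) ≤ 1/2)
        convert mul_nonneg h12 this using 1
        ring
    · simp
    · intro _
      rw [hco 2 (by norm_num)]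
      exact mul_ne_zero (by norm_num) h4


lemma a_poly {ι : Type*} (J : ℂ) (m : ι → ℂ) (Y : ι → ℕ → R) (a : ι → ℕ → ℂ)
    (h : ∀ k, Rec J (m k) (Y k) (a k)) (n : ℕ) (hn : n ≠ 0) :
    ∃ p : Polynomial ℂ, p.natDegree ≤ n + 2 ∧ p.coeff (n+2) ≠ 0 ∧ ∀ k, a k n = p.eval (m k) := by
  obtain ⟨P, h1, h2, h3, h4, h5⟩ := psi J m Y n (fun i hi => good J m Y a h i)
  obtain ⟨Q, hQ1, hQ2⟩ := maplin CT P
  refine ⟨Q, natDegree_maplin _ hQ1 h1, ?_, ?_⟩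
  · rw [hQ1]; exact h5 hn
  · intro k
    rw [rec_a (h k) n, h2 k]
    exact (hQ2 (m k)).symm

end G
end

section
namespace G
set_option linter.unusedSimpArgs false
set_option maxHeartbeats 2000000

lemma expl (J m : ℂ) (y al Psi : ℕ → ℤ → ℂ) (a : ℕ → ℂ)
    (h0 : ∀ j, al 0 j = if j = 0 then J else if j = 1 then J/2 - m/2 else if j = -1 then J/2 + m/2 else 0)
    (hal : ∀ n j, al (n+1) j = 1/2 * (y (n+1) (j+1) - y (n+1) (j-1)))
    (hsup : ∀ (n : ℕ) (j : ℤ), 2 * (n:ℤ) < |j| → y n j = 0)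
    (hy0 : ∀ n, y (n+1) 0 = 0) (hy : ∀ n (j : ℤ), j ≠ 0 → y (n+1) j = -1/2 * Psi n j)
    (ha : ∀ n, a n = Psi n 0)
    (P0 : ∀ j : ℤ, Psi 0 j = (2*J+1) * al 0 j - (al 0 (-1) * al 0 (j - (-1)) + al 0 0 * al 0 (j - 0) + al 0 1 * al 0 (j - 1)) - 1/2 * (((j:ℂ)+1) * al 0 (j+1) - ((j:ℂ)-1) * al 0 (j-1)))
    (P1 : ∀ j : ℤ, Psi 1 j = (2*J+1) * al 1 j - 2 * (al 0 (-1) * al 1 (j - (-1)) + al 0 0 * al 1 (j - 0) + al 0 1 * al 1 (j - 1)) - 1/2 * (((j:ℂ)+1) * al 1 (j+1) - ((j:ℂ)-1) * al 1 (j-1)))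
    (P2 : ∀ j : ℤ, Psi 2 j = (2*J+1) * al 2 j - 2 * (al 0 (-1) * al 2 (j - (-1)) + al 0 0 * al 2 (j - 0) + al 0 1 * al 2 (j - 1)) - (al 1 (-3) * al 1 (j - (-3)) + al 1 (-2) * al 1 (j - (-2)) + al 1 (-1) * al 1 (j - (-1)) + al 1 0 * al 1 (j - 0) + al 1 1 * al 1 (j - 1) + al 1 2 * al 1 (j - 2) + al 1 3 * al 1 (j - 3)) - 1/2 * (((j:ℂ)+1) * al 2 (j+1) - ((j:ℂ)-1) * al 2 (j-1)))
    (P3 : ∀ j : ℤ, Psi 3 j = (2*J+1) * al 3 j - 2 * (al 0 (-1) * al 3 (j - (-1)) + al 0 0 * al 3 (j - 0) + al 0 1 * al 3 (j - 1)) - 2 * (al 1 (-3) * al 2 (j - (-3)) + al 1 (-2) * al 2 (j - (-2)) + al 1 (-1) * al 2 (j - (-1)) + al 1 0 * al 2 (j - 0) + al 1 1 * al 2 (j - 1) + al 1 2 * al 2 (j - 2) + al 1 3 * al 2 (j - 3)) - 1/2 * (((j:ℂ)+1) * al 3 (j+1) - ((j:ℂ)-1) * al 3 (j-1)))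
    (P4 : ∀ j : ℤ, Psi 4 j = (2*J+1) * al 4 j - 2 * (al 0 (-1) * al 4 (j - (-1)) + al 0 0 * al 4 (j - 0) + al 0 1 * al 4 (j - 1)) - 2 * (al 1 (-3) * al 3 (j - (-3)) + al 1 (-2) * al 3 (j - (-2)) + al 1 (-1) * al 3 (j - (-1)) + al 1 0 * al 3 (j - 0) + al 1 1 * al 3 (j - 1) + al 1 2 * al 3 (j - 2) + al 1 3 * al 3 (j - 3)) - (al 2 (-5) * al 2 (j - (-5)) + al 2 (-4) * al 2 (j - (-4)) + al 2 (-3) * al 2 (j - (-3)) + al 2 (-2) * al 2 (j - (-2)) + al 2 (-1) * al 2 (j - (-1)) + al 2 0 * al 2 (j - 0) + al 2 1 * al 2 (j - 1) + al 2 2 * al 2 (j - 2) + al 2 3 * al 2 (j - 3) + al 2 4 * al 2 (j - 4) + al 2 5 * al 2 (j - 5)) - 1/2 * (((j:ℂ)+1) * al 4 (j+1) - ((j:ℂ)-1) * al 4 (j-1)))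
    : a 0 = (1/2)*m^2 + (1/2)*J^2 + (1/2)*J^1 ∧ a 1 = (-1/8)*m^3 + (1/8)*m*J^2 + (1/8)*m*J + (3/16)*m^1 ∧ a 2 = (5/64)*m^4 + (-3/32)*m^2*J^2 + (-3/32)*m^2*J + (-17/64)*m^2 + (1/64)*J^4 + (1/32)*J^3 + (7/64)*J^2 + (3/32)*J^1 ∧ a 3 = (-33/512)*m^5 + (23/256)*m^3*J^2 + (23/256)*m^3*J + (205/512)*m^3 + (-13/512)*m*J^4 + (-13/256)*m*J^3 + (-133/512)*m*J^2 + (-15/64)*m*J + (63/1024)*m^1 ∧ a 4 = (63/1024)*m^6 + (-25/256)*m^4*J^2 + (-25/256)*m^4*J + (-315/512)*m^4 + (39/1024)*m^2*J^4 + (39/512)*m^2*J^3 + (541/1024)*m^2*J^2 + (251/512)*m^2*J + (-297/1024)*m^2 + (-1/512)*J^6 + (-3/512)*J^5 + (-45/1024)*J^4 + (-5/64)*J^3 + (15/1024)*J^2 + (27/512)*J^1 := by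
  have al0_m3 : al 0 (-3) = 0 := by
    rw [h0]; norm_num <;> ring
  have al0_m2 : al 0 (-2) = 0 := by
    rw [h0]; norm_num <;> ring
  have al0_m1 : al 0 (-1) = (1/2)*m + (1/2)*J^1 := by
    rw [h0]; norm_num <;> ring
  have al0_p0 : al 0 0 = (1)*J^1 := by
    rw [h0]; norm_num <;> ring
  have al0_p1 : al 0 1 = (-1/2)*m + (1/2)*J^1 := by
    rw [h0]; norm_num <;> ring
  have al0_p2 : al 0 2 = 0 := by
    rw [h0]; norm_num <;> ring
  have al0_p3 : al 0 3 = 0 := by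
    rw [h0]; norm_num <;> ring
  have y1_m8 : y 1 (-8) = 0 := by
    exact hsup 1 (-8) (by norm_num [abs_of_nonneg, abs_of_neg])
  have y1_m7 : y 1 (-7) = 0 := by
    exact hsup 1 (-7) (by norm_num [abs_of_nonneg, abs_of_neg])
  have y1_m6 : y 1 (-6) = 0 := by
    exact hsup 1 (-6) (by norm_num [abs_of_nonneg, abs_of_neg])
  have y1_m5 : y 1 (-5) = 0 := by
    exact hsup 1 (-5) (by norm_num [abs_of_nonneg, abs_of_neg])
  have y1_m4 : y 1 (-4) = 0 := by
    exact hsup 1 (-4) (by norm_num [abs_of_nonneg, abs_of_neg])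
  have y1_m3 : y 1 (-3) = 0 := by
    exact hsup 1 (-3) (by norm_num [abs_of_nonneg, abs_of_neg])
  have y1_m2 : y 1 (-2) = (1/8)*m^2 + (1/4)*m*J + (-1/8)*m + (1/8)*J^2 + (-1/8)*J^1 := by
    rw [hy 0 (-2) (by norm_num), P0]; simp only [al0_m3, al0_m2, al0_m1, al0_p0, al0_p1, Int.reduceAdd, Int.reduceSub, Int.reduceNeg]; ring
  have y1_m1 : y 1 (-1) = (-1/4)*m + (-1/4)*J^1 := by
    rw [hy 0 (-1) (by norm_num), P0]; simp only [al0_m2, al0_m1, al0_p0, al0_p1, Int.reduceAdd, Int.reduceSub, Int.reduceNeg]; ring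
  have y1_p0 : y 1 0 = 0 := by
    exact hy0 0
  have y1_p1 : y 1 1 = (1/4)*m + (-1/4)*J^1 := by
    rw [hy 0 1 (by norm_num), P0]; simp only [al0_m1, al0_p0, al0_p1, al0_p2, Int.reduceAdd, Int.reduceSub, Int.reduceNeg]; ring
  have y1_p2 : y 1 2 = (1/8)*m^2 + (-1/4)*m*J + (1/8)*m + (1/8)*J^2 + (-1/8)*J^1 := by
    rw [hy 0 2 (by norm_num), P0]; simp only [al0_m1, al0_p0, al0_p1, al0_p2, al0_p3, Int.reduceAdd, Int.reduceSub, Int.reduceNeg]; ring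
  have y1_p3 : y 1 3 = 0 := by
    exact hsup 1 3 (by norm_num [abs_of_nonneg, abs_of_neg])
  have y1_p4 : y 1 4 = 0 := by
    exact hsup 1 4 (by norm_num [abs_of_nonneg, abs_of_neg])
  have y1_p5 : y 1 5 = 0 := by
    exact hsup 1 5 (by norm_num [abs_of_nonneg, abs_of_neg])
  have y1_p6 : y 1 6 = 0 := by
    exact hsup 1 6 (by norm_num [abs_of_nonneg, abs_of_neg])
  have y1_p7 : y 1 7 = 0 := by
    exact hsup 1 7 (by norm_num [abs_of_nonneg, abs_of_neg])
  have y1_p8 : y 1 8 = 0 := by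
    exact hsup 1 8 (by norm_num [abs_of_nonneg, abs_of_neg])
  have al1_m7 : al 1 (-7) = 0 := by
    rw [hal 0 (-7)]; simp only [y1_m8, y1_m6, Int.reduceAdd, Int.reduceSub, Int.reduceNeg]; try ring
  have al1_m6 : al 1 (-6) = 0 := by
    rw [hal 0 (-6)]; simp only [y1_m7, y1_m5, Int.reduceAdd, Int.reduceSub, Int.reduceNeg]; try ring
  have al1_m5 : al 1 (-5) = 0 := by
    rw [hal 0 (-5)]; simp only [y1_m6, y1_m4, Int.reduceAdd, Int.reduceSub, Int.reduceNeg]; try ring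
  have al1_m4 : al 1 (-4) = 0 := by
    rw [hal 0 (-4)]; simp only [y1_m5, y1_m3, Int.reduceAdd, Int.reduceSub, Int.reduceNeg]; try ring
  have al1_m3 : al 1 (-3) = (1/16)*m^2 + (1/8)*m*J + (-1/16)*m + (1/16)*J^2 + (-1/16)*J^1 := by
    rw [hal 0 (-3)]; simp only [y1_m4, y1_m2, Int.reduceAdd, Int.reduceSub, Int.reduceNeg]; try ring
  have al1_m2 : al 1 (-2) = (-1/8)*m + (-1/8)*J^1 := by
    rw [hal 0 (-2)]; simp only [y1_m3, y1_m1, Int.reduceAdd, Int.reduceSub, Int.reduceNeg]; try ring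
  have al1_m1 : al 1 (-1) = (-1/16)*m^2 + (-1/8)*m*J + (1/16)*m + (-1/16)*J^2 + (1/16)*J^1 := by
    rw [hal 0 (-1)]; simp only [y1_m2, y1_p0, Int.reduceAdd, Int.reduceSub, Int.reduceNeg]; try ring
  have al1_p0 : al 1 0 = (1/4)*m^1 := by
    rw [hal 0 0]; simp only [y1_m1, y1_p1, Int.reduceAdd, Int.reduceSub, Int.reduceNeg]; try ring
  have al1_p1 : al 1 1 = (1/16)*m^2 + (-1/8)*m*J + (1/16)*m + (1/16)*J^2 + (-1/16)*J^1 := by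
    rw [hal 0 1]; simp only [y1_p0, y1_p2, Int.reduceAdd, Int.reduceSub, Int.reduceNeg]; try ring
  have al1_p2 : al 1 2 = (-1/8)*m + (1/8)*J^1 := by
    rw [hal 0 2]; simp only [y1_p1, y1_p3, Int.reduceAdd, Int.reduceSub, Int.reduceNeg]; try ring
  have al1_p3 : al 1 3 = (-1/16)*m^2 + (1/8)*m*J + (-1/16)*m + (-1/16)*J^2 + (1/16)*J^1 := by
    rw [hal 0 3]; simp only [y1_p2, y1_p4, Int.reduceAdd, Int.reduceSub, Int.reduceNeg]; try ring
  have al1_p4 : al 1 4 = 0 := by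
    rw [hal 0 4]; simp only [y1_p3, y1_p5, Int.reduceAdd, Int.reduceSub, Int.reduceNeg]; try ring
  have al1_p5 : al 1 5 = 0 := by
    rw [hal 0 5]; simp only [y1_p4, y1_p6, Int.reduceAdd, Int.reduceSub, Int.reduceNeg]; try ring
  have al1_p6 : al 1 6 = 0 := by
    rw [hal 0 6]; simp only [y1_p5, y1_p7, Int.reduceAdd, Int.reduceSub, Int.reduceNeg]; try ring
  have al1_p7 : al 1 7 = 0 := by
    rw [hal 0 7]; simp only [y1_p6, y1_p8, Int.reduceAdd, Int.reduceSub, Int.reduceNeg]; try ring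
  have y2_m8 : y 2 (-8) = 0 := by
    exact hsup 2 (-8) (by norm_num [abs_of_nonneg, abs_of_neg])
  have y2_m7 : y 2 (-7) = 0 := by
    exact hsup 2 (-7) (by norm_num [abs_of_nonneg, abs_of_neg])
  have y2_m6 : y 2 (-6) = 0 := by
    exact hsup 2 (-6) (by norm_num [abs_of_nonneg, abs_of_neg])
  have y2_m5 : y 2 (-5) = 0 := by
    exact hsup 2 (-5) (by norm_num [abs_of_nonneg, abs_of_neg])
  have y2_m4 : y 2 (-4) = (1/32)*m^3 + (3/32)*m^2*J + (-5/64)*m^2 + (3/32)*m*J^2 + (-5/32)*m*J + (3/64)*m + (1/32)*J^3 + (-5/64)*J^2 + (3/64)*J^1 := by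
    rw [hy 1 (-4) (by norm_num), P1]; simp only [al0_m1, al0_p0, al0_p1, al1_m5, al1_m4, al1_m3, Int.reduceAdd, Int.reduceSub, Int.reduceNeg]; ring
  have y2_m3 : y 2 (-3) = (-3/32)*m^2 + (-3/16)*m*J + (3/32)*m + (-3/32)*J^2 + (3/32)*J^1 := by
    rw [hy 1 (-3) (by norm_num), P1]; simp only [al0_m1, al0_p0, al0_p1, al1_m4, al1_m3, al1_m2, Int.reduceAdd, Int.reduceSub, Int.reduceNeg]; ring
  have y2_m2 : y 2 (-2) = (-1/16)*m^3 + (-1/8)*m^2*J + (1/8)*m^2 + (-1/16)*m*J^2 + (3/16)*m*J + (1/16)*J^2 := by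
    rw [hy 1 (-2) (by norm_num), P1]; simp only [al0_m1, al0_p0, al0_p1, al1_m3, al1_m2, al1_m1, Int.reduceAdd, Int.reduceSub, Int.reduceNeg]; ring
  have y2_m1 : y 2 (-1) = (7/32)*m^2 + (3/16)*m*J + (-3/32)*m + (-1/32)*J^2 + (-3/32)*J^1 := by
    rw [hy 1 (-1) (by norm_num), P1]; simp only [al0_m1, al0_p0, al0_p1, al1_m2, al1_m1, al1_p0, Int.reduceAdd, Int.reduceSub, Int.reduceNeg]; ring
  have y2_p0 : y 2 0 = 0 := by
    exact hy0 1
  have y2_p1 : y 2 1 = (-7/32)*m^2 + (3/16)*m*J + (-3/32)*m + (1/32)*J^2 + (3/32)*J^1 := by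
    rw [hy 1 1 (by norm_num), P1]; simp only [al0_m1, al0_p0, al0_p1, al1_p0, al1_p1, al1_p2, Int.reduceAdd, Int.reduceSub, Int.reduceNeg]; ring
  have y2_p2 : y 2 2 = (-1/16)*m^3 + (1/8)*m^2*J + (-1/8)*m^2 + (-1/16)*m*J^2 + (3/16)*m*J + (-1/16)*J^2 := by
    rw [hy 1 2 (by norm_num), P1]; simp only [al0_m1, al0_p0, al0_p1, al1_p1, al1_p2, al1_p3, Int.reduceAdd, Int.reduceSub, Int.reduceNeg]; ring
  have y2_p3 : y 2 3 = (3/32)*m^2 + (-3/16)*m*J + (3/32)*m + (3/32)*J^2 + (-3/32)*J^1 := by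
    rw [hy 1 3 (by norm_num), P1]; simp only [al0_m1, al0_p0, al0_p1, al1_p2, al1_p3, al1_p4, Int.reduceAdd, Int.reduceSub, Int.reduceNeg]; ring
  have y2_p4 : y 2 4 = (1/32)*m^3 + (-3/32)*m^2*J + (5/64)*m^2 + (3/32)*m*J^2 + (-5/32)*m*J + (3/64)*m + (-1/32)*J^3 + (5/64)*J^2 + (-3/64)*J^1 := by
    rw [hy 1 4 (by norm_num), P1]; simp only [al0_m1, al0_p0, al0_p1, al1_p3, al1_p4, al1_p5, Int.reduceAdd, Int.reduceSub, Int.reduceNeg]; ring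
  have y2_p5 : y 2 5 = 0 := by
    exact hsup 2 5 (by norm_num [abs_of_nonneg, abs_of_neg])
  have y2_p6 : y 2 6 = 0 := by
    exact hsup 2 6 (by norm_num [abs_of_nonneg, abs_of_neg])
  have y2_p7 : y 2 7 = 0 := by
    exact hsup 2 7 (by norm_num [abs_of_nonneg, abs_of_neg])
  have y2_p8 : y 2 8 = 0 := by
    exact hsup 2 8 (by norm_num [abs_of_nonneg, abs_of_neg])
  have al2_m7 : al 2 (-7) = 0 := by
    rw [hal 1 (-7)]; simp only [y2_m8, y2_m6, Int.reduceAdd, Int.reduceSub, Int.reduceNeg]; try ring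
  have al2_m6 : al 2 (-6) = 0 := by
    rw [hal 1 (-6)]; simp only [y2_m7, y2_m5, Int.reduceAdd, Int.reduceSub, Int.reduceNeg]; try ring
  have al2_m5 : al 2 (-5) = (1/64)*m^3 + (3/64)*m^2*J + (-5/128)*m^2 + (3/64)*m*J^2 + (-5/64)*m*J + (3/128)*m + (1/64)*J^3 + (-5/128)*J^2 + (3/128)*J^1 := by
    rw [hal 1 (-5)]; simp only [y2_m6, y2_m4, Int.reduceAdd, Int.reduceSub, Int.reduceNeg]; try ring
  have al2_m4 : al 2 (-4) = (-3/64)*m^2 + (-3/32)*m*J + (3/64)*m + (-3/64)*J^2 + (3/64)*J^1 := by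
    rw [hal 1 (-4)]; simp only [y2_m5, y2_m3, Int.reduceAdd, Int.reduceSub, Int.reduceNeg]; try ring
  have al2_m3 : al 2 (-3) = (-3/64)*m^3 + (-7/64)*m^2*J + (13/128)*m^2 + (-5/64)*m*J^2 + (11/64)*m*J + (-3/128)*m + (-1/64)*J^3 + (9/128)*J^2 + (-3/128)*J^1 := by
    rw [hal 1 (-3)]; simp only [y2_m4, y2_m2, Int.reduceAdd, Int.reduceSub, Int.reduceNeg]; try ring
  have al2_m2 : al 2 (-2) = (5/32)*m^2 + (3/16)*m*J + (-3/32)*m + (1/32)*J^2 + (-3/32)*J^1 := by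
    rw [hal 1 (-2)]; simp only [y2_m3, y2_m1, Int.reduceAdd, Int.reduceSub, Int.reduceNeg]; try ring
  have al2_m1 : al 2 (-1) = (1/32)*m^3 + (1/16)*m^2*J + (-1/16)*m^2 + (1/32)*m*J^2 + (-3/32)*m*J + (-1/32)*J^2 := by
    rw [hal 1 (-1)]; simp only [y2_m2, y2_p0, Int.reduceAdd, Int.reduceSub, Int.reduceNeg]; try ring
  have al2_p0 : al 2 0 = (-7/32)*m^2 + (1/32)*J^2 + (3/32)*J^1 := by
    rw [hal 1 0]; simp only [y2_m1, y2_p1, Int.reduceAdd, Int.reduceSub, Int.reduceNeg]; try ring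
  have al2_p1 : al 2 1 = (-1/32)*m^3 + (1/16)*m^2*J + (-1/16)*m^2 + (-1/32)*m*J^2 + (3/32)*m*J + (-1/32)*J^2 := by
    rw [hal 1 1]; simp only [y2_p0, y2_p2, Int.reduceAdd, Int.reduceSub, Int.reduceNeg]; try ring
  have al2_p2 : al 2 2 = (5/32)*m^2 + (-3/16)*m*J + (3/32)*m + (1/32)*J^2 + (-3/32)*J^1 := by
    rw [hal 1 2]; simp only [y2_p1, y2_p3, Int.reduceAdd, Int.reduceSub, Int.reduceNeg]; try ring
  have al2_p3 : al 2 3 = (3/64)*m^3 + (-7/64)*m^2*J + (13/128)*m^2 + (5/64)*m*J^2 + (-11/64)*m*J + (3/128)*m + (-1/64)*J^3 + (9/128)*J^2 + (-3/128)*J^1 := by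
    rw [hal 1 3]; simp only [y2_p2, y2_p4, Int.reduceAdd, Int.reduceSub, Int.reduceNeg]; try ring
  have al2_p4 : al 2 4 = (-3/64)*m^2 + (3/32)*m*J + (-3/64)*m + (-3/64)*J^2 + (3/64)*J^1 := by
    rw [hal 1 4]; simp only [y2_p3, y2_p5, Int.reduceAdd, Int.reduceSub, Int.reduceNeg]; try ring
  have al2_p5 : al 2 5 = (-1/64)*m^3 + (3/64)*m^2*J + (-5/128)*m^2 + (-3/64)*m*J^2 + (5/64)*m*J + (-3/128)*m + (1/64)*J^3 + (-5/128)*J^2 + (3/128)*J^1 := by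
    rw [hal 1 5]; simp only [y2_p4, y2_p6, Int.reduceAdd, Int.reduceSub, Int.reduceNeg]; try ring
  have al2_p6 : al 2 6 = 0 := by
    rw [hal 1 6]; simp only [y2_p5, y2_p7, Int.reduceAdd, Int.reduceSub, Int.reduceNeg]; try ring
  have al2_p7 : al 2 7 = 0 := by
    rw [hal 1 7]; simp only [y2_p6, y2_p8, Int.reduceAdd, Int.reduceSub, Int.reduceNeg]; try ring
  have y3_m4 : y 3 (-4) = (-9/256)*m^4 + (-7/64)*m^3*J + (17/128)*m^3 + (-15/128)*m^2*J^2 + (41/128)*m^2*J + (-31/256)*m^2 + (-3/64)*m*J^3 + (31/128)*m*J^2 + (-25/128)*m*J + (3/128)*m + (-1/256)*J^4 + (7/128)*J^3 + (-19/256)*J^2 + (3/128)*J^1 := by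
    rw [hy 2 (-4) (by norm_num), P2]; simp only [al0_m1, al0_p0, al0_p1, al1_m7, al1_m6, al1_m5, al1_m4, al1_m3, al1_m2, al1_m1, al1_p0, al1_p1, al1_p2, al1_p3, al2_m5, al2_m4, al2_m3, Int.reduceAdd, Int.reduceSub, Int.reduceNeg]; ring
  have y3_m3 : y 3 (-3) = (19/128)*m^3 + (39/128)*m^2*J + (-69/256)*m^2 + (21/128)*m*J^2 + (-51/128)*m*J + (27/256)*m + (1/128)*J^3 + (-33/256)*J^2 + (27/256)*J^1 := by
    rw [hy 2 (-3) (by norm_num), P2]; simp only [al0_m1, al0_p0, al0_p1, al1_m6, al1_m5, al1_m4, al1_m3, al1_m2, al1_m1, al1_p0, al1_p1, al1_p2, al1_p3, al2_m4, al2_m3, al2_m2, Int.reduceAdd, Int.reduceSub, Int.reduceNeg]; ring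
  have y3_m2 : y 3 (-2) = (23/512)*m^4 + (11/128)*m^3*J + (-33/256)*m^3 + (9/256)*m^2*J^2 + (-55/256)*m^2*J + (-1/128)*m^2 + (-1/128)*m*J^3 + (-23/256)*m*J^2 + (1/32)*m*J + (15/512)*m + (-1/512)*J^4 + (-1/256)*J^3 + (5/128)*J^2 + (15/512)*J^1 := by
    rw [hy 2 (-2) (by norm_num), P2]; simp only [al0_m1, al0_p0, al0_p1, al1_m5, al1_m4, al1_m3, al1_m2, al1_m1, al1_p0, al1_p1, al1_p2, al1_p3, al2_m3, al2_m2, al2_m1, Int.reduceAdd, Int.reduceSub, Int.reduceNeg]; ring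
  have y3_m1 : y 3 (-1) = (-15/64)*m^3 + (-3/16)*m^2*J + (11/64)*m^2 + (5/64)*m*J^2 + (13/64)*m*J + (-3/64)*m + (1/32)*J^3 + (1/32)*J^2 + (-3/64)*J^1 := by
    rw [hy 2 (-1) (by norm_num), P2]; simp only [al0_m1, al0_p0, al0_p1, al1_m4, al1_m3, al1_m2, al1_m1, al1_p0, al1_p1, al1_p2, al1_p3, al2_m2, al2_m1, al2_p0, Int.reduceAdd, Int.reduceSub, Int.reduceNeg]; ring
  have y3_p0 : y 3 0 = 0 := by
    exact hy0 2
  have y3_p1 : y 3 1 = (15/64)*m^3 + (-3/16)*m^2*J + (11/64)*m^2 + (-5/64)*m*J^2 + (-13/64)*m*J + (3/64)*m + (1/32)*J^3 + (1/32)*J^2 + (-3/64)*J^1 := by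
    rw [hy 2 1 (by norm_num), P2]; simp only [al0_m1, al0_p0, al0_p1, al1_m3, al1_m2, al1_m1, al1_p0, al1_p1, al1_p2, al1_p3, al1_p4, al2_p0, al2_p1, al2_p2, Int.reduceAdd, Int.reduceSub, Int.reduceNeg]; ring
  have y3_p2 : y 3 2 = (23/512)*m^4 + (-11/128)*m^3*J + (33/256)*m^3 + (9/256)*m^2*J^2 + (-55/256)*m^2*J + (-1/128)*m^2 + (1/128)*m*J^3 + (23/256)*m*J^2 + (-1/32)*m*J + (-15/512)*m + (-1/512)*J^4 + (-1/256)*J^3 + (5/128)*J^2 + (15/512)*J^1 := by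
    rw [hy 2 2 (by norm_num), P2]; simp only [al0_m1, al0_p0, al0_p1, al1_m3, al1_m2, al1_m1, al1_p0, al1_p1, al1_p2, al1_p3, al1_p4, al1_p5, al2_p1, al2_p2, al2_p3, Int.reduceAdd, Int.reduceSub, Int.reduceNeg]; ring
  have y3_p3 : y 3 3 = (-19/128)*m^3 + (39/128)*m^2*J + (-69/256)*m^2 + (-21/128)*m*J^2 + (51/128)*m*J + (-27/256)*m + (1/128)*J^3 + (-33/256)*J^2 + (27/256)*J^1 := by
    rw [hy 2 3 (by norm_num), P2]; simp only [al0_m1, al0_p0, al0_p1, al1_m3, al1_m2, al1_m1, al1_p0, al1_p1, al1_p2, al1_p3, al1_p4, al1_p5, al1_p6, al2_p2, al2_p3, al2_p4, Int.reduceAdd, Int.reduceSub, Int.reduceNeg]; ring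
  have y3_p4 : y 3 4 = (-9/256)*m^4 + (7/64)*m^3*J + (-17/128)*m^3 + (-15/128)*m^2*J^2 + (41/128)*m^2*J + (-31/256)*m^2 + (3/64)*m*J^3 + (-31/128)*m*J^2 + (25/128)*m*J + (-3/128)*m + (-1/256)*J^4 + (7/128)*J^3 + (-19/256)*J^2 + (3/128)*J^1 := by
    rw [hy 2 4 (by norm_num), P2]; simp only [al0_m1, al0_p0, al0_p1, al1_m3, al1_m2, al1_m1, al1_p0, al1_p1, al1_p2, al1_p3, al1_p4, al1_p5, al1_p6, al1_p7, al2_p3, al2_p4, al2_p5, Int.reduceAdd, Int.reduceSub, Int.reduceNeg]; ring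
  have al3_m3 : al 3 (-3) = (41/1024)*m^4 + (25/256)*m^3*J + (-67/512)*m^3 + (39/512)*m^2*J^2 + (-137/512)*m^2*J + (29/512)*m^2 + (5/256)*m*J^3 + (-85/512)*m*J^2 + (29/256)*m*J + (3/1024)*m + (1/1024)*J^4 + (-15/512)*J^3 + (29/512)*J^2 + (3/1024)*J^1 := by
    rw [hal 2 (-3)]; simp only [y3_m4, y3_m2, Int.reduceAdd, Int.reduceSub, Int.reduceNeg]; try ring
  have al3_m2 : al 3 (-2) = (-49/256)*m^3 + (-63/256)*m^2*J + (113/512)*m^2 + (-11/256)*m*J^2 + (77/256)*m*J + (-39/512)*m + (3/256)*J^3 + (41/512)*J^2 + (-39/512)*J^1 := by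
    rw [hal 2 (-2)]; simp only [y3_m3, y3_m1, Int.reduceAdd, Int.reduceSub, Int.reduceNeg]; try ring
  have al3_m1 : al 3 (-1) = (-23/1024)*m^4 + (-11/256)*m^3*J + (33/512)*m^3 + (-9/512)*m^2*J^2 + (55/512)*m^2*J + (1/256)*m^2 + (1/256)*m*J^3 + (23/512)*m*J^2 + (-1/64)*m*J + (-15/1024)*m + (1/1024)*J^4 + (1/512)*J^3 + (-5/256)*J^2 + (-15/1024)*J^1 := by
    rw [hal 2 (-1)]; simp only [y3_m2, y3_p0, Int.reduceAdd, Int.reduceSub, Int.reduceNeg]; try ring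
  have al3_p0 : al 3 0 = (15/64)*m^3 + (-5/64)*m*J^2 + (-13/64)*m*J + (3/64)*m^1 := by
    rw [hal 2 0]; simp only [y3_m1, y3_p1, Int.reduceAdd, Int.reduceSub, Int.reduceNeg]; try ring
  have al3_p1 : al 3 1 = (23/1024)*m^4 + (-11/256)*m^3*J + (33/512)*m^3 + (9/512)*m^2*J^2 + (-55/512)*m^2*J + (-1/256)*m^2 + (1/256)*m*J^3 + (23/512)*m*J^2 + (-1/64)*m*J + (-15/1024)*m + (-1/1024)*J^4 + (-1/512)*J^3 + (5/256)*J^2 + (15/1024)*J^1 := by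
    rw [hal 2 1]; simp only [y3_p0, y3_p2, Int.reduceAdd, Int.reduceSub, Int.reduceNeg]; try ring
  have al3_p2 : al 3 2 = (-49/256)*m^3 + (63/256)*m^2*J + (-113/512)*m^2 + (-11/256)*m*J^2 + (77/256)*m*J + (-39/512)*m + (-3/256)*J^3 + (-41/512)*J^2 + (39/512)*J^1 := by
    rw [hal 2 2]; simp only [y3_p1, y3_p3, Int.reduceAdd, Int.reduceSub, Int.reduceNeg]; try ring
  have al3_p3 : al 3 3 = (-41/1024)*m^4 + (25/256)*m^3*J + (-67/512)*m^3 + (-39/512)*m^2*J^2 + (137/512)*m^2*J + (-29/512)*m^2 + (5/256)*m*J^3 + (-85/512)*m*J^2 + (29/256)*m*J + (3/1024)*m + (-1/1024)*J^4 + (15/512)*J^3 + (-29/512)*J^2 + (-3/1024)*J^1 := by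
    rw [hal 2 3]; simp only [y3_p2, y3_p4, Int.reduceAdd, Int.reduceSub, Int.reduceNeg]; try ring
  have y4_m2 : y 4 (-2) = (-5/128)*m^5 + (-73/1024)*m^4*J + (291/2048)*m^4 + (-5/256)*m^3*J^2 + (63/256)*m^3*J + (17/512)*m^3 + (9/512)*m^2*J^3 + (103/1024)*m^2*J^2 + (-31/512)*m^2*J + (-225/2048)*m^2 + (1/256)*m*J^4 + (-1/128)*m*J^3 + (-63/512)*m*J^2 + (-57/512)*m*J + (45/1024)*m + (-1/1024)*J^5 + (-9/2048)*J^4 + (-15/512)*J^3 + (-3/2048)*J^2 + (45/1024)*J^1 := by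
    rw [hy 3 (-2) (by norm_num), P3]; simp only [al0_m1, al0_p0, al0_p1, al1_m3, al1_m2, al1_m1, al1_p0, al1_p1, al1_p2, al1_p3, al2_m5, al2_m4, al2_m3, al2_m2, al2_m1, al2_p0, al2_p1, al3_m3, al3_m2, al3_m1, Int.reduceAdd, Int.reduceSub, Int.reduceNeg]; ring
  have y4_m1 : y 4 (-1) = (569/2048)*m^4 + (109/512)*m^3*J + (-279/1024)*m^3 + (-153/1024)*m^2*J^2 + (-361/1024)*m^2*J + (81/512)*m^2 + (-39/512)*m*J^3 + (-49/1024)*m*J^2 + (3/16)*m*J + (-63/2048)*m + (17/2048)*J^4 + (33/1024)*J^3 + (15/512)*J^2 + (-63/2048)*J^1 := by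
    rw [hy 3 (-1) (by norm_num), P3]; simp only [al0_m1, al0_p0, al0_p1, al1_m3, al1_m2, al1_m1, al1_p0, al1_p1, al1_p2, al1_p3, al2_m4, al2_m3, al2_m2, al2_m1, al2_p0, al2_p1, al2_p2, al3_m2, al3_m1, al3_p0, Int.reduceAdd, Int.reduceSub, Int.reduceNeg]; ring
  have y4_p0 : y 4 0 = 0 := by
    exact hy0 3
  have y4_p1 : y 4 1 = (-569/2048)*m^4 + (109/512)*m^3*J + (-279/1024)*m^3 + (153/1024)*m^2*J^2 + (361/1024)*m^2*J + (-81/512)*m^2 + (-39/512)*m*J^3 + (-49/1024)*m*J^2 + (3/16)*m*J + (-63/2048)*m + (-17/2048)*J^4 + (-33/1024)*J^3 + (-15/512)*J^2 + (63/2048)*J^1 := by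
    rw [hy 3 1 (by norm_num), P3]; simp only [al0_m1, al0_p0, al0_p1, al1_m3, al1_m2, al1_m1, al1_p0, al1_p1, al1_p2, al1_p3, al2_m2, al2_m1, al2_p0, al2_p1, al2_p2, al2_p3, al2_p4, al3_p0, al3_p1, al3_p2, Int.reduceAdd, Int.reduceSub, Int.reduceNeg]; ring
  have y4_p2 : y 4 2 = (-5/128)*m^5 + (73/1024)*m^4*J + (-291/2048)*m^4 + (-5/256)*m^3*J^2 + (63/256)*m^3*J + (17/512)*m^3 + (-9/512)*m^2*J^3 + (-103/1024)*m^2*J^2 + (31/512)*m^2*J + (225/2048)*m^2 + (1/256)*m*J^4 + (-1/128)*m*J^3 + (-63/512)*m*J^2 + (-57/512)*m*J + (45/1024)*m + (1/1024)*J^5 + (9/2048)*J^4 + (15/512)*J^3 + (3/2048)*J^2 + (-45/1024)*J^1 := by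
    rw [hy 3 2 (by norm_num), P3]; simp only [al0_m1, al0_p0, al0_p1, al1_m3, al1_m2, al1_m1, al1_p0, al1_p1, al1_p2, al1_p3, al2_m1, al2_p0, al2_p1, al2_p2, al2_p3, al2_p4, al2_p5, al3_p1, al3_p2, al3_p3, Int.reduceAdd, Int.reduceSub, Int.reduceNeg]; ring
  have al4_m1 : al 4 (-1) = (5/256)*m^5 + (73/2048)*m^4*J + (-291/4096)*m^4 + (5/512)*m^3*J^2 + (-63/512)*m^3*J + (-17/1024)*m^3 + (-9/1024)*m^2*J^3 + (-103/2048)*m^2*J^2 + (31/1024)*m^2*J + (225/4096)*m^2 + (-1/512)*m*J^4 + (1/256)*m*J^3 + (63/1024)*m*J^2 + (57/1024)*m*J + (-45/2048)*m + (1/2048)*J^5 + (9/4096)*J^4 + (15/1024)*J^3 + (3/4096)*J^2 + (-45/2048)*J^1 := by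
    rw [hal 3 (-1)]; simp only [y4_m2, y4_p0, Int.reduceAdd, Int.reduceSub, Int.reduceNeg]; try ring
  have al4_p0 : al 4 0 = (-569/2048)*m^4 + (153/1024)*m^2*J^2 + (361/1024)*m^2*J + (-81/512)*m^2 + (-17/2048)*J^4 + (-33/1024)*J^3 + (-15/512)*J^2 + (63/2048)*J^1 := by
    rw [hal 3 0]; simp only [y4_m1, y4_p1, Int.reduceAdd, Int.reduceSub, Int.reduceNeg]; try ring
  have al4_p1 : al 4 1 = (-5/256)*m^5 + (73/2048)*m^4*J + (-291/4096)*m^4 + (-5/512)*m^3*J^2 + (63/512)*m^3*J + (17/1024)*m^3 + (-9/1024)*m^2*J^3 + (-103/2048)*m^2*J^2 + (31/1024)*m^2*J + (225/4096)*m^2 + (1/512)*m*J^4 + (-1/256)*m*J^3 + (-63/1024)*m*J^2 + (-57/1024)*m*J + (45/2048)*m + (1/2048)*J^5 + (9/4096)*J^4 + (15/1024)*J^3 + (3/4096)*J^2 + (-45/2048)*J^1 := by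
    rw [hal 3 1]; simp only [y4_p0, y4_p2, Int.reduceAdd, Int.reduceSub, Int.reduceNeg]; try ring
  refine ⟨?_, ?_, ?_, ?_, ?_⟩
  · rw [ha, P0]; simp only [al0_m1, al0_p0, al0_p1, Int.reduceAdd, Int.reduceSub, Int.reduceNeg]; ring
  · rw [ha, P1]; simp only [al0_m1, al0_p0, al0_p1, al1_m1, al1_p0, al1_p1, Int.reduceAdd, Int.reduceSub, Int.reduceNeg]; ring
  · rw [ha, P2]; simp only [al0_m1, al0_p0, al0_p1, al1_m3, al1_m2, al1_m1, al1_p0, al1_p1, al1_p2, al1_p3, al2_m1, al2_p0, al2_p1, Int.reduceAdd, Int.reduceSub, Int.reduceNeg]; ring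
  · rw [ha, P3]; simp only [al0_m1, al0_p0, al0_p1, al1_m3, al1_m2, al1_m1, al1_p0, al1_p1, al1_p2, al1_p3, al2_m3, al2_m2, al2_m1, al2_p0, al2_p1, al2_p2, al2_p3, al3_m1, al3_p0, al3_p1, Int.reduceAdd, Int.reduceSub, Int.reduceNeg]; ring
  · rw [ha, P4]; simp only [al0_m1, al0_p0, al0_p1, al1_m3, al1_m2, al1_m1, al1_p0, al1_p1, al1_p2, al1_p3, al2_m5, al2_m4, al2_m3, al2_m2, al2_m1, al2_p0, al2_p1, al2_p2, al2_p3, al2_p4, al2_p5, al3_m3, al3_m2, al3_m1, al3_p0, al3_p1, al3_p2, al3_p3, al4_m1, al4_p0, al4_p1, Int.reduceAdd, Int.reduceSub, Int.reduceNeg]; ring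

end G
end

section
namespace G
set_option linter.unusedSimpArgs false

def sup (f : R) (n : ℤ) : Prop := ∀ j : ℤ, n < |j| → f.coeff j = 0

lemma sup.mul {f g : R} {n k : ℤ} (hf : sup f n) (hg : sup g k) : sup (f * g) (n + k) := by
  intro j hj
  rw [coeff_mul']
  apply Finset.sum_eq_zero
  intro a _
  by_cases h : n < |a|
  · rw [hf a h, zero_mul]
  · rw [hg (j - a), mul_zero]
    have := abs_sub_abs_le_abs_sub j a
    omega

lemma sup.mono {f : R} {n k : ℤ} (hf : sup f n) (h : n ≤ k) : sup f k :=
  fun j hj => hf j (by omega)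

lemma sup.sub {f g : R} {n : ℤ} (hf : sup f n) (hg : sup g n) : sup (f - g) n := by
  intro j hj
  rw [AddMonoidAlgebra.coeff_sub, Finsupp.sub_apply, hf j hj, hg j hj, sub_zero]

lemma sup.add {f g : R} {n : ℤ} (hf : sup f n) (hg : sup g n) : sup (f + g) n := by
  intro j hj
  rw [AddMonoidAlgebra.coeff_add, Finsupp.add_apply, hf j hj, hg j hj, add_zero]

lemma sup.sum {ι : Type*} {s : Finset ι} {f : ι → R} {n : ℤ} (hf : ∀ i ∈ s, sup (f i) n) :
    sup (∑ i ∈ s, f i) n := by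
  intro j hj
  rw [AddMonoidAlgebra.coeff_sum, Finsupp.finsetSum_apply]
  exact Finset.sum_eq_zero fun i hi => hf i hi j hj

lemma sup.th {f : R} {n : ℤ} (hf : sup f n) : sup (th f) n := by
  intro j hj
  rw [th_coeff, hf j hj, mul_zero]

lemma sup_single (n : ℤ) (c : ℂ) : sup (.single n c) |n| := by
  intro j hj
  rw [AddMonoidAlgebra.coeff_single, Finsupp.single_eq_of_ne]
  rintro rfl; omega

lemma sup_C (c : ℂ) : sup (cC c) 0 := by
  rw [← LaurentPolynomial.single_eq_C]
  exact sup_single 0 c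

lemma q_eq : q = .single (-1) (1/2) - .single 1 (1/2) := by
  rw [LaurentPolynomial.single_eq_C_mul_T, LaurentPolynomial.single_eq_C_mul_T, q, w, w', mul_sub]

lemma sup_q : sup q 1 := by
  rw [q_eq]
  exact (sup_single (-1) _).sub (sup_single 1 _)

lemma hJ_eq (J : ℂ) : cC J * hh = .single 0 J + .single (-1) (J/2) + .single 1 (J/2) := by
  rw [LaurentPolynomial.single_eq_C, LaurentPolynomial.single_eq_C_mul_T,
    LaurentPolynomial.single_eq_C_mul_T, hh, w, w']
  rw [show J / 2 = J * (1/2) by ring, map_mul]; ring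

lemma sup_h (J : ℂ) : sup (cC J * hh) 1 := by
  rw [hJ_eq]
  exact (((sup_single 0 _).mono (by norm_num)).add (sup_single (-1) _)).add (sup_single 1 _)

lemma q_mul_coeff (f : R) (j : ℤ) :
    (q * f).coeff j = 1/2 * (f.coeff (j+1) - f.coeff (j-1)) := by
  rw [q_eq, sub_mul, AddMonoidAlgebra.coeff_sub, Finsupp.sub_apply,
    AddMonoidAlgebra.coeff_single_mul_apply, AddMonoidAlgebra.coeff_single_mul_apply]
  rw [show - -1 + j = j + 1 by ring, show -1 + j = j - 1 by ring]; ring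

lemma C_mul_coeff (c : ℂ) (f : R) (j : ℤ) : (cC c * f).coeff j = c * f.coeff j := by
  rw [← LaurentPolynomial.smul_eq_C_mul, AddMonoidAlgebra.coeff_smul]; simp

noncomputable def PsiR (J : ℂ) (Y : ℕ → R) (n : ℕ) : R := cC (2*J+1) * al J Y n
    - (∑ p ∈ Finset.HasAntidiagonal.antidiagonal n, al J Y p.1 * al J Y p.2)
    - q * th (al J Y n)

lemma sup_al {J : ℂ} {Y : ℕ → R} {n : ℕ} (h : sup (Y n) (2 * n)) :
    sup (al J Y n) (2 * n + 1) := by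
  rw [al]
  apply sup.add
  · exact (sup_q.mul h).mono (by omega)
  · split_ifs
    · exact (sup_h J).mono (by omega)
    · intro j _; simp

lemma sup_Psi {J : ℂ} {Y : ℕ → R} {n : ℕ} (h : ∀ i ≤ n, sup (Y i) (2 * i)) :
    sup (PsiR J Y n) (2 * n + 2) := by
  rw [PsiR]
  refine sup.sub (sup.sub ?_ ?_) ?_
  · exact ((sup_C _).mul (sup_al (h n le_rfl))).mono (by omega)
  · apply sup.sum
    intro x hx
    have hx' := Finset.HasAntidiagonal.mem_antidiagonal.1 hx
    exact ((sup_al (h x.1 (by omega))).mul (sup_al (h x.2 (by omega)))).mono (by omega)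
  · exact (sup_q.mul (sup_al (h n le_rfl)).th).mono (by omega)

lemma sup_Y {J m : ℂ} {Y : ℕ → R} {a : ℕ → ℂ} (h : Rec J m Y a) (n : ℕ) :
    sup (Y n) (2 * n) := by
  induction n using Nat.strong_induction_on with
  | _ n ih =>
  rcases n with _ | n
  · rw [h.Y0]; exact sup_C m
  · rw [rec_Y h n]
    have := sup_Psi (J := J) (Y := Y) (n := n) (fun i hi => ih i (by omega))
    exact ((sup_C _).mul (((sup_C _).mono (by omega)).sub this)).mono (by push_cast; omega)

lemma sup.mul_coeff {f : R} {n : ℕ} (hf : sup f n) (g : R) (j : ℤ) :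
    (f * g).coeff j = ∑ i ∈ Finset.range (2 * n + 1), f.coeff ((i:ℤ) - n) * g.coeff (j - ((i:ℤ) - n)) := by
  rw [coeff_mul']
  have : ∑ i ∈ Finset.range (2 * n + 1), f.coeff ((i:ℤ) - n) * g.coeff (j - ((i:ℤ) - n)) =
    ∑ a ∈ (Finset.range (2 * n + 1)).image (fun i : ℕ => (i:ℤ) - n), f.coeff a * g.coeff (j - a) := by
    rw [Finset.sum_image]
    intro x _ y _ h
    simp only at h; omega
  rw [this]
  apply Finset.sum_subset
  · intro a ha
    have : ¬ (n:ℤ) < |a| := fun h => by simp [hf a h] at ha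
    have h2 := abs_le.1 (not_lt.1 this)
    refine Finset.mem_image.2 ⟨(a + n).toNat, ?_, ?_⟩
    · simp only [Finset.mem_range]; omega
    · omega
  · intro x _ hx
    simp only [Finsupp.mem_support_iff, not_not] at hx
    rw [hx, zero_mul]

lemma Psi_coeff (J : ℂ) (Y : ℕ → R) (n : ℕ) (j : ℤ) : (PsiR J Y n).coeff j =
    (2*J+1) * (al J Y n).coeff j -
    (∑ p ∈ Finset.HasAntidiagonal.antidiagonal n, (al J Y p.1 * al J Y p.2).coeff j)
    - 1/2 * (((j:ℂ)+1) * (al J Y n).coeff (j+1) - ((j:ℂ)-1) * (al J Y n).coeff (j-1)) := by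
  rw [PsiR, AddMonoidAlgebra.coeff_sub, Finsupp.sub_apply, AddMonoidAlgebra.coeff_sub,
    Finsupp.sub_apply, C_mul_coeff, q_mul_coeff, th_coeff, th_coeff,
    AddMonoidAlgebra.coeff_sum, Finsupp.finsetSum_apply]
  push_cast; ring

lemma rec_expl {J m : ℂ} {Y : ℕ → R} {a : ℕ → ℂ} (h : Rec J m Y a) :
    a 0 = (1/2)*m^2 + (1/2)*J^2 + (1/2)*J^1 ∧ a 1 = (-1/8)*m^3 + (1/8)*m*J^2 + (1/8)*m*J + (3/16)*m^1 ∧ a 2 = (5/64)*m^4 + (-3/32)*m^2*J^2 + (-3/32)*m^2*J + (-17/64)*m^2 + (1/64)*J^4 + (1/32)*J^3 + (7/64)*J^2 + (3/32)*J^1 ∧ a 3 = (-33/512)*m^5 + (23/256)*m^3*J^2 + (23/256)*m^3*J + (205/512)*m^3 + (-13/512)*m*J^4 + (-13/256)*m*J^3 + (-133/512)*m*J^2 + (-15/64)*m*J + (63/1024)*m^1 ∧ a 4 = (63/1024)*m^6 + (-25/256)*m^4*J^2 + (-25/256)*m^4*J + (-315/512)*m^4 + (39/1024)*m^2*J^4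 + (39/512)*m^2*J^3 + (541/1024)*m^2*J^2 + (251/512)*m^2*J + (-297/1024)*m^2 + (-1/512)*J^6 + (-3/512)*J^5 + (-45/1024)*J^4 + (-5/64)*J^3 + (15/1024)*J^2 + (27/512)*J^1 := by
  have HS : ∀ n, sup (al J Y n) ((2 * n + 1 : ℕ) : ℤ) := fun n => (sup_al (sup_Y h n)).mono (by push_cast; omega)
  exact expl J m (fun n j => (Y n).coeff j) (fun n j => (al J Y n).coeff j)
    (fun n j => (PsiR J Y n).coeff j) a
    (by
      intro j
      simp only [al, if_true]
      rw [h.Y0, hJ_eq, AddMonoidAlgebra.coeff_add, Finsupp.add_apply, q_mul_coeff]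
      simp only [← LaurentPolynomial.single_eq_C, AddMonoidAlgebra.coeff_add, Finsupp.add_apply,
        AddMonoidAlgebra.coeff_single]
      by_cases h0 : j = 0
      · subst h0; simp
      by_cases h1 : j = 1
      · subst h1; norm_num; ring
      by_cases h2 : j = -1
      · subst h2; norm_num; ring
      simp only [Finsupp.single_apply, h0, h1, h2, if_false]
      rw [if_neg (by omega), if_neg (by omega), if_neg (by omega), if_neg (by omega),
        if_neg (by omega)]
      simp)
    (by
      intro n j
      simp only [al, if_neg (Nat.succ_ne_zero n), add_zero]
      exact q_mul_coeff _ _)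
    (fun n j hj => sup_Y h n j hj)
    (fun n => h.ct n)
    (by
      intro n j hj
      have := congrArg (fun f : R => f.coeff j) (rec_Y h n)
      simp only [C_mul_coeff, AddMonoidAlgebra.coeff_sub, Finsupp.sub_apply (cC (a n)).coeff] at this
      rw [this, ← LaurentPolynomial.single_eq_C, AddMonoidAlgebra.coeff_single,
        Finsupp.single_eq_of_ne hj, PsiR]
      simp only [AddMonoidAlgebra.coeff_sub]
      ring)
    (fun n => rec_a h n)
    (by
      intro j
      rw [Psi_coeff]
      simp only [Finset.Nat.antidiagonal_succ, Finset.Nat.antidiagonal_zero, Finset.sum_cons, Finset.sum_map,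
        Finset.map_singleton, Finset.map_cons, Function.Embedding.prodMap, Function.Embedding.coeFn_mk, Prod.map,
        Function.Embedding.refl_apply, Finset.sum_singleton, Nat.succ_eq_add_one, Nat.reduceAdd]
      simp only [(HS 0).mul_coeff, Finset.sum_range_succ, Finset.sum_range_zero]
      norm_num)
    (by
      intro j
      rw [Psi_coeff]
      simp only [Finset.Nat.antidiagonal_succ, Finset.Nat.antidiagonal_zero, Finset.sum_cons, Finset.sum_map,
        Finset.map_singleton, Finset.map_cons, Function.Embedding.prodMap, Function.Embedding.coeFn_mk, Prod.map,
        Function.Embedding.refl_apply, Finset.sum_singleton, Nat.succ_eq_add_one, Nat.reduceAdd]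
      rw [mul_comm (al J Y 1) (al J Y 0)]; simp only [(HS 0).mul_coeff, Finset.sum_range_succ, Finset.sum_range_zero]
      norm_num
      ring)
    (by
      intro j
      rw [Psi_coeff]
      simp only [Finset.Nat.antidiagonal_succ, Finset.Nat.antidiagonal_zero, Finset.sum_cons, Finset.sum_map,
        Finset.map_singleton, Finset.map_cons, Function.Embedding.prodMap, Function.Embedding.coeFn_mk, Prod.map,
        Function.Embedding.refl_apply, Finset.sum_singleton, Nat.succ_eq_add_one, Nat.reduceAdd]
      rw [mul_comm (al J Y 2) (al J Y 0)]; simp only [(HS 0).mul_coeff, (HS 1).mul_coeff, Finset.sum_range_succ, Finset.sum_range_zero]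
      norm_num
      ring)
    (by
      intro j
      rw [Psi_coeff]
      simp only [Finset.Nat.antidiagonal_succ, Finset.Nat.antidiagonal_zero, Finset.sum_cons, Finset.sum_map,
        Finset.map_singleton, Finset.map_cons, Function.Embedding.prodMap, Function.Embedding.coeFn_mk, Prod.map,
        Function.Embedding.refl_apply, Finset.sum_singleton, Nat.succ_eq_add_one, Nat.reduceAdd]
      rw [mul_comm (al J Y 3) (al J Y 0), mul_comm (al J Y 2) (al J Y 1)]; simp only [(HS 0).mul_coeff, (HS 1).mul_coeff, Finset.sum_range_succ, Finset.sum_range_zero]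
      norm_num
      ring)
    (by
      intro j
      rw [Psi_coeff]
      simp only [Finset.Nat.antidiagonal_succ, Finset.Nat.antidiagonal_zero, Finset.sum_cons, Finset.sum_map,
        Finset.map_singleton, Finset.map_cons, Function.Embedding.prodMap, Function.Embedding.coeFn_mk, Prod.map,
        Function.Embedding.refl_apply, Finset.sum_singleton, Nat.succ_eq_add_one, Nat.reduceAdd]
      rw [mul_comm (al J Y 4) (al J Y 0), mul_comm (al J Y 3) (al J Y 1)]; simp only [(HS 0).mul_coeff, (HS 1).mul_coeff, (HS 2).mul_coeff, Finset.sum_range_succ, Finset.sum_range_zero]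
      norm_num
      ring)

end G
end

section
namespace G
set_option linter.unusedSimpArgs false

lemma moment {ι : Type*} [Fintype ι] (J : ℂ) (m : ι → ℂ) (hm : Function.Injective m)
    (Y : ι → ℕ → R) (a : ι → ℕ → ℂ) (h : ∀ k, Rec J (m k) (Y k) (a k)) (ν : ι → ℂ)
    (h0 : ∑ k, ν k = 0) (ha : ∀ n, n ≠ 0 → ∑ k, ν k * a k n = 0)
    (hX : ∑ k, ν k * (2 * m k * a k 2 + a k 0 * a k 1) = 0)
    (hE : ∑ k, ν k * (4 * m k * a k 3 + 2 * a k 0 * a k 2 + a k 1 ^ 2) = 0) : ν = 0 := by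
  obtain ⟨s, hs⟩ : ∃ s : ℕ → ℂ, s = fun j => ∑ k, ν k * m k ^ j := ⟨_, rfl⟩
  have hs0 : s 0 = 0 := by simp [hs, h0]
  have lin : ∀ (f : ι → ℂ) (c : Fin 7 → ℂ), (∀ k, f k = c 0 + c 1 * m k + c 2 * m k ^ 2 + c 3 * m k ^ 3 +
      c 4 * m k ^ 4 + c 5 * m k ^ 5 + c 6 * m k ^ 6) → ∑ k, ν k * f k = c 0 * s 0 + c 1 * s 1 +
      c 2 * s 2 + c 3 * s 3 + c 4 * s 4 + c 5 * s 5 + c 6 * s 6 := by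
    intro f c hf
    simp only [hs, Finset.mul_sum, ← Finset.sum_add_distrib]
    apply Finset.sum_congr rfl
    intro k _
    rw [hf k]; ring
  have E1 := lin (fun k => a k 1) ![0, (1/8)*J^2 + (1/8)*J + (3/16), 0, (-1/8), 0, 0, 0] (by
    intro k
    obtain ⟨e0, e1, e2, e3, e4⟩ := rec_expl (h k)
    simp [e0, e1, e2, e3, e4]; ring)
  rw [ha 1 (by norm_num), hs0] at E1
  simp at E1
  have E2 := lin (fun k => a k 2) ![(1/64)*J^4 + (1/32)*J^3 + (7/64)*J^2 + (3/32)*J^1, 0, (-3/32)*J^2 + (-3/32)*J + (-17/64), 0, (5/64), 0, 0] (by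
    intro k
    obtain ⟨e0, e1, e2, e3, e4⟩ := rec_expl (h k)
    simp [e0, e1, e2, e3, e4]; ring)
  rw [ha 2 (by norm_num), hs0] at E2
  simp at E2
  have E3 := lin (fun k => a k 3) ![0, (-13/512)*J^4 + (-13/256)*J^3 + (-133/512)*J^2 + (-15/64)*J + (63/1024), 0, (23/256)*J^2 + (23/256)*J + (205/512), 0, (-33/512), 0] (by
    intro k
    obtain ⟨e0, e1, e2, e3, e4⟩ := rec_expl (h k)
    simp [e0, e1, e2, e3, e4]; ring)
  rw [ha 3 (by norm_num), hs0] at E3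
  simp at E3
  have E4 := lin (fun k => a k 4) ![(-1/512)*J^6 + (-3/512)*J^5 + (-45/1024)*J^4 + (-5/64)*J^3 + (15/1024)*J^2 + (27/512)*J^1, 0, (39/1024)*J^4 + (39/512)*J^3 + (541/1024)*J^2 + (251/512)*J + (-297/1024), 0, (-25/256)*J^2 + (-25/256)*J + (-315/512), 0, (63/1024)] (by
    intro k
    obtain ⟨e0, e1, e2, e3, e4⟩ := rec_expl (h k)
    simp [e0, e1, e2, e3, e4]; ring)
  rw [ha 4 (by norm_num), hs0] at E4
  simp at E4
  have EX := lin (fun k => 2 * m k * a k 2 + a k 0 * a k 1) ![0, (3/32)*J^4 + (3/16)*J^3 + (3/8)*J^2 + (9/32)*J^1, 0, (-3/16)*J^2 + (-3/16)*J + (-7/16), 0, (3/32), 0] (by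
    intro k
    obtain ⟨e0, e1, e2, e3, e4⟩ := rec_expl (h k)
    simp [e0, e1, e2, e3, e4]; ring)
  rw [hX, hs0] at EX
  simp at EX
  have EE := lin (fun k => 4 * m k * a k 3 + 2 * a k 0 * a k 2 + a k 1 ^ 2) ![(1/64)*J^6 + (3/64)*J^5 + (9/64)*J^4 + (13/64)*J^3 + (3/32)*J^2, 0, (-21/128)*J^4 + (-21/64)*J^3 + (-157/128)*J^2 + (-17/16)*J + (9/32), 0, (5/16)*J^2 + (5/16)*J + (165/128), 0, (-21/128)] (by
    intro k
    obtain ⟨e0, e1, e2, e3, e4⟩ := rec_expl (h k)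
    simp [e0, e1, e2, e3, e4]; ring)
  rw [hE, hs0] at EE
  simp at EE
  have s1 : s 1 = 0 := by
    linear_combination (-((-40/27)*J^2 + (-40/27)*J + (34/9))) * E1 + (-((128/27))) * E3 + (-((88/27))) * EX
  have s2 : s 2 = 0 := by
    linear_combination (-((32/81)*J^2 + (32/81)*J + (-8/3))) * E2 + (-((-128/81))) * E4 + (-((-16/27))) * EE
  have sall : ∀ n, s n = 0 := by
    intro n
    induction n using Nat.strong_induction_on with
    | _ n ih =>
    rcases n with _ | _ | _ | n
    · exact hs0
    · exact s1
    · exact s2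
    · obtain ⟨p, p1, p2, p3⟩ := a_poly J m Y a h (n+1) (by omega)
      have e := ha (n+1) (by omega)
      have : ∑ k, ν k * a k (n+1) = ∑ i ∈ Finset.range (n+1+2+1), p.coeff i * s i := by
        simp only [hs, Finset.mul_sum]
        rw [Finset.sum_comm]
        apply Finset.sum_congr rfl
        intro k _
        rw [p3, Polynomial.eval_eq_sum_range' (n := n+1+2+1) (by omega), Finset.mul_sum]
        apply Finset.sum_congr rfl
        intro i _; ring
      rw [this, Finset.sum_range_succ, Finset.sum_eq_zero, zero_add] at e
      · exact (mul_eq_zero.1 e).resolve_left p2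
      · intro i hi
        rw [ih i (by have := Finset.mem_range.1 hi; omega), mul_zero]
  have hp : ∀ p : Polynomial ℂ, ∑ k, ν k * p.eval (m k) = 0 := by
    intro p
    simp only [Polynomial.eval_eq_sum_range, Finset.mul_sum]
    rw [Finset.sum_comm]
    apply Finset.sum_eq_zero
    intro i _
    have := sall i
    simp only [hs] at this
    rw [← mul_zero (p.coeff i), ← this, Finset.mul_sum]
    apply Finset.sum_congr rfl
    intro k _; ring
  classical
  funext k
  have := hp (Lagrange.basis Finset.univ m k)
  rw [Finset.sum_eq_single k] at this
  · rw [Lagrange.eval_basis_self (hm.injOn) (Finset.mem_univ k)] at this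
    simpa using this
  · intro b _ hb
    rw [Lagrange.eval_basis_of_ne (Ne.symm hb) (Finset.mem_univ b), mul_zero]
  · simp

end G
end

section
namespace G

instance adicPS : IsAdicComplete (Ideal.span {(PowerSeries.X : PowerSeries ℂ)}) (PowerSeries ℂ) where
  haus' := by
    intro x hx
    ext n
    have := hx (n+1)
    rw [SModEq.zero, smul_eq_mul, Ideal.mul_top, Ideal.span_singleton_pow,
      Ideal.mem_span_singleton, PowerSeries.X_pow_dvd_iff] at this
    simpa using this n (by omega)
  prec' := by
    intro f hf
    have hf' : ∀ m n, m ≤ n → ∀ k < m, PowerSeries.coeff k (f m) = PowerSeries.coeff k (f n) := by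
      intro m n hmn k hk
      have := hf hmn
      rw [SModEq.sub_mem, smul_eq_mul, Ideal.mul_top, Ideal.span_singleton_pow,
        Ideal.mem_span_singleton, PowerSeries.X_pow_dvd_iff] at this
      have := this k hk
      rwa [map_sub, sub_eq_zero] at this
    refine ⟨PowerSeries.mk (fun n => PowerSeries.coeff n (f (n+1))), fun n => ?_⟩
    rw [SModEq.sub_mem, smul_eq_mul, Ideal.mul_top, Ideal.span_singleton_pow,
        Ideal.mem_span_singleton, PowerSeries.X_pow_dvd_iff]
    intro k hk
    rw [map_sub, sub_eq_zero, PowerSeries.coeff_mk]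
    exact (hf' (k+1) n hk k (by omega)).symm

lemma hensel (p : Polynomial (PowerSeries ℂ)) (hp : p.Monic) (r : ℂ)
    (h1 : (p.map (PowerSeries.constantCoeff)).eval r = 0)
    (h2 : (p.map (PowerSeries.constantCoeff)).derivative.eval r ≠ 0) :
    ∃ κ : PowerSeries ℂ, p.eval κ = 0 ∧ PowerSeries.constantCoeff κ = r := by
  have H : HenselianRing (PowerSeries ℂ) (Ideal.span {(PowerSeries.X : PowerSeries ℂ)}) :=
    inferInstance
  have e : ∀ q : Polynomial (PowerSeries ℂ), PowerSeries.constantCoeff (q.eval (PowerSeries.C r)) =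
      (q.map (PowerSeries.constantCoeff)).eval r := by
    intro q
    rw [Polynomial.eval_map, ← Polynomial.eval₂_at_apply]
    simp
  obtain ⟨a, ha1, ha2⟩ := H.is_henselian p hp (PowerSeries.C r) (by
    rw [Ideal.mem_span_singleton, PowerSeries.X_dvd_iff, e, h1]) (by
    apply IsUnit.map
    rw [PowerSeries.isUnit_iff_constantCoeff, e, ← Polynomial.derivative_map]
    exact isUnit_iff_ne_zero.2 h2)
  refine ⟨a, ha1, ?_⟩
  rw [Ideal.mem_span_singleton, PowerSeries.X_dvd_iff, map_sub, sub_eq_zero] at ha2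
  simpa using ha2

end G
end

section
namespace G

noncomputable def thA (f : PowerSeries R) : PowerSeries R := PowerSeries.mk fun n => th (PowerSeries.coeff n f)

lemma coeff_thA (f : PowerSeries R) (n : ℕ) : PowerSeries.coeff n (thA f) = th (PowerSeries.coeff n f) := by
  simp [thA]
lemma thA_add (f g : PowerSeries R) : thA (f + g) = thA f + thA g := by
  ext1 n; simp [coeff_thA]
lemma thA_sum {ι : Type*} (s : Finset ι) (f : ι → PowerSeries R) : thA (∑ i ∈ s, f i) = ∑ i ∈ s, thA (f i) := by
  ext1 n; simp [coeff_thA]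
lemma thA_mul (f g : PowerSeries R) : thA (f * g) = f * thA g + g * thA f := by
  ext1 n
  rw [mul_comm g, coeff_thA, map_add, PowerSeries.coeff_mul, PowerSeries.coeff_mul, PowerSeries.coeff_mul, map_sum, ← Finset.sum_add_distrib]
  apply Finset.sum_congr rfl
  intro p _
  rw [th_mul, coeff_thA, coeff_thA]; ring
lemma thA_C (f : R) : thA (PowerSeries.C f) = PowerSeries.C (th f) := by
  ext1 n
  rw [coeff_thA, PowerSeries.coeff_C, PowerSeries.coeff_C]
  split_ifs <;> simp
lemma thA_map (f : PowerSeries ℂ) : thA (PowerSeries.map cC f) = 0 := by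
  ext1 n
  rw [coeff_thA, PowerSeries.coeff_map, th_C]; simp
lemma thA_d (f : PowerSeries R) : PowerSeries.derivative R (thA f) = thA (PowerSeries.derivative R f) := by
  ext1 n
  rw [PowerSeries.coeff_derivative, coeff_thA, coeff_thA, PowerSeries.coeff_derivative, th_mul]
  have : th ((n : R) + 1) = 0 := by
    have := th_C ((n : ℂ) + 1)
    simpa using this
  rw [this]; ring

noncomputable def AA (J : ℂ) (f : PowerSeries R) : PowerSeries R :=
  PowerSeries.C (cC J * (1 + w)) * f + PowerSeries.C q * thA f

lemma key_rec (l : ℕ) (J m : ℂ) (hJ : 2 * J + 1 = l) (U : PowerSeries R) (κ : PowerSeries ℂ) (hU : IsUnit U)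
    (hκ : PowerSeries.constantCoeff κ = 2 * m)
    (h : PowerSeries.map cC κ * U - PowerSeries.X * ((l : PowerSeries R) * AA J U - AA J (AA J U)) + PowerSeries.C (cC (2 * J)) * U - 2 * thA U = 0) :
    ∃ Y, Rec J m Y (fun n => PowerSeries.coeff (n+1) κ) := by
  obtain ⟨V, hV⟩ := hU.exists_right_inv
  set Y : PowerSeries R := thA U * V - PowerSeries.C (cC J) with hY
  set α : PowerSeries R := PowerSeries.C (cC J * hh) + PowerSeries.C q * Y with hα
  have e1 : thA U = (Y + PowerSeries.C (cC J)) * U := by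
    rw [hY]; linear_combination (-thA U) * hV
  have ehh : cC J * (1 + w) + q * cC J = cC J * hh := by
    rw [q, hh]
    have : cC (1/2) * 2 = 1 := by
      rw [← map_ofNat cC 2, ← map_mul]; norm_num
    linear_combination (-(cC J)) * w * this
  have ehh' := congrArg (PowerSeries.C (R := R)) ehh
  rw [map_add, map_mul PowerSeries.C q] at ehh'
  have e2 : AA J U = α * U := by
    rw [AA, e1, hα, ← ehh']; ring
  have e3 : AA J (α * U) = (α * α + PowerSeries.C q * thA α) * U := by
    rw [AA, thA_mul, e1]
    linear_combination α * U * ehh'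
  have eq1 : PowerSeries.map cC κ = 2 * Y + PowerSeries.X * ((l : PowerSeries R) * α - α * α - PowerSeries.C q * thA α) := by
    rw [e2, e3, e1] at h
    have h2 : (PowerSeries.C (cC (2*J)) : PowerSeries R) = 2 * PowerSeries.C (cC J) := by
      rw [map_mul, map_mul, map_ofNat, map_ofNat]
    rw [h2] at h
    linear_combination V * h - (PowerSeries.map cC κ - (2 * Y + PowerSeries.X * ((l : PowerSeries R) * α - α * α - PowerSeries.C q * thA α))) * hV
  have hal : ∀ n, PowerSeries.coeff n α = al J (fun n => PowerSeries.coeff n Y) n := by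
    intro n
    rw [hα, map_add, PowerSeries.coeff_C, PowerSeries.coeff_C_mul, al]; ring
  have two : (2 : PowerSeries R) = PowerSeries.C 2 := (map_ofNat PowerSeries.C 2).symm
  have lC : (l : PowerSeries R) = PowerSeries.C (cC (2*J+1)) := by rw [hJ]; simp
  clear_value α
  refine ⟨fun n => PowerSeries.coeff n Y, ?_, ?_, ?_⟩
  · have := congrArg (PowerSeries.coeff 0) eq1
    rw [map_add, two, PowerSeries.coeff_C_mul, PowerSeries.coeff_map, PowerSeries.coeff_zero_X_mul, PowerSeries.coeff_zero_eq_constantCoeff_apply, hκ, add_zero] at this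
    have h2 : cC (1/2) * 2 = 1 := by
      rw [← map_ofNat cC 2, ← map_mul]; norm_num
    rw [map_mul, map_ofNat] at this
    show PowerSeries.coeff 0 Y = _
    linear_combination (-cC (1/2)) * this + (cC m - PowerSeries.coeff 0 Y) * h2
  · intro n
    have hd : PowerSeries.derivative R Y = thA (PowerSeries.derivative R U * V) := by
      have k1 := congrArg (PowerSeries.derivative R) hV
      have k2 := congrArg thA hV
      have o : thA 1 = 0 := by simpa using thA_map 1
      rw [thA_mul, o] at k2
      rw [Derivation.leibniz, Derivation.map_one_eq_zero, smul_eq_mul, smul_eq_mul] at k1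
      rw [hY, map_sub, Derivation.leibniz, PowerSeries.derivative_C, thA_mul, smul_eq_mul, smul_eq_mul, thA_d]
      linear_combination V * thA U * k1 - V * PowerSeries.derivative R U * k2 + (- thA U * PowerSeries.derivative R V + PowerSeries.derivative R U * thA V) * hV
    have := congrArg (fun f => CT (PowerSeries.coeff n f)) hd
    simp only [PowerSeries.coeff_derivative, coeff_thA, CT_th] at this
    have e : PowerSeries.coeff (n+1) Y * ((n:R)+1) = ((n:ℂ)+1) • PowerSeries.coeff (n+1) Y := by
      rw [LaurentPolynomial.smul_eq_C_mul]; simp [mul_comm]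
    rw [e, map_smul, smul_eq_mul] at this
    exact (mul_eq_zero.1 this).resolve_left (by exact_mod_cast Nat.succ_ne_zero n)
  · intro n
    clear_value Y
    have := congrArg (PowerSeries.coeff (n+1)) eq1
    rw [map_add, two, PowerSeries.coeff_C_mul, PowerSeries.coeff_map, PowerSeries.coeff_succ_X_mul, map_sub, map_sub, lC, PowerSeries.coeff_C_mul, PowerSeries.coeff_C_mul, PowerSeries.coeff_mul, coeff_thA] at this
    simp only [hal] at this
    rw [this]; ring
end G
end

section
namespace G

noncomputable def bb (n j : ℕ) : R := (1 + w) ^ j * (1 - w) ^ (n - j)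

lemma th_one : th 1 = 0 := by simpa using th_C 1
lemma th_P (i : ℕ) : th ((1 + w) ^ i) = i * (1 + w) ^ (i - 1) * w := by
  induction i with
  | zero => simp [th_one]
  | succ i ih =>
    rw [pow_succ, th_mul, ih, map_add, th_one, th_w]
    rcases i with _ | i
    · simp
    · simp only [Nat.add_sub_cancel]; push_cast; ring
lemma th_Q (i : ℕ) : th ((1 - w) ^ i) = -(i * (1 - w) ^ (i - 1) * w) := by
  induction i with
  | zero => simp [th_one]
  | succ i ih =>
    rw [pow_succ, th_mul, ih, map_sub, th_one, th_w]
    rcases i with _ | i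
    · simp
    · simp only [Nat.add_sub_cancel]; push_cast; ring

lemma th_bb (n j : ℕ) (hj : j ≤ n) : (j : R) * bb n (j-1) + ((n - j : ℕ) : R) * bb n (j+1)
    = (n : R) * bb n j - 2 * th (bb n j) := by
  obtain ⟨k, rfl⟩ := Nat.exists_eq_add_of_le hj
  simp only [bb, th_mul, th_P, th_Q]
  rcases j with _ | j
  · rcases k with _ | k
    · simp
    · have : 0 + (k+1) - (0+1) = k := by omega
      simp only [this]; simp; ring
  · rcases k with _ | k
    · have : j + 1 + 0 - j = 1 := by omega
      simp [this]; ring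
    · have h1 : j + 1 + (k+1) - j = k + 2 := by omega
      have h2 : j + 1 + (k+1) - (j + 1 + 1) = k := by omega
      have h3 : j + 1 + (k+1) - (j + 1) = k + 1 := by omega
      simp only [Nat.add_sub_cancel, h1, h2, h3]; push_cast; ring

lemma q_bb (n j : ℕ) (J : ℂ) (hJ : 2 * J = n) (hj : j ≤ n) :
    cC J * (1 + w) * bb n j + q * th (bb n j) = (j : R) * bb n j := by
  obtain ⟨k, rfl⟩ := Nat.exists_eq_add_of_le hj
  have hw : q * w = cC (1/2) * (1 - w * w) := by
    rw [q]; linear_combination cC (1/2) * ww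
  have h2 : cC (1/2) * 2 = 1 := by
    rw [← map_ofNat cC 2, ← map_mul]; norm_num
  have hJ' : cC J = cC (1/2) * ((j : R) + k) := by
    have : J = 1/2 * ((j:ℂ) + k) := by push_cast at hJ; linear_combination (1/2) * hJ
    rw [this]; simp
  have h3 : j + k - j = k := by omega
  simp only [bb, th_mul, th_P, th_Q, h3, hJ']
  have e1 : (j:R) * (1+w)^(j-1) * (1+w) = j * (1+w)^j := by
    rcases j with _ | j
    · simp
    · simp only [Nat.add_sub_cancel]; ring
  have e2 : (k:R) * (1-w)^(k-1) * (1-w) = k * (1-w)^k := by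
    rcases k with _ | j
    · simp
    · simp only [Nat.add_sub_cancel]; ring
  linear_combination ((1-w)^k * j * (1+w)^(j-1) - (1+w)^j * k * (1-w)^(k-1)) * hw + cC (1/2) * ((1-w) * (1-w)^k * e1 - (1+w) * (1+w)^j * e2) + (j : R) * (1+w)^j * (1-w)^k * h2

noncomputable def TT (l : ℕ) : Matrix (Fin l) (Fin l) ℂ := Matrix.of fun i j =>
  if (i : ℕ) + 1 = (j : ℕ) then (((i : ℕ) + 1 : ℕ) : ℂ)
  else if (j : ℕ) + 1 = (i : ℕ) then ((l - (i : ℕ) : ℕ) : ℂ) else 0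

noncomputable def BB (l : ℕ) : Matrix (Fin l) (Fin l) ℂ := Matrix.of fun k j => (bb (l-1) j).coeff ((k : ℕ) : ℤ)

lemma sum_TT (l : ℕ) (g : ℕ → R) (j : Fin l) :
    ∑ i : Fin l, cC (TT l i j) * g i = ((j : ℕ) : R) * g (j - 1) + ((l - 1 - j : ℕ) : R) * g (j + 1) := by
  have : ∀ i : Fin l, cC (TT l i j) * g i = (fun i : ℕ => if (i : ℕ) = (j : ℕ) - 1 then (((j : ℕ) : ℕ) : R) * g (j-1) else 0) i + (fun i : ℕ => if i = (j : ℕ) + 1 then ((l - 1 - j : ℕ) : R) * g (j+1) else 0) i := by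
    intro i
    simp only [TT, Matrix.of_apply]
    by_cases h1 : (i : ℕ) + 1 = (j : ℕ)
    · have h2 : (i : ℕ) = (j : ℕ) - 1 := by omega
      have h3 : (i : ℕ) ≠ (j : ℕ) + 1 := by omega
      rw [if_pos h1, if_pos h2, if_neg h3, ← h2, ← h1]; simp
    · rw [if_neg h1]
      by_cases h2 : (j : ℕ) + 1 = (i : ℕ)
      · rw [if_pos h2, if_pos h2.symm, ← h2, if_neg (by omega)]
        have : l - (j + 1) = l - 1 - (j : ℕ) := by omega
        rw [this]; simp
      · rw [if_neg h2, if_neg (c := (i : ℕ) = (j : ℕ) + 1) (fun h => h2 h.symm)]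
        split_ifs with h4
        · have : (j : ℕ) = 0 := by omega
          simp [this]
        · simp
  rw [Finset.sum_congr rfl (fun i _ => this i), Finset.sum_add_distrib,
    Fin.sum_univ_eq_sum_range (fun i : ℕ => if (i : ℕ) = (j : ℕ) - 1 then (((j : ℕ) : ℕ) : R) * g (j-1) else 0) l,
    Fin.sum_univ_eq_sum_range (fun i : ℕ => if i = (j : ℕ) + 1 then ((l - 1 - j : ℕ) : R) * g (j+1) else 0) l,
    Finset.sum_ite_eq', Finset.sum_ite_eq']
  congr 1
  · rw [if_pos]; have := j.2; simp; omega
  · by_cases h : (j : ℕ) + 1 < l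
    · rw [if_pos (by simpa using h)]
    · rw [if_neg (by simpa using h)]
      have : l - 1 - (j : ℕ) = 0 := by omega
      simp [this]

lemma sum_TT_bb (l : ℕ) (J : ℂ) (hJ : 2 * J + 1 = l) (j : Fin l) :
    ∑ i : Fin l, cC (TT l i j) * bb (l-1) i = cC (2 * J) * bb (l-1) j - 2 * th (bb (l-1) j) := by
  have hl := j.2
  rw [sum_TT l (bb (l-1)) j, th_bb (l-1) j (by omega)]
  have : 2 * J = ((l - 1 : ℕ) : ℂ) := by
    rw [Nat.cast_sub (by omega)]; push_cast; linear_combination hJ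
  rw [this]; simp

lemma BB_T (l : ℕ) (J : ℂ) (hJ : 2 * J + 1 = l) (k : Fin l) :
    BB l k ᵥ* TT l = (2 * J - 2 * (k : ℕ)) • BB l k := by
  funext j
  have := congrArg (fun f : R => f.coeff ((k : ℕ) : ℤ)) (sum_TT_bb l J hJ j)
  have h2 : (2 : R) = cC 2 := (map_ofNat cC 2).symm
  simp only [AddMonoidAlgebra.coeff_sum, Finsupp.finsetSum_apply, AddMonoidAlgebra.coeff_sub, Finsupp.sub_apply, h2, C_mul_coeff, th_coeff] at this
  simp only [vecMul, dotProduct, BB, of_apply, Pi.smul_apply, smul_eq_mul]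
  rw [← Int.cast_natCast (R := ℂ)]
  rw [sub_mul, mul_assoc 2 (((k:ℕ):ℤ):ℂ), ← this]
  apply Finset.sum_congr rfl
  intro i _; ring

lemma w_pow (i : ℕ) : w ^ i = .single (i : ℤ) 1 := by
  rw [w, LaurentPolynomial.T_pow, mul_one, LaurentPolynomial.T]

lemma BB_ne (l : ℕ) (k : Fin l) : BB l k ≠ 0 := by
  intro h
  have hk := k.2
  have := congrFun h ⟨l-1, by omega⟩
  simp only [BB, of_apply, bb, Pi.zero_apply, Nat.sub_self, pow_zero, mul_one] at this
  rw [add_comm, add_pow] at this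
  simp only [AddMonoidAlgebra.coeff_sum, Finsupp.finsetSum_apply, one_pow, mul_one] at this
  have e : ∀ i ∈ Finset.range (l-1+1), (w ^ i * ((l-1).choose i : R)).coeff ((k:ℕ):ℤ) = if i = (k:ℕ) then ((l-1).choose k : ℂ) else 0 := by
    intro i _
    have : ((l-1).choose i : R) = cC ((l-1).choose i : ℂ) := by simp
    rw [this, mul_comm, C_mul_coeff, w_pow, AddMonoidAlgebra.coeff_single, Finsupp.single_apply]
    simp only [Nat.cast_inj]
    split_ifs with h
    · rw [h, mul_one]
    · simp
  rw [Finset.sum_congr rfl e, Finset.sum_ite_eq', if_pos (by simp; omega)] at this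
  have h3 := Nat.choose_pos (n := l-1) (k := k) (by omega)
  rw [Nat.cast_eq_zero] at this
  omega

lemma BB_unit (l : ℕ) (J : ℂ) (hJ : 2 * J + 1 = l) : IsUnit (BB l) := by
  rw [← Matrix.linearIndependent_rows_iff_isUnit]
  apply Module.End.eigenvectors_linearIndependent' (Matrix.vecMulLinear (TT l)) (fun k : Fin l => 2 * J - 2 * ((k : ℕ) : ℂ))
  · intro a b h
    simp only [sub_right_inj, mul_eq_mul_left_iff, Nat.cast_inj] at h
    rcases h with h | h
    · exact Fin.ext h
    · norm_num at h
  · intro k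
    refine ⟨?_, BB_ne l k⟩
    rw [Module.End.mem_eigenspace_iff]
    exact BB_T l J hJ k
end G
end

section
namespace G

noncomputable def ME (l : ℕ) : Matrix (Fin l) (Fin l) (PowerSeries ℂ) := Matrix.of fun i j =>
  (if i = j then PowerSeries.X * PowerSeries.C ((((i : ℕ) * (l - (i : ℕ)) : ℕ)) : ℂ) else 0) - PowerSeries.C (TT l i j)

lemma prim {ι : Type*} (n : ℕ) : ∀ v : ι → PowerSeries ℂ, (∃ i, PowerSeries.coeff n (v i) ≠ 0) →
    ∃ (N : ℕ) (u : ι → PowerSeries ℂ), v = (PowerSeries.X ^ N : PowerSeries ℂ) • u ∧ ∃ i, PowerSeries.constantCoeff (u i) ≠ 0 := by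
  induction n with
  | zero => intro v ⟨i, hi⟩; exact ⟨0, v, by simp, i, by simpa using hi⟩
  | succ n ih =>
    intro v ⟨i, hi⟩
    by_cases h : ∃ i, PowerSeries.constantCoeff (v i) ≠ 0
    · exact ⟨0, v, by simp, h⟩
    · push Not at h
      have : ∀ i, ∃ u, v i = PowerSeries.X * u := fun i => PowerSeries.X_dvd_iff.2 (h i)
      choose u hu using this
      obtain ⟨N, u', e, hi'⟩ := ih u ⟨i, by rwa [hu i, PowerSeries.coeff_succ_X_mul] at hi⟩
      refine ⟨N+1, u', ?_, hi'⟩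
      funext i
      rw [hu i, e]; simp [pow_succ]; ring

lemma AA_sum {ι : Type*} (J : ℂ) (s : Finset ι) (f : ι → PowerSeries R) : AA J (∑ i ∈ s, f i) = ∑ i ∈ s, AA J (f i) := by
  simp only [AA, thA_sum, Finset.mul_sum, Finset.sum_add_distrib]

lemma AA_map (J : ℂ) (f : PowerSeries ℂ) (b : R) : AA J (PowerSeries.map cC f * PowerSeries.C b) =
    PowerSeries.map cC f * PowerSeries.C (cC J * (1 + w) * b + q * th b) := by
  rw [AA, thA_mul, thA_map, thA_C]
  simp only [map_add, map_mul]; ring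

lemma root_T (l : ℕ) (J : ℂ) (hJ : 2 * J + 1 = l) (k : Fin l) : (-(TT l)).charpoly.eval (2 * (((k : ℕ) : ℂ) - J)) = 0 := by
  rw [Matrix.eval_charpoly, ← Matrix.exists_vecMul_eq_zero_iff]
  refine ⟨BB l k, BB_ne l k, ?_⟩
  rw [sub_neg_eq_add, Matrix.vecMul_add, BB_T l J hJ k]
  rw [Matrix.scalar_apply]
  funext j
  simp; ring

lemma inj2 (l : ℕ) (J : ℂ) : Function.Injective (fun k : Fin l => 2 * (((k : ℕ) : ℂ) - J)) := by
  intro a b h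
  simp at h
  exact Fin.ext h

lemma char_T (l : ℕ) (J : ℂ) (hJ : 2 * J + 1 = l) : (-(TT l)).charpoly = ∏ k : Fin l, (Polynomial.X - Polynomial.C (2 * (((k : ℕ) : ℂ) - J))) := by
  apply Polynomial.eq_of_monic_of_dvd_of_natDegree_le
  · exact Polynomial.monic_prod_of_monic _ _ (fun i _ => Polynomial.monic_X_sub_C _)
  · exact Matrix.charpoly_monic _
  · apply Finset.prod_dvd_of_coprime
    · intro a _ b _ hab
      exact Polynomial.pairwise_coprime_X_sub_C (inj2 l J) hab
    · intro k _
      rw [Polynomial.dvd_iff_isRoot]; exact root_T l J hJ k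
  · rw [Matrix.charpoly_natDegree_eq_dim, Polynomial.natDegree_prod_of_monic _ _ (fun i _ => Polynomial.monic_X_sub_C _)]
    simp only [Polynomial.natDegree_X_sub_C]
    simp

lemma exists_kappa (l : ℕ) (J : ℂ) (hJ : 2 * J + 1 = l) (k : Fin l) :
    ∃ κ : PowerSeries ℂ, (ME l).charpoly.eval κ = 0 ∧ PowerSeries.constantCoeff κ = 2 * (((k : ℕ) : ℂ) - J) := by
  have e : (ME l).charpoly.map (PowerSeries.constantCoeff) = (-(TT l)).charpoly := by
    rw [← Matrix.charpoly_map]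
    congr 1
    ext i j
    simp only [ME, Matrix.map_apply, Matrix.of_apply, map_sub, Matrix.neg_apply]
    split_ifs <;> simp
  apply hensel _ (Matrix.charpoly_monic _)
  · rw [e]; exact root_T l J hJ k
  · rw [e]
    have hs : (-(TT l)).charpoly.Separable := by
      rw [char_T l J hJ, Polynomial.separable_prod_X_sub_C_iff]; exact inj2 l J
    exact hs.eval₂_derivative_ne_zero (RingHom.id ℂ) (root_T l J hJ k)

lemma kappa_rec (l : ℕ) (J : ℂ) (hJ : 2 * J + 1 = l) (k : Fin l) (κ : PowerSeries ℂ)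
    (h0 : (ME l).charpoly.eval κ = 0) (h1 : PowerSeries.constantCoeff κ = 2 * (((k : ℕ) : ℂ) - J)) :
    ∃ Y, Rec J (((k : ℕ) : ℂ) - J) Y (fun n => PowerSeries.coeff (n+1) κ) := by
  rw [Matrix.eval_charpoly, ← Matrix.exists_mulVec_eq_zero_iff] at h0
  obtain ⟨v', hv', hv0⟩ := h0
  obtain ⟨v, hv, i0, hi0⟩ : ∃ v : Fin l → PowerSeries ℂ, (Matrix.scalar (Fin l) κ - ME l) *ᵥ v = 0 ∧ ∃ i, PowerSeries.constantCoeff (v i) ≠ 0 := by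
    obtain ⟨i, hi⟩ := Function.ne_iff.1 hv'
    obtain ⟨n, hn⟩ : ∃ n, PowerSeries.coeff n (v' i) ≠ 0 := by
      by_contra! hc
      exact hi (by ext n; simpa using hc n)
    obtain ⟨N, u, rfl, hu⟩ := prim n v' ⟨i, hn⟩
    refine ⟨u, ?_, hu⟩
    rw [Matrix.mulVec_smul] at hv0
    exact (smul_eq_zero.1 hv0).resolve_left (pow_ne_zero _ PowerSeries.X_ne_zero)
  set U : PowerSeries R := ∑ i, PowerSeries.map cC (v i) * PowerSeries.C (bb (l-1) i) with hU
  have hJ2 : 2 * J = ((l - 1 : ℕ) : ℂ) := by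
    have := k.2
    rw [Nat.cast_sub (by omega)]; push_cast; linear_combination hJ
  have a1 : ∀ (c : PowerSeries ℂ) (i : Fin l), AA J (PowerSeries.map cC c * PowerSeries.C (bb (l-1) i)) = PowerSeries.map cC (c * ((i : ℕ) : PowerSeries ℂ)) * PowerSeries.C (bb (l-1) i) := by
    intro c i
    rw [AA_map, q_bb (l-1) i J hJ2 (by have := i.2; omega)]
    simp only [map_mul, map_natCast]; ring
  have a2 : AA J U = ∑ i : Fin l, PowerSeries.map cC (v i * ((i : ℕ) : PowerSeries ℂ)) * PowerSeries.C (bb (l-1) i) := by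
    rw [hU, AA_sum]; exact Finset.sum_congr rfl (fun i _ => a1 _ _)
  have a3 : AA J (AA J U) = ∑ i : Fin l, PowerSeries.map cC (v i * ((i : ℕ) : PowerSeries ℂ) * ((i : ℕ) : PowerSeries ℂ)) * PowerSeries.C (bb (l-1) i) := by
    rw [a2, AA_sum]; exact Finset.sum_congr rfl (fun i _ => a1 _ _)
  have a4 : ∑ i : Fin l, PowerSeries.map cC (∑ j, PowerSeries.C (TT l i j) * v j) * PowerSeries.C (bb (l-1) i) = PowerSeries.C (cC (2 * J)) * U - 2 * thA U := by
    simp only [map_sum, Finset.sum_mul]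
    rw [Finset.sum_comm, hU, thA_sum, Finset.mul_sum, Finset.mul_sum, ← Finset.sum_sub_distrib]
    apply Finset.sum_congr rfl
    intro j _
    have := congrArg (PowerSeries.C (R := R)) (sum_TT_bb l J hJ j)
    rw [thA_mul, thA_map, thA_C]
    simp only [map_sum, map_sub, map_mul PowerSeries.C, map_ofNat] at this
    rw [mul_zero, add_zero]
    simp only [map_mul (PowerSeries.map cC), PowerSeries.map_C]
    linear_combination (exp := 1) PowerSeries.map cC (v j) * this + (by
      rw [Finset.mul_sum]; apply Finset.sum_congr rfl; intro i _; ring : ∑ x : Fin l, PowerSeries.C (cC (TT l x j)) * PowerSeries.map cC (v j) * PowerSeries.C (bb (l-1) x) = PowerSeries.map cC (v j) * ∑ x : Fin l, PowerSeries.C (cC (TT l x j)) * PowerSeries.C (bb (l-1) x))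
  have main : PowerSeries.map cC κ * U - PowerSeries.X * ((l : PowerSeries R) * AA J U - AA J (AA J U)) + PowerSeries.C (cC (2 * J)) * U - 2 * thA U = 0 := by
    rw [add_sub_assoc, ← a4, a3, a2, hU, Finset.mul_sum, Finset.mul_sum, ← Finset.sum_sub_distrib, Finset.mul_sum, ← Finset.sum_sub_distrib, ← Finset.sum_add_distrib]
    apply Finset.sum_eq_zero
    intro i _
    have := congrFun hv i
    simp only [Matrix.sub_mulVec, Pi.sub_apply, Pi.zero_apply, Matrix.scalar_apply, Matrix.mulVec_diagonal] at this
    have e : (ME l *ᵥ v) i = PowerSeries.X * ((l : PowerSeries ℂ) * (v i * ((i:ℕ) : PowerSeries ℂ)) - v i * ((i:ℕ) : PowerSeries ℂ) * ((i:ℕ) : PowerSeries ℂ)) - ∑ j, PowerSeries.C (TT l i j) * v j := by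
      simp only [Matrix.mulVec, dotProduct, ME, Matrix.of_apply, sub_mul, Finset.sum_sub_distrib, ite_mul, zero_mul, Finset.sum_ite_eq, Finset.mem_univ, if_true]
      congr 1
      rw [Nat.cast_mul, Nat.cast_sub i.2.le]
      simp only [map_mul, map_sub, map_natCast]; ring
    rw [e] at this
    have := congrArg (PowerSeries.map cC) this
    simp only [map_sub, map_mul, map_natCast, PowerSeries.map_X, map_zero] at this ⊢
    linear_combination PowerSeries.C (bb (l-1) i) * this
  refine key_rec l J _ hJ U κ ?_ h1 main
  rw [PowerSeries.isUnit_iff_constantCoeff]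
  set U0 := PowerSeries.constantCoeff U with hU0
  have c1 : ∀ n : ℤ, (n : ℂ) * U0.coeff n = ((k : ℕ) : ℂ) * U0.coeff n := by
    intro n
    have := congrArg (fun f => (PowerSeries.coeff 0 f).coeff n) main
    have two : (2 : PowerSeries R) = PowerSeries.C (cC 2) := by
      rw [map_ofNat, map_ofNat]
    simp only [map_sub, map_add, PowerSeries.coeff_zero_X_mul, two, PowerSeries.coeff_C_mul, coeff_thA] at this
    simp only [PowerSeries.coeff_zero_eq_constantCoeff_apply, map_mul PowerSeries.constantCoeff, ← PowerSeries.coeff_zero_eq_constantCoeff_apply (φ := PowerSeries.map cC κ), PowerSeries.coeff_map, ← hU0, h1, sub_zero, AddMonoidAlgebra.coeff_sub, AddMonoidAlgebra.coeff_add, Finsupp.sub_apply, Finsupp.add_apply, C_mul_coeff, th_coeff, map_zero, AddMonoidAlgebra.coeff_zero, Finsupp.zero_apply] at this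
    linear_combination (-1/2) * this
  have c2 : U0 = .single ((k : ℕ) : ℤ) (U0.coeff ((k:ℕ):ℤ)) := by
    apply LaurentPolynomial.ext; intro n
    rw [AddMonoidAlgebra.coeff_single, Finsupp.single_apply]
    split_ifs with h
    · rw [h]
    · have := c1 n
      rw [← sub_eq_zero, ← sub_mul] at this
      refine (mul_eq_zero.1 this).resolve_left ?_
      intro h'
      rw [sub_eq_zero] at h'
      exact h (by exact_mod_cast h'.symm)
  have c3 : U0 ≠ 0 := by
    intro hz
    have hB : BB l *ᵥ (fun i => PowerSeries.constantCoeff (v i)) = 0 := by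
      funext n
      have := congrArg (fun f : R => f.coeff ((n : ℕ) : ℤ)) hz
      have e : U0 = ∑ i : Fin l, cC (PowerSeries.constantCoeff (v i)) * bb (l-1) i := by
        rw [hU0, hU, map_sum]
        apply Finset.sum_congr rfl; intro i _
        rw [map_mul, PowerSeries.constantCoeff_C, ← PowerSeries.coeff_zero_eq_constantCoeff_apply, PowerSeries.coeff_map]; simp
      rw [e] at this
      simp only [AddMonoidAlgebra.coeff_sum, Finsupp.finsetSum_apply, C_mul_coeff, AddMonoidAlgebra.coeff_zero, Finsupp.zero_apply] at this
      simp only [Matrix.mulVec, dotProduct, BB, Matrix.of_apply, Pi.zero_apply]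
      rw [← this]
      apply Finset.sum_congr rfl; intro i _; ring
    have := Matrix.mulVec_injective_of_isUnit (BB_unit l J hJ) (hB.trans (Matrix.mulVec_zero _).symm)
    exact hi0 (congrFun this i0)
  rw [c2]
  have c4 : U0.coeff ((k:ℕ):ℤ) ≠ 0 := by
    intro h; rw [h] at c2; exact c3 (by rw [c2]; simp)
  refine IsUnit.of_mul_eq_one (.single (-((k : ℕ) : ℤ)) (U0.coeff ((k:ℕ):ℤ))⁻¹) ?_
  rw [AddMonoidAlgebra.single_mul_single, mul_inv_cancel₀ c4, add_neg_cancel]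
  rfl
end G
end

section
namespace G

abbrev LS := HahnSeries ℤ ℂ

noncomputable def NN (l : ℕ) : Matrix (Fin l) (Fin l) (MvPolynomial (Fin 1) ℂ) := Matrix.of fun i j =>
  (if i = j then C ((((i : ℕ) * (l - (i : ℕ)) : ℕ)) : ℂ) else 0) - X 0 * C (TT l i j)

noncomputable def phi : MvPolynomial (Fin 1) ℂ →+* LS :=
  eval₂Hom (HahnSeries.C) (fun _ => HahnSeries.single (-1) 1)

noncomputable abbrev psm : PowerSeries ℂ →+* LS := HahnSeries.ofPowerSeries ℤ ℂ

lemma phi_coeff (p : MvPolynomial (Fin 1) ℂ) : ∀ n : ℤ, 0 < n → (phi p).coeff n = 0 := by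
  induction p using MvPolynomial.induction_on with
  | C a =>
    intro n hn
    rw [phi, coe_eval₂Hom, eval₂_C, HahnSeries.C_apply, HahnSeries.coeff_single_of_ne hn.ne']
  | add p q hp hq => intro n hn; rw [map_add, HahnSeries.coeff_add, hp n hn, hq n hn, add_zero]
  | mul_X p i hp =>
    intro n hn
    have : phi (X i) = HahnSeries.single (-1) 1 := by rw [phi, coe_eval₂Hom, eval₂_X]
    rw [map_mul, this]
    have e : n = (n + 1) + (-1) := by ring
    rw [e, HahnSeries.coeff_mul_single_add, hp (n+1) (by omega), zero_mul]

lemma NN_map (l : ℕ) : (NN l).map phi = (HahnSeries.single (-1) 1 : LS) • (ME l).map psm := by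
  ext1 i j
  have hX : phi (X 0) = HahnSeries.single (-1) 1 := by rw [phi, coe_eval₂Hom, eval₂_X]
  have hC : ∀ c, phi (C c) = HahnSeries.C c := by intro c; rw [phi, coe_eval₂Hom, eval₂_C]
  have h1 : (HahnSeries.single (-1) 1 : LS) * HahnSeries.single 1 1 = 1 := by
    rw [HahnSeries.single_mul_single]; simp
  simp only [Matrix.map_apply, NN, ME, Matrix.of_apply, Matrix.smul_apply, smul_eq_mul, map_sub, map_mul, hX, hC, HahnSeries.ofPowerSeries_C]
  split_ifs
  · simp only [hC, map_mul, HahnSeries.ofPowerSeries_C, HahnSeries.ofPowerSeries_X]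
    linear_combination (-(HahnSeries.C ((((i : ℕ) * (l - (i : ℕ)) : ℕ)) : ℂ))) * h1
  · rw [map_zero, map_zero]; ring

lemma NN_eval (l : ℕ) (κ : PowerSeries ℂ) (h : (ME l).charpoly.eval κ = 0) :
    ((NN l).charpoly.map phi).eval (HahnSeries.single (-1) 1 * psm κ) = 0 := by
  rw [← Matrix.charpoly_map, NN_map, Matrix.eval_charpoly]
  have : Matrix.scalar (Fin l) (HahnSeries.single (-1) 1 * psm κ) - (HahnSeries.single (-1) 1 : LS) • (ME l).map psm
    = (HahnSeries.single (-1) 1 : LS) • (Matrix.scalar (Fin l) κ - ME l).map psm := by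
    ext1 i j
    simp only [Matrix.sub_apply, Matrix.smul_apply, Matrix.map_apply, Matrix.scalar_apply, Matrix.diagonal_apply, map_sub, smul_eq_mul]
    split_ifs
    · ring
    · rw [map_zero]; ring
  rw [this, Matrix.det_smul]
  have e2 : ((Matrix.scalar (Fin l) κ - ME l).map psm).det = psm ((Matrix.scalar (Fin l) κ - ME l).det) := by
    rw [RingHom.map_det]; rfl
  rw [e2, ← Matrix.eval_charpoly, h, map_zero, mul_zero]

lemma monic_prod {K ι : Type*} [Field K] [Fintype ι] (p : Polynomial K) (hp : p.Monic) (hd : p.natDegree ≤ Fintype.card ι)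
    (r : ι → K) (hr : Function.Injective r) (h : ∀ k, p.eval (r k) = 0) : p = ∏ k, (Polynomial.X - Polynomial.C (r k)) := by
  apply Polynomial.eq_of_monic_of_dvd_of_natDegree_le
  · exact Polynomial.monic_prod_of_monic _ _ (fun i _ => Polynomial.monic_X_sub_C _)
  · exact hp
  · apply Finset.prod_dvd_of_coprime
    · intro a _ b _ hab
      exact Polynomial.pairwise_coprime_X_sub_C hr hab
    · intro k _
      rw [Polynomial.dvd_iff_isRoot]; exact h k
  · rw [Polynomial.natDegree_prod_of_monic _ _ (fun i _ => Polynomial.monic_X_sub_C _)]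
    simp only [Polynomial.natDegree_X_sub_C]
    simpa using hd

lemma rev_lin {K : Type*} [Field K] (r : K) : (Polynomial.X - Polynomial.C r).reverse = 1 - Polynomial.C r * Polynomial.X := by
  ext n
  rw [Polynomial.coeff_reverse, Polynomial.natDegree_X_sub_C]
  rcases n with _ | _ | n
  · rw [Polynomial.revAt_le (by omega)]; simp
  · rw [Polynomial.revAt_le (by omega)]; simp [Polynomial.coeff_one]
  · rw [Polynomial.revAt_eq_self_of_lt (by omega)]
    simp [Polynomial.coeff_one, Polynomial.coeff_X]

lemma rev_coeffs {K ι : Type*} [Field K] (r : ι → K) (s : Finset ι) :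
    (∏ k ∈ s, (Polynomial.X - Polynomial.C (r k))).reverse.coeff 0 = 1 ∧
    (∏ k ∈ s, (Polynomial.X - Polynomial.C (r k))).reverse.coeff 1 = - ∑ k ∈ s, r k ∧
    2 * (∏ k ∈ s, (Polynomial.X - Polynomial.C (r k))).reverse.coeff 2 = (∑ k ∈ s, r k) ^ 2 - ∑ k ∈ s, r k ^ 2 := by
  classical
  induction s using Finset.induction with
  | empty =>
    have : (1 : Polynomial K).reverse = 1 := by
      rw [← Polynomial.C_1, Polynomial.reverse_C]
    simp [this, Polynomial.coeff_one]
  | insert a s ha ih =>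
    obtain ⟨h0, h1, h2⟩ := ih
    rw [Finset.prod_insert ha, Finset.sum_insert ha, Finset.sum_insert ha, Polynomial.reverse_mul_of_domain, rev_lin]
    set P := (∏ k ∈ s, (Polynomial.X - Polynomial.C (r k))).reverse
    have e0 : ((1 - Polynomial.C (r a) * Polynomial.X) * P).coeff 0 = P.coeff 0 := by
      rw [sub_mul, one_mul, mul_assoc, Polynomial.coeff_sub, Polynomial.coeff_C_mul]; simp
    have e1 : ∀ n, ((1 - Polynomial.C (r a) * Polynomial.X) * P).coeff (n+1) = P.coeff (n+1) - r a * P.coeff n := by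
      intro n
      rw [sub_mul, one_mul, mul_assoc, Polynomial.coeff_sub, Polynomial.coeff_C_mul, Polynomial.coeff_X_mul]
    refine ⟨by rw [e0, h0], by rw [e1 0, h0, zero_add, h1]; ring, ?_⟩
    rw [e1 1, mul_sub, h2, h1]; ring

lemma sums_mem {K ι A : Type*} [Field K] [CommRing A] (φ : A →+* K) (f : Polynomial A) (r : ι → K) (s : Finset ι)
    (h : f.map φ = ∏ k ∈ s, (Polynomial.X - Polynomial.C (r k))) :
    (∃ p, φ p = ∑ k ∈ s, r k) ∧ (∃ p, φ p = ∑ k ∈ s, r k ^ 2) := by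
  obtain ⟨_, h1, h2⟩ := rev_coeffs r s
  rw [← h, Polynomial.coeff_reverse, Polynomial.coeff_map] at h1 h2
  refine ⟨⟨-_, by rw [map_neg, h1, neg_neg]⟩, ⟨(f.coeff (Polynomial.revAt (f.map φ).natDegree 1))^2 - 2 * f.coeff (Polynomial.revAt (f.map φ).natDegree 2), ?_⟩⟩
  rw [map_sub, map_mul, map_pow, map_ofNat φ 2, h2, h1]; ring

lemma coeff_lam (κ : PowerSeries ℂ) (n : ℕ) : (HahnSeries.single (-1) 1 * psm κ).coeff (n : ℤ) = PowerSeries.coeff (n+1) κ := by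
  have e : (n : ℤ) = ((n + 1 : ℕ) : ℤ) + (-1) := by push_cast; ring
  rw [e, HahnSeries.coeff_single_mul_add, HahnSeries.ofPowerSeries_apply_coeff, one_mul]

lemma coeff_lam2 (κ : PowerSeries ℂ) (n : ℕ) : ((HahnSeries.single (-1) 1 * psm κ)^2).coeff (n : ℤ) = PowerSeries.coeff (n+2) (κ * κ) := by
  have : (HahnSeries.single (-1) 1 * psm κ)^2 = HahnSeries.single (-2) 1 * psm (κ * κ) := by
    have h1 : (HahnSeries.single (-1) 1 : LS) * HahnSeries.single (-1) 1 = HahnSeries.single (-2) 1 := by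
      rw [HahnSeries.single_mul_single]; norm_num
    rw [map_mul, ← h1]; ring
  have e : (n : ℤ) = ((n + 2 : ℕ) : ℤ) + (-2) := by push_cast; ring
  rw [this, e, HahnSeries.coeff_single_mul_add, HahnSeries.ofPowerSeries_apply_coeff, one_mul]

lemma lam_inj (κ κ' : PowerSeries ℂ) (h : (HahnSeries.single (-1) 1 * psm κ : LS) = HahnSeries.single (-1) 1 * psm κ') :
    PowerSeries.constantCoeff κ = PowerSeries.constantCoeff κ' := by
  have h1 : (HahnSeries.single (1) 1 : LS) * HahnSeries.single (-1) 1 = 1 := by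
    rw [HahnSeries.single_mul_single]; simp
  have := congrArg (fun x => HahnSeries.single (1:ℤ) (1:ℂ) * x) h
  simp only [← mul_assoc, h1, one_mul] at this
  rw [HahnSeries.ofPowerSeries_injective this]

lemma trivial_subset (l : ℕ) (hl : 0 < l) (J : ℂ) (κ : Fin l → PowerSeries ℂ)
    (hκ : ∀ k : Fin l, PowerSeries.constantCoeff (κ k) = 2 * (((k : ℕ) : ℂ) - J))
    (hY : ∀ k : Fin l, ∃ Y, Rec J (((k : ℕ) : ℂ) - J) Y (fun n => PowerSeries.coeff (n+1) (κ k)))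
    (s : Finset (Fin l))
    (h1 : ∀ s' : Finset (Fin l), s' = s ∨ s' = Finset.univ → ∀ n, n ≠ 0 → ∑ k ∈ s', PowerSeries.coeff (n+1) (κ k) = 0)
    (h2 : ∀ s' : Finset (Fin l), s' = s ∨ s' = Finset.univ → ∀ n, n ≠ 0 → ∑ k ∈ s', PowerSeries.coeff (n+2) (κ k * κ k) = 0) :
    s = ∅ ∨ s = Finset.univ := by
  classical
  choose Y hY using hY
  set ν : Fin l → ℂ := fun k => (if k ∈ s then 1 else 0) - (s.card : ℂ) / l with hν
  have hl' : (l : ℂ) ≠ 0 := by exact_mod_cast hl.ne'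
  have hs : ∀ f : Fin l → ℂ, ∑ k, ν k * f k = ∑ k ∈ s, f k - (s.card : ℂ) / l * ∑ k, f k := by
    intro f
    simp only [hν, sub_mul, Finset.sum_sub_distrib, ite_mul, one_mul, zero_mul, Finset.sum_ite_mem, Finset.univ_inter, Finset.mul_sum]
  have hs0 : ∀ f : Fin l → ℂ, ∑ k ∈ s, f k = 0 → ∑ k, f k = 0 → ∑ k, ν k * f k = 0 := by
    intro f a b; rw [hs, a, b]; simp
  have c3 : ∀ k, PowerSeries.coeff 3 (κ k * κ k) = 2 * (2 * (((k : ℕ) : ℂ) - J) * PowerSeries.coeff (2+1) (κ k) + PowerSeries.coeff (0+1) (κ k) * PowerSeries.coeff (1+1) (κ k)) := by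
    intro k
    rw [PowerSeries.coeff_mul]
    simp [Finset.Nat.antidiagonal_succ, hκ]; ring
  have c4 : ∀ k, PowerSeries.coeff 4 (κ k * κ k) = (4 * (((k : ℕ) : ℂ) - J) * PowerSeries.coeff (3+1) (κ k) + 2 * PowerSeries.coeff (0+1) (κ k) * PowerSeries.coeff (2+1) (κ k) + PowerSeries.coeff (1+1) (κ k) ^ 2) := by
    intro k
    rw [PowerSeries.coeff_mul]
    simp [Finset.Nat.antidiagonal_succ, hκ]; ring
  have := moment J (fun k : Fin l => ((k : ℕ) : ℂ) - J) (by
    intro a b h; simp at h; exact Fin.ext h) Y (fun k n => PowerSeries.coeff (n+1) (κ k)) hY ν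
    (by have := hs (fun _ => 1)
        simp only [mul_one] at this
        rw [this]; simp [hl'])
    (fun n hn => hs0 _ (h1 s (Or.inl rfl) n hn) (h1 _ (Or.inr rfl) n hn))
    (by
      have := hs0 _ (h2 s (Or.inl rfl) 1 one_ne_zero) (h2 _ (Or.inr rfl) 1 one_ne_zero)
      simp only [Nat.reduceAdd, c3] at this
      have e : ∀ k, ν k * (2 * (2 * (((k : ℕ) : ℂ) - J) * PowerSeries.coeff 3 (κ k) + PowerSeries.coeff 1 (κ k) * PowerSeries.coeff 2 (κ k))) = 2 * (ν k * (2 * (((k : ℕ) : ℂ) - J) * PowerSeries.coeff 3 (κ k) + PowerSeries.coeff 1 (κ k) * PowerSeries.coeff 2 (κ k))) := by intro k; ring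
      simp only [e, ← Finset.mul_sum] at this
      exact (mul_eq_zero.1 this).resolve_left two_ne_zero)
    (by
      have := hs0 _ (h2 s (Or.inl rfl) 2 two_ne_zero) (h2 _ (Or.inr rfl) 2 two_ne_zero)
      simp only [Nat.reduceAdd, c4] at this
      exact this)
  by_contra! hc
  obtain ⟨⟨a, ha⟩, hb⟩ := hc
  obtain ⟨b, hb⟩ : ∃ b, b ∉ s := by
    by_contra! h; exact hb (Finset.eq_univ_iff_forall.2 h)
  have n1 := congrFun this a
  have n2 := congrFun this b
  simp only [hν, ha, hb, if_true, if_false, Pi.zero_apply] at n1 n2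
  have : (1 : ℂ) = 0 := by linear_combination n1 - n2
  exact one_ne_zero this

lemma irr (l : ℕ) (hl : 2 ≤ l) : Irreducible (NN l).charpoly := by
  classical
  have hm := Matrix.charpoly_monic (NN l)
  have hd : (NN l).charpoly.natDegree = l := by rw [Matrix.charpoly_natDegree_eq_dim]; simp
  rw [hm.irreducible_iff_natDegree]
  refine ⟨fun h => by rw [h] at hd; simp at hd; omega, ?_⟩
  intro f g hf hg hfg
  set J : ℂ := ((l : ℂ) - 1) / 2 with hJ'
  have hJ : 2 * J + 1 = l := by rw [hJ']; ring
  choose κ hκ0 hκ1 using exists_kappa l J hJ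
  set r : Fin l → LS := fun k => HahnSeries.single (-1) 1 * psm (κ k) with hr
  have hinj : Function.Injective r := by
    intro a b h
    have := lam_inj _ _ h
    rw [hκ1, hκ1] at this
    exact inj2 l J this
  have hP : (NN l).charpoly.map phi = ∏ k, (Polynomial.X - Polynomial.C (r k)) :=
    monic_prod _ (hm.map phi) (by rw [hm.natDegree_map, hd]; simp) r hinj (fun k => NN_eval l _ (hκ0 k))
  have key : ∀ (F : Polynomial (MvPolynomial (Fin 1) ℂ)) (s : Finset (Fin l)), F.map phi = ∏ k ∈ s, (Polynomial.X - Polynomial.C (r k)) →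
      (∀ n, n ≠ 0 → ∑ k ∈ s, PowerSeries.coeff (n+1) (κ k) = 0) ∧ (∀ n, n ≠ 0 → ∑ k ∈ s, PowerSeries.coeff (n+2) (κ k * κ k) = 0) := by
    intro F s h
    obtain ⟨⟨p, hp⟩, ⟨p', hp'⟩⟩ := sums_mem phi F r s h
    constructor
    · intro n hn
      have := phi_coeff p n (by omega)
      rw [hp, HahnSeries.coeff_sum] at this
      simpa only [hr, coeff_lam] using this
    · intro n hn
      have := phi_coeff p' n (by omega)
      rw [hp', HahnSeries.coeff_sum] at this
      simpa only [hr, coeff_lam2] using this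
  have hfg' : f.map phi * g.map phi = 1 * ∏ k, (Polynomial.X - Polynomial.C (r k)) := by
    rw [← Polynomial.map_mul, hfg, hP, one_mul]
  obtain ⟨s, u, b, c, hsu, hdis, hbc, hx, hy⟩ := mul_eq_mul_prime_prod (fun k _ => Polynomial.prime_X_sub_C (r k)) hfg'
  have hmon : ∀ s : Finset (Fin l), (∏ k ∈ s, (Polynomial.X - Polynomial.C (r k))).Monic :=
    fun s => Polynomial.monic_prod_of_monic _ _ (fun i _ => Polynomial.monic_X_sub_C _)
  have hb1 : b = 1 := by
    have : b.Monic := (hmon s).of_mul_monic_right (by rw [← hx]; exact hf.map phi)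
    exact this.eq_one_of_isUnit (IsUnit.of_mul_eq_one c hbc.symm)
  rw [hb1, one_mul] at hx
  have hdeg : f.natDegree = s.card := by
    rw [← hf.natDegree_map phi, hx, Polynomial.natDegree_prod_of_monic _ _ (fun i _ => Polynomial.monic_X_sub_C _)]
    simp only [Polynomial.natDegree_X_sub_C]; simp
  have hsum : f.natDegree + g.natDegree = l := by
    rw [← hf.natDegree_mul hg, hfg, hd]
  rcases trivial_subset l (by omega) J κ hκ1 (fun k => kappa_rec l J hJ k _ (hκ0 k) (hκ1 k)) s
    (by rintro s' (rfl | rfl)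
        · exact (key f _ hx).1
        · exact (key _ _ hP).1)
    (by rintro s' (rfl | rfl)
        · exact (key f _ hx).2
        · exact (key _ _ hP).2) with h | h
  · left; rw [hdeg, h]; simp
  · right; rw [hdeg, h] at hsum; simp at hsum; exact hsum

lemma det_eq (l : ℕ) : finSuccEquiv ℂ 1 ((Matrix.of fun i j : Fin l =>
        (if (i : ℕ) = (j : ℕ) then X 0 - C (((i : ℕ) * (l - (i : ℕ)) : ℕ) : ℂ)
        else if (i : ℕ) + 1 = (j : ℕ) then X 1 * C ((((i : ℕ) + 1 : ℕ)) : ℂ)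
        else if (j : ℕ) + 1 = (i : ℕ) then X 1 * C (((l - (i : ℕ) : ℕ)) : ℂ)
        else 0 : MvPolynomial (Fin 2) ℂ)).det) = (NN l).charpoly := by
  have h0 : finSuccEquiv ℂ 1 (X 0) = Polynomial.X := finSuccEquiv_X_zero
  have h1 : finSuccEquiv ℂ 1 (X 1) = Polynomial.C (X 0) := finSuccEquiv_X_succ (j := 0)
  have hC : ∀ c : ℂ, finSuccEquiv ℂ 1 (C c) = Polynomial.C (C c) := by
    intro c; rw [finSuccEquiv_apply, coe_eval₂Hom, eval₂_C]; rfl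
  rw [AlgEquiv.map_det, Matrix.charpoly]
  congr 1
  ext1 i j
  rw [Matrix.charmatrix_apply]
  simp only [AlgEquiv.mapMatrix_apply, Matrix.map_apply, Matrix.of_apply, NN, Matrix.diagonal_apply, TT, Fin.ext_iff]
  by_cases h : (i : ℕ) = (j : ℕ)
  · have e1 : ¬ ((i : ℕ) + 1 = (j : ℕ)) := by omega
    have e2 : ¬ ((j : ℕ) + 1 = (i : ℕ)) := by omega
    rw [if_pos h, if_pos h, if_pos h, if_neg e1, if_neg e2, map_sub, h0, hC]; simp
  · rw [if_neg h, if_neg h, if_neg h]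
    split_ifs <;> simp only [map_mul, h1, hC, map_zero, map_sub] <;> ring

end G
end

/-- the polynomial P_l(λ,μ²) = det(H_l + λ·Id) defining the spectral
curve Γ_l is irreducible in ℂ[λ,μ].  Variables: X 0 = λ, X 1 = μ. -/
theorem stmt8 (l : ℕ) (hl : 2 ≤ l) :
    Irreducible
      ((Matrix.of fun i j : Fin l =>
        (if (i : ℕ) = (j : ℕ) then X 0 - C (((i : ℕ) * (l - (i : ℕ)) : ℕ) : ℂ)
        else if (i : ℕ) + 1 = (j : ℕ) then X 1 * C ((((i : ℕ) + 1 : ℕ)) : ℂ)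
        else if (j : ℕ) + 1 = (i : ℕ) then X 1 * C (((l - (i : ℕ) : ℕ)) : ℂ)
        else 0 : MvPolynomial (Fin 2) ℂ)).det) := by
  rw [← MulEquiv.irreducible_iff (finSuccEquiv ℂ 1), G.det_eq]
  exact G.irr l hl
end
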